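/- arXiv:1307.4858 — 5 statements merged into one kernel-verified Lean document; each statement's English description precedes it below -/
import Mathlib

section
/- Let F = (F_β)_{β∈I} be a random vector of Bernoulli random variables indexed by a finite set I, fix α ∈ I with p_α = E[F_α] > 0, and let J = (J_β)_{β∈I} be a random vector defined on the same probability space whose distribution equals the conditional distribution of F given F_α = 1. Let E_α denote the event {J = F + e_α}. Let x ∈ {0,1}^I with x_α = 1 and let ε ∈ [0,1). If P[E_α ∩ {F = x − e_α}] ≥ (1−ε)·P[F = x − e_α] and P[E_α ∩ {J = x}] ≥ (1−ε)·P[J = x], then (1−ε)·p_α·P[F = x − e_α] ≤ P[F = x] ≤ (1−ε)^{-1}·p_α·P[F = x − e_α]. -/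
open MeasureTheory

/-! Write `y = x − e_α`. On the event `J = F + e_α`, the conditions `F = y` and `J = x` are
equivalent, because `x α = 1`. The two hypotheses therefore compare `P[F = y]` with `P[J = x]`
up to the factor `1 − ε`, in both directions. Since `F = x` forces `F_α = 1`, conditioning gives
`P[J = x] · p_α = P[F = x]`, so multiplying both comparisons by `p_α` yields the claim. -/

/-- **Lemma 3.14 (perturbation lemma).**  Let `F = (F_β)_{β ∈ I}` be a vector of
Bernoulli random variables, `α ∈ I` with `p_α = E F_α = P[F_α = 1] > 0`, and let `J` be
distributed as `F` conditioned on `F_α = 1`.  With `E_α = {J = F + e_α}`, if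
`P[E_α ∩ {F = x − e_α}] ≥ (1−ε) P[F = x − e_α]` and
`P[E_α ∩ {J = x}] ≥ (1−ε) P[J = x]`, then
`(1−ε) p_α P[F = x − e_α] ≤ P[F = x] ≤ (1−ε)⁻¹ p_α P[F = x − e_α]`. -/
theorem perturbation_lemma {Ω : Type*} [MeasurableSpace Ω] (P : Measure Ω)
    [IsProbabilityMeasure P] {I : Type*} [Fintype I] [DecidableEq I]
    (F J : Ω → I → ℕ) (hBer : ∀ ω β, F ω β ≤ 1) (α : I)
    (hpos : 0 < P {ω | F ω α = 1})
    (hcond : ∀ s : Set (I → ℕ),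
      P {ω | J ω ∈ s} * P {ω | F ω α = 1} = P {ω | F ω ∈ s ∧ F ω α = 1})
    (x : I → ℕ) (hx : ∀ β, x β ≤ 1) (hxα : x α = 1)
    (ε : ENNReal) (hε : ε < 1)
    (h1 : (1 - ε) * P {ω | F ω = x - Pi.single α 1} ≤
        P ({ω | J ω = F ω + Pi.single α 1} ∩ {ω | F ω = x - Pi.single α 1}))
    (h2 : (1 - ε) * P {ω | J ω = x} ≤
        P ({ω | J ω = F ω + Pi.single α 1} ∩ {ω | J ω = x})) :
    (1 - ε) * P {ω | F ω α = 1} * P {ω | F ω = x - Pi.single α 1} ≤ P {ω | F ω = x} ∧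
      P {ω | F ω = x} ≤
        (1 - ε)⁻¹ * P {ω | F ω α = 1} * P {ω | F ω = x - Pi.single α 1} := by
  have hle : Pi.single α 1 ≤ x := by
    intro β
    rcases eq_or_ne β α with rfl | hβ
    · simp [hxα]
    · simp [hβ]
  have key : P {ω | J ω = x} * P {ω | F ω α = 1} = P {ω | F ω = x} := by
    have h := hcond {x}
    simp only [Set.mem_singleton_iff] at h
    rw [h]
    congr 1
    ext ω
    simp only [Set.mem_ofPred_eq, and_iff_left_iff_imp]
    rintro hF
    rw [hF, hxα]
  have hA : (1 - ε) * P {ω | F ω = x - Pi.single α 1} ≤ P {ω | J ω = x} := by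
    refine h1.trans (measure_mono ?_)
    rintro ω ⟨hJ, hF⟩
    simp only [Set.mem_ofPred_eq] at hJ hF ⊢
    rw [hJ, hF, tsub_add_cancel_of_le hle]
  have hB : (1 - ε) * P {ω | J ω = x} ≤ P {ω | F ω = x - Pi.single α 1} := by
    refine h2.trans (measure_mono ?_)
    rintro ω ⟨hJ, hJx⟩
    simp only [Set.mem_ofPred_eq] at hJ hJx ⊢
    rw [← hJx, hJ, add_tsub_cancel_right]
  have h0 : 1 - ε ≠ 0 := (tsub_pos_of_lt hε).ne'
  have hT : 1 - ε ≠ ⊤ := ENNReal.sub_ne_top ENNReal.one_ne_top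
  rw [← key]
  constructor
  · rw [mul_right_comm]
    gcongr
  · rw [mul_right_comm]
    gcongr
    rwa [mul_comm, ← div_eq_mul_inv, ENNReal.le_div_iff_mul_le (.inl h0) (.inl hT), mul_comm]
end

section
/- There is an absolute constant C such that for all integers d ≥ 3, r ≥ 1, and n ≥ 1 with n·d even, if P ~ P_{n,d}, then P[I_r(P) is not (log n)-neat] ≤ C(d−1)^{2r−1}/n. -/
/-!
The probability that the cycle process is not neat is bounded by two contributions.

*Overlapping cycles.* If two distinct cycles of length at most `r` share a prevertex, then following
one of them from the place where they separate until it meets the other one again yields a theta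
graph: a `k`-cycle with an additional path of length `b` between two of its vertices, at distance
`δ` along the cycle, where `k ≤ r` and `δ + b ≤ r` (`Neat.exists_theta_of_share`). Given `l`
disjoint pairs with `l ^ 2 ≤ nd / 4`, the pairing contains them with probability at most
`2 (nd) ^ (-l)`, by a switching argument (`Neat.card_step`, `Neat.prob_markov`). A theta graph has
`k + b` edges and `k + b - 1` vertices, so the expected number of those with given parameters is
`O((d - 1) ^ (k + b) / n)`. As `k + b ≤ 2r - δ`, the sum over all parameters is a geometric series
and is `O((d - 1) ^ (2r - 1) / n)` (`Neat.prob_overlap`).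

*Too many cycles.* If the cycles are disjoint but contain more than `log n (d - 1) ^ r` prevertices,
then some `k ≤ r` has `2k` times the number of `k`-cycles larger than `log n (d - 1) ^ k / 2`
(`Neat.exists_many`). Sequences of `j` disjoint rooted oriented `k`-cycles have expected number at
most `2 (d - 1) ^ (jk)`, whereas on the event considered there are at least
`(log n (d - 1) ^ k / 4) ^ j` of them. With `j ≈ log n / 8`, Markov's inequality gives the probability
`2 (4 / log n) ^ j = O(1 / n)` (`Neat.prob_many_log`), and there are `r ≤ (d - 1) ^ (2r - 1)` values
of `k`.

Both estimates need `r` and `j` to be small compared with powers of `n`, which holds when `n` exceeds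
a large constant times `(d - 1) ^ (2r - 1)`. Otherwise the bound is trivial.
-/

open Filter

/-- A pairing of the `n * d` prevertices (the set `Fin n × Fin d`, partitioned into `n`
bins of size `d`): a perfect matching, encoded as a fixed-point-free involution. -/
def Pairing (n d : ℕ) : Type :=
  {f : Fin n × Fin d → Fin n × Fin d // (∀ x, f (f x) = x) ∧ ∀ x, f x ≠ x}

instance pairingFintype (n d : ℕ) : Fintype (Pairing n d) := by
  unfold Pairing; infer_instance

/-- Probability of a pairing event under the configuration model `P_{n,d}`
(the uniform distribution on pairings). -/
noncomputable def pmdProb (n d : ℕ) (A : Set (Pairing n d)) : ℝ :=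
  (Nat.card {m : Pairing n d // m ∈ A} : ℝ) / (Nat.card (Pairing n d) : ℝ)

/-- Expectation of a real-valued function of the pairing under `P_{n,d}`. -/
noncomputable def pmdExp (n d : ℕ) (g : Pairing n d → ℝ) : ℝ :=
  (∑ m : Pairing n d, g m) / (Nat.card (Pairing n d) : ℝ)

/-- `e` lists, in cyclic order, the outgoing prevertices of a Hamiltonian cycle present in
the projection of the pairing `m`. -/
def IsHamSeq (n d : ℕ) (m : Pairing n d) (e : ZMod n → Fin n × Fin d) : Prop :=
  Function.Bijective (fun i => (e i).1) ∧
    (∀ i, (m.1 (e i)).1 = (e (i + 1)).1) ∧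
    ∀ i, m.1 (e i) ≠ e (i + 1)

/-- `H_n(m)`: the number of Hamiltonian cycles in the projection of the pairing `m`
(each cycle is counted `2n` times by the rooted, oriented sequences above). -/
noncomputable def hamCycles (n d : ℕ) (m : Pairing n d) : ℝ :=
  (Nat.card {e : ZMod n → Fin n × Fin d // IsHamSeq n d m e} : ℝ) / (2 * n)

/-- Probability of a pairing event under `T_{n,d}`: the model obtained by superimposing an
independent uniform Hamiltonian cycle on `P_{n,d-2}` (and scrambling prevertices in bins).
Its Radon–Nikodym derivative with respect to `P_{n,d}` is exactly `H_n / E H_n`, which we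
use as the definition. -/
noncomputable def tndProb (n d : ℕ) (A : Set (Pairing n d)) : ℝ :=
  (∑ m : Pairing n d, A.indicator (hamCycles n d) m) / (∑ m : Pairing n d, hamCycles n d m)

open scoped Classical

/-- `S` (a finite set of unordered pairs of prevertices) is a possible cycle of length
`k`: there are cyclically ordered prevertices `x i, y i` with distinct underlying
vertices, `y i` lying in the bin of `x (i+1)`, whose pairs `{x i, y i}` constitute `S`. -/
def IsCycleOn (n d k : ℕ) (S : Finset (Sym2 (Fin n × Fin d))) : Prop :=
  ∃ x y : ZMod k → Fin n × Fin d,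
    Function.Injective (fun i => (x i).1) ∧
    (∀ i, (y i).1 = (x (i + 1)).1) ∧
    (∀ i, y i ≠ x (i + 1)) ∧
    (S : Set (Sym2 (Fin n × Fin d))) = Set.range fun i => s(x i, y i)

/-- The index set `J = ⋃_{k=1}^r J_k` of all possible cycles of length at most `r`. -/
def CycIdx (n d r : ℕ) : Type :=
  {S : Finset (Sym2 (Fin n × Fin d)) // ∃ k, 1 ≤ k ∧ k ≤ r ∧ IsCycleOn n d k S}

instance cycIdxFinite (n d r : ℕ) : Finite (CycIdx n d r) := by
  unfold CycIdx; infer_instance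

noncomputable instance cycIdxFintype (n d r : ℕ) : Fintype (CycIdx n d r) :=
  Fintype.ofFinite _

/-- The pairing `m` contains the cycle `S`: every pair of `S` is a pair of `m`. -/
def Contains (n d : ℕ) (m : Pairing n d) (S : Finset (Sym2 (Fin n × Fin d))) : Prop :=
  ∀ a b : Fin n × Fin d, s(a, b) ∈ S → m.1 a = b

/-- The cycle process `I_r(P) = (I_α(P))_{α ∈ J}` of indicators of cycles of length at
most `r` in the pairing. -/
noncomputable def cycProc (n d r : ℕ) (m : Pairing n d) (α : CycIdx n d r) : ℕ :=
  if Contains n d m α.1 then 1 else 0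

/-- `λ_α = (nd)^{-k}` for a cycle `α` of length `k`. -/
noncomputable def lamZ (n d r : ℕ) (α : CycIdx n d r) : ℝ :=
  1 / ((n : ℝ) * d) ^ α.1.card

/-- `λ̃_α = (nd)^{-k} + ((−1)^k − 1)/(nd(d−1))^k` for a cycle `α` of length `k`. -/
noncomputable def lamZt (n d r : ℕ) (α : CycIdx n d r) : ℝ :=
  1 / ((n : ℝ) * d) ^ α.1.card +
    ((-1 : ℝ) ^ α.1.card - 1) / ((n : ℝ) * d * ((d : ℝ) - 1)) ^ α.1.card

/-- The point probability `P[Z = x]` for a vector `Z` of independent Poisson random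
variables with means `lam`. -/
noncomputable def poissonPt {ι : Type*} [Fintype ι] (lam : ι → ℝ) (x : ι → ℕ) : ℝ :=
  ∏ a : ι, Real.exp (-lam a) * lam a ^ x a / (Nat.factorial (x a) : ℝ)

/-- `x` is `λ`-neat: no two cycles of `x` share a prevertex, and the total number of
prevertices in `x` is at most `λ(d−1)^r`. -/
def LNeat (n d r : ℕ) (lam : ℝ) (x : CycIdx n d r → ℕ) : Prop :=
  (∀ α β : CycIdx n d r, α ≠ β → x α = 1 → x β = 1 →
    ∀ e ∈ α.1, ∀ e' ∈ β.1, ∀ a ∈ e, ∀ b ∈ e', a ≠ b) ∧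
  ((∑ α : CycIdx n d r, 2 * α.1.card * x α : ℕ) : ℝ) ≤ lam * ((d : ℝ) - 1) ^ r


namespace Neat

/-! ### Pairings containing prescribed pairs -/

/-- The pairing obtained from `m` by exchanging the roles of the prevertices `b` and `c`. -/
def switch {n d : ℕ} (m : Pairing n d) (b c : Fin n × Fin d) : Pairing n d :=
  ⟨fun x => Equiv.swap b c (m.1 (Equiv.swap b c x)), by
    intro x; simp [m.2.1], by
    intro x h
    apply m.2.2 (Equiv.swap b c x)
    apply (Equiv.swap b c).injective
    simpa using h⟩

lemma switch_switch {n d : ℕ} (m : Pairing n d) (b c : Fin n × Fin d) :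
    switch (switch m b c) b c = m := by
  apply Subtype.ext
  funext x
  simp [switch]

variable {n d : ℕ} {ι : Type} [Fintype ι]

/-- Prescribing one more pair divides the number of pairings by at least the number of
prevertices left over: switching the new pair with any other prevertex is injective. -/
lemma card_step (a b : ι → Fin n × Fin d) (hab : Function.Injective (Sum.elim a b))
    (s : Finset ι) (i : ι) (hi : i ∉ s) :
    (Finset.univ.filter fun m : Pairing n d => ∀ j ∈ insert i s, m.1 (a j) = b j).card *
        (n * d - 2 * (s.card + 1)) ≤
      (Finset.univ.filter fun m : Pairing n d => ∀ j ∈ s, m.1 (a j) = b j).card := by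
  set U : Finset (Fin n × Fin d) :=
    Finset.univ \ (((insert i s).disjSum (insert i s)).image (Sum.elim a b)) with hU
  have hUc : n * d - 2 * (s.card + 1) ≤ U.card := by
    have h1 := Finset.le_card_sdiff
      (((insert i s).disjSum (insert i s)).image (Sum.elim a b)) (Finset.univ)
    have h2 : (((insert i s).disjSum (insert i s)).image (Sum.elim a b)).card ≤
        2 * (s.card + 1) := by
      refine Finset.card_image_le.trans ?_
      rw [Finset.card_disjSum, Finset.card_insert_of_notMem hi]
      omega
    simp only [Finset.card_univ, Fintype.card_prod, Fintype.card_fin] at h1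
    rw [hU]
    omega
  refine (Nat.mul_le_mul_left _ hUc).trans ?_
  rw [← Finset.card_product]
  have hane : ∀ j k, a j ≠ b k := by
    intro j k h
    have := @hab (Sum.inl j) (Sum.inr k) h
    simp at this
  have hb : ∀ j k, b j = b k → j = k := by
    intro j k h
    have := @hab (Sum.inr j) (Sum.inr k) h
    simpa using this
  have hc : ∀ c ∈ U, ∀ j ∈ insert i s, a j ≠ c ∧ b j ≠ c := by
    intro c hc j hj
    simp only [hU, Finset.mem_sdiff, Finset.mem_univ, true_and, Finset.mem_image,
      not_exists, not_and] at hc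
    refine ⟨hc (Sum.inl j) (by simpa using hj), hc (Sum.inr j) (by simpa using hj)⟩
  have hval : ∀ m : Pairing n d, ∀ c ∈ U, m.1 (a i) = b i →
      (switch m (b i) c).1 (a i) = c := by
    intro m c hcU hm
    have h1 : Equiv.swap (b i) c (a i) = a i :=
      Equiv.swap_apply_of_ne_of_ne (hane i i) (hc c hcU i (by simp)).1
    simp [switch, h1, hm]
  refine Finset.card_le_card_of_injOn (fun p => switch p.1 (b i) p.2) ?_ ?_
  · rintro ⟨m, c⟩ hmc
    simp only [Finset.coe_product, Set.mem_prod, Finset.mem_coe, Finset.mem_filter,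
      Finset.mem_univ, true_and] at hmc ⊢
    obtain ⟨hm, hcU⟩ := hmc
    intro j hj
    have hji : j ≠ i := fun h => hi (h ▸ hj)
    have hj' := hc c hcU j (Finset.mem_insert_of_mem hj)
    have h1 : Equiv.swap (b i) c (a j) = a j :=
      Equiv.swap_apply_of_ne_of_ne (hane j i) hj'.1
    have h2 : Equiv.swap (b i) c (b j) = b j :=
      Equiv.swap_apply_of_ne_of_ne (fun h => hji (hb _ _ h)) hj'.2
    simp [switch, h1, h2, hm j (Finset.mem_insert_of_mem hj)]
  · rintro ⟨m, c⟩ hmc ⟨m', c'⟩ hmc' h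
    simp only [Finset.coe_product, Set.mem_prod, Finset.mem_coe, Finset.mem_filter,
      Finset.mem_univ, true_and] at hmc hmc' h
    have e1 := hval m c hmc.2 (hmc.1 i (by simp))
    have e2 := hval m' c' hmc'.2 (hmc'.1 i (by simp))
    have hcc : c = c' := by rw [← e1, ← e2, h]
    subst hcc
    have hmm : m = m' := by
      rw [← switch_switch m (b i) c, ← switch_switch m' (b i) c, h]
    rw [hmm]

/-- The iterate of `card_step`: the number of pairings containing given disjoint pairs. -/
lemma card_contain (a b : ι → Fin n × Fin d) (hab : Function.Injective (Sum.elim a b)) :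
    (Finset.univ.filter fun m : Pairing n d => m.1 ∘ a = b).card *
        (n * d - 2 * Fintype.card ι) ^ Fintype.card ι ≤ Fintype.card (Pairing n d) := by
  have key : ∀ s : Finset ι,
      (Finset.univ.filter fun m : Pairing n d => ∀ j ∈ s, m.1 (a j) = b j).card *
        (n * d - 2 * Fintype.card ι) ^ s.card ≤ Fintype.card (Pairing n d) := by
    intro s
    induction s using Finset.induction_on with
    | empty => simp
    | insert i s hi ih =>
      refine le_trans ?_ ih
      rw [Finset.card_insert_of_notMem hi, pow_succ', ← mul_assoc]
      refine Nat.mul_le_mul_right _ (le_trans (Nat.mul_le_mul_left _ ?_)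
        (card_step a b hab s i hi))
      have : (insert i s).card ≤ Fintype.card ι := Finset.card_le_univ _
      rw [Finset.card_insert_of_notMem hi] at this
      omega
  have := key Finset.univ
  rw [Finset.card_univ] at this
  convert this using 4
  simp [funext_iff]

/-- Markov's inequality for the number of realizations in the pairing of a pattern `T`, a set of
lists `(x, y)` of pairwise disjoint pairs `{x i, y i}`. -/
lemma markov (T : Finset ((ι → Fin n × Fin d) × (ι → Fin n × Fin d)))
    (hT : ∀ t ∈ T, Function.Injective (Sum.elim t.1 t.2)) (A : Set (Pairing n d)) (M : ℕ)
    (hA : ∀ m ∈ A, M ≤ (Finset.univ.filter fun x : ι → Fin n × Fin d =>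
      (x, m.1 ∘ x) ∈ T).card) :
    Nat.card {m // m ∈ A} * M * (n * d - 2 * Fintype.card ι) ^ Fintype.card ι ≤
      T.card * Nat.card (Pairing n d) := by
  have h1 : Nat.card {m // m ∈ A} * M ≤ ∑ m : Pairing n d,
      (Finset.univ.filter fun x : ι → Fin n × Fin d => (x, m.1 ∘ x) ∈ T).card := by
    calc Nat.card {m // m ∈ A} * M = ∑ m ∈ Finset.univ.filter (fun m => m ∈ A), M := by
          rw [Nat.card_eq_fintype_card, Fintype.card_subtype, Finset.sum_const, smul_eq_mul]
      _ ≤ ∑ m ∈ Finset.univ.filter (fun m => m ∈ A),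
          (Finset.univ.filter fun x : ι → Fin n × Fin d => (x, m.1 ∘ x) ∈ T).card :=
          Finset.sum_le_sum fun m hm => hA m (Finset.mem_filter.1 hm).2
      _ ≤ _ := Finset.sum_le_sum_of_subset (Finset.filter_subset _ _)
  have h2 : ∑ m : Pairing n d,
      (Finset.univ.filter fun x : ι → Fin n × Fin d => (x, m.1 ∘ x) ∈ T).card =
      ∑ t ∈ T, (Finset.univ.filter fun m : Pairing n d => m.1 ∘ t.1 = t.2).card := by
    have := Finset.sum_card_bipartiteAbove_eq_sum_card_bipartiteBelow
      (s := (Finset.univ : Finset (Pairing n d))) (t := T)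
      (fun (m : Pairing n d) t => m.1 ∘ t.1 = t.2)
    refine Eq.trans ?_ this
    refine Finset.sum_congr rfl fun m _ => ?_
    refine Finset.card_bij (fun x _ => (x, m.1 ∘ x)) ?_ ?_ ?_
    · intro x hx
      simpa [Finset.mem_bipartiteAbove] using hx
    · intro x _ y _ h
      exact (Prod.ext_iff.1 h).1
    · rintro ⟨x, y⟩ h
      simp only [Finset.mem_bipartiteAbove] at h
      obtain ⟨h, rfl⟩ := h
      exact ⟨x, by simpa using h, rfl⟩
  calc _ ≤ (∑ t ∈ T, (Finset.univ.filter fun m : Pairing n d => m.1 ∘ t.1 = t.2).card) *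
        (n * d - 2 * Fintype.card ι) ^ Fintype.card ι := by
        rw [← h2]; exact Nat.mul_le_mul_right _ h1
    _ = ∑ t ∈ T, (Finset.univ.filter fun m : Pairing n d => m.1 ∘ t.1 = t.2).card *
        (n * d - 2 * Fintype.card ι) ^ Fintype.card ι := Finset.sum_mul _ _ _
    _ ≤ ∑ t ∈ T, Nat.card (Pairing n d) := by
        refine Finset.sum_le_sum fun t ht => ?_
        rw [Nat.card_eq_fintype_card]
        exact card_contain t.1 t.2 (hT t ht)
    _ = _ := by simp

lemma prob_le_one (A : Set (Pairing n d)) : pmdProb n d A ≤ 1 := by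
  unfold pmdProb
  refine div_le_one_of_le₀ ?_ (by positivity)
  exact_mod_cast Nat.card_le_card_of_injective _ Subtype.val_injective

lemma prob_nonneg (A : Set (Pairing n d)) : 0 ≤ pmdProb n d A := by
  unfold pmdProb
  positivity

lemma prob_mono {A B : Set (Pairing n d)} (h : A ⊆ B) : pmdProb n d A ≤ pmdProb n d B := by
  unfold pmdProb
  refine div_le_div_of_nonneg_right ?_ (by positivity)
  exact_mod_cast Nat.card_le_card_of_injective (Set.inclusion h) (Set.inclusion_injective h)

lemma prob_union (A B : Set (Pairing n d)) :
    pmdProb n d (A ∪ B) ≤ pmdProb n d A + pmdProb n d B := by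
  unfold pmdProb
  rw [← add_div]
  refine div_le_div_of_nonneg_right ?_ (by positivity)
  exact_mod_cast Set.ncard_union_le A B

lemma prob_biUnion {κ : Type*} (s : Finset κ) (A : κ → Set (Pairing n d)) :
    pmdProb n d (⋃ i ∈ s, A i) ≤ ∑ i ∈ s, pmdProb n d (A i) := by
  induction s using Finset.induction_on with
  | empty => simp [pmdProb]
  | insert i s hi ih =>
    rw [Finset.set_biUnion_insert, Finset.sum_insert hi]
    exact (prob_union _ _).trans (by gcongr)

/-- When the pattern has `l ≤ √(nd) / 2` pairs, each of its elements is realized with probability at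
most `2 (nd)^{-l}`. -/
lemma prob_markov (T : Finset ((ι → Fin n × Fin d) × (ι → Fin n × Fin d)))
    (hT : ∀ t ∈ T, Function.Injective (Sum.elim t.1 t.2)) (A : Set (Pairing n d)) (M : ℕ)
    (hA : ∀ m ∈ A, M ≤ (Finset.univ.filter fun x : ι → Fin n × Fin d =>
      (x, m.1 ∘ x) ∈ T).card) (hN : 4 * Fintype.card ι ^ 2 ≤ n * d) (hnd : 0 < n * d) :
    pmdProb n d A * M * ((n : ℝ) * d) ^ Fintype.card ι ≤ 2 * T.card := by
  have hm := markov T hT A M hA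
  set l := Fintype.card ι with hl
  have hN' : (4 * (l : ℝ) ^ 2) ≤ (n : ℝ) * d := by exact_mod_cast hN
  have hnd' : (0 : ℝ) < (n : ℝ) * d := by exact_mod_cast hnd
  have hle : 2 * l ≤ n * d := by
    rcases Nat.eq_zero_or_pos l with h | h
    · omega
    · nlinarith
  have hb : ((n : ℝ) * d) ^ l ≤ 2 * ((n : ℝ) * d - 2 * l) ^ l := by
    generalize (n : ℝ) * d = N at hN' hnd' ⊢
    have hle' : 2 * (l : ℝ) ≤ N := by
      rcases Nat.eq_zero_or_pos l with h | h
      · rw [h]; simpa using hnd'.le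
      · have : (1 : ℝ) ≤ l := by exact_mod_cast h
        nlinarith
    have h1 := one_add_mul_le_pow (a := -(2 * l / N)) (by
      have : (2 * (l : ℝ) / N) ≤ 1 := by
        rw [div_le_one hnd']; exact hle'
      linarith) l
    have h2 : (l : ℝ) * -(2 * l / N) ≥ - (1 / 2) := by
      have : (l : ℝ) * (2 * l / N) ≤ 1 / 2 := by
        rw [← mul_div_assoc, div_le_iff₀ hnd']; nlinarith
      linarith
    have h3 : N - 2 * l = (1 + -(2 * l / N)) * N := by
      field_simp
      ring
    rw [h3, mul_pow]
    nlinarith [pow_pos hnd' l]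
  have hm' : (Nat.card {m // m ∈ A} : ℝ) * M * ((n : ℝ) * d - 2 * l) ^ l ≤
      T.card * Nat.card (Pairing n d) := by
    have : ((n : ℝ) * d - 2 * l) = ((n * d - 2 * l : ℕ) : ℝ) := by
      push_cast [Nat.cast_sub hle]; ring
    rw [this]
    exact_mod_cast hm
  rcases Nat.eq_zero_or_pos (Nat.card (Pairing n d)) with h0 | h0
  · have : pmdProb n d A = 0 := by simp only [pmdProb, h0, Nat.cast_zero, div_zero]
    rw [this]
    simp
  · have h0' : (0 : ℝ) < Nat.card (Pairing n d) := by exact_mod_cast h0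
    unfold pmdProb
    rw [div_mul_eq_mul_div, div_mul_eq_mul_div, div_le_iff₀ h0']
    have : (0 : ℝ) ≤ (Nat.card {m // m ∈ A} : ℝ) * M := by positivity
    nlinarith [mul_le_mul_of_nonneg_left hb this]


/-! ### Two overlapping cycles contain a theta graph -/

/-- The bi-infinite `k`-periodic sequence `x` lists the outgoing prevertices of a cycle of
length `k` present in `m`. -/
structure IsCyc (m : Pairing n d) (k : ℕ) (x : ℤ → Fin n × Fin d) : Prop where
  per : ∀ i, x (i + k) = x i
  bin : ∀ i, (m.1 (x i)).1 = (x (i + 1)).1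
  nb : ∀ i, m.1 (x i) ≠ x (i + 1)
  inj : ∀ i j, (x i).1 = (x j).1 → (k : ℤ) ∣ i - j

namespace IsCyc

variable {m : Pairing n d} {k : ℕ} {x : ℤ → Fin n × Fin d}

lemma per_mul (h : IsCyc m k x) (i t : ℤ) : x (i + k * t) = x i := by
  induction t using Int.induction_on with
  | zero => simp
  | succ t ih => rw [← ih, mul_add, mul_one, ← add_assoc, h.per]
  | pred t ih => rw [← ih, ← h.per]; ring_nf

lemma of_dvd (h : IsCyc m k x) {i j : ℤ} (hd : (k : ℤ) ∣ i - j) : x i = x j := by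
  obtain ⟨t, ht⟩ := hd
  rw [show i = j + k * t by linarith, h.per_mul]

lemma of_bin (h : IsCyc m k x) {i j : ℤ} (hb : (x i).1 = (x j).1) : x i = x j :=
  h.of_dvd (h.inj _ _ hb)

lemma ne (h : IsCyc m k x) (i j : ℤ) : m.1 (x i) ≠ x j := by
  intro he
  have : x (i + 1) = x j := h.of_bin (by rw [← h.bin, he])
  exact h.nb i (he.trans this.symm)

lemma shift (h : IsCyc m k x) (s : ℤ) : IsCyc m k fun i => x (i + s) where
  per i := by rw [← h.per (i + s)]; ring_nf
  bin i := by rw [h.bin]; ring_nf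
  nb i := by rw [show i + 1 + s = i + s + 1 by ring]; exact h.nb _
  inj i j hij := by have := h.inj _ _ hij; simpa using this

lemma rev (h : IsCyc m k x) : IsCyc m k fun i => m.1 (x (-i)) where
  per i := by
    rw [← h.per (-(i + k))]; ring_nf
  bin i := by
    rw [m.2.1, h.bin]; ring_nf
  nb i hi := by
    rw [m.2.1] at hi
    exact h.ne _ _ hi.symm
  inj i j hij := by
    rw [h.bin, h.bin] at hij
    have := h.inj _ _ hij
    rw [← dvd_neg]
    have e : -(i - j) = -i + 1 - (-j + 1) := by ring
    rw [e]
    exact this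

end IsCyc

lemma minj (m : Pairing n d) {a b : Fin n × Fin d} (h : m.1 a = m.1 b) : a = b := by
  rw [← m.2.1 a, h, m.2.1]

lemma exists_isCyc {m : Pairing n d} {k : ℕ} {S : Finset (Sym2 (Fin n × Fin d))}
    (hS : IsCycleOn n d k S) (hc : Contains n d m S) :
    ∃ x, IsCyc m k x ∧ (S : Set (Sym2 (Fin n × Fin d))) =
      Set.range fun i : ℤ => s(x i, m.1 (x i)) := by
  obtain ⟨x, y, hinj, hbin, hne, hr⟩ := hS
  have hy : ∀ i, m.1 (x i) = y i := by
    intro i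
    apply hc
    rw [← Finset.mem_coe, hr]
    exact ⟨i, rfl⟩
  refine ⟨fun i => x (i : ZMod k), ⟨?_, ?_, ?_, ?_⟩, ?_⟩
  · intro i; simp
  · intro i; simp [hy, hbin]
  · intro i; simpa [hy] using hne i
  · intro i j hij
    have := hinj hij
    rw [← dvd_neg, neg_sub]
    exact (ZMod.intCast_eq_intCast_iff_dvd_sub _ _ _).1 this
  · rw [hr]
    ext e
    constructor
    · rintro ⟨i, rfl⟩
      obtain ⟨j, rfl⟩ := ZMod.intCast_surjective i
      exact ⟨j, by simp [hy]⟩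
    · rintro ⟨i, rfl⟩
      exact ⟨i, by simp [hy]⟩

/-- `m` contains a theta graph: a non-backtracking trail `w` of `k + b` pairwise disjoint pairs
which closes a `k`-cycle with its first `k` steps and returns to vertex number `p` of that
cycle with the last step. -/
def Theta (m : Pairing n d) (k p b : ℕ) : Prop :=
  ∃ w : ℕ → Fin n × Fin d,
    (∀ i j, i < k + b → j < k + b → w i = w j → i = j) ∧
    (∀ i j, i < k + b → j < k + b → m.1 (w i) ≠ w j) ∧
    (∀ i, i + 1 < k + b → (m.1 (w i)).1 = (w (i + 1)).1 ∧ m.1 (w i) ≠ w (i + 1)) ∧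
    (w k).1 = (w 0).1 ∧ (m.1 (w (k + b - 1))).1 = (w p).1

/-- Two cycles `x` and `z` that separate at time `0` form a theta graph with the cycle `x` and the
part of `z` up to its first return to a vertex of `x`. -/
lemma arc {m : Pairing n d} {k k' : ℕ} {x z : ℤ → Fin n × Fin d} (hk : 1 ≤ k) (hk' : 1 ≤ k')
    (hx : IsCyc m k x) (hz : IsCyc m k' z) (h1 : x (-1) = z (-1)) (h0 : x 0 ≠ z 0)
    (c : ℕ) (hc : 1 ≤ c) (hcv : ∃ q, (z c).1 = (x q).1) :
    ∃ b p : ℕ, 1 ≤ b ∧ b ≤ c ∧ b < k' ∧ 1 ≤ p ∧ p < k ∧ (z b).1 = (x p).1 ∧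
      Theta m k p b := by
  have hb0 : (z 0).1 = (x 0).1 := by
    have e1 := hx.bin (-1)
    have e2 := hz.bin (-1)
    norm_num at e1 e2
    rw [← e1, ← e2, h1]
  have hk2 : 2 ≤ k' := by
    by_contra hlt
    have : k' = 1 := by omega
    subst this
    have e : z (-1) = z 0 := hz.of_dvd (by simp)
    apply h0
    have e' : x (-1) = x 0 := hx.of_bin (by rw [h1, e, hb0])
    rw [← e', h1, e]
  have hex : ∃ b : ℕ, 1 ≤ b ∧ ∃ q, (z b).1 = (x q).1 := ⟨c, hc, hcv⟩
  set b := Nat.find hex with hbdef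
  obtain ⟨hb1, q, hq⟩ := Nat.find_spec hex
  rw [← hbdef] at hb1 hq
  have hbmin : ∀ i : ℕ, 1 ≤ i → i < b → ∀ q, (z i).1 ≠ (x q).1 := by
    intro i hi hib q h
    exact Nat.find_min hex hib ⟨hi, q, h⟩
  have hbc : b ≤ c := Nat.find_min' hex ⟨hc, hcv⟩
  have hbk : b < k' := by
    have : b ≤ k' - 1 := Nat.find_min' hex ⟨by omega, -1, by
      rw [h1]
      congr 1
      apply hz.of_dvd
      push_cast [Nat.cast_sub hk']
      simp⟩
    omega
  have hkpos : (0 : ℤ) < k := by exact_mod_cast hk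
  obtain ⟨p, hp⟩ := Int.eq_ofNat_of_zero_le (Int.emod_nonneg q hkpos.ne')
  have hpk : p < k := by
    have := Int.emod_lt_of_pos q hkpos
    omega
  have hqp : x q = x p := hx.of_dvd (by rw [← hp]; exact Int.dvd_self_sub_emod)
  rw [hqp] at hq
  have hp1 : 1 ≤ p := by
    by_contra h
    have : p = 0 := by omega
    subst this
    have := hz.inj b 0 (by rw [hq, hb0]; rfl)
    rw [sub_zero] at this
    have := Int.le_of_dvd (by omega) this
    omega
  -- the prevertices of the arc are not prevertices of the cycle `x`
  have hzx : ∀ i : ℕ, i < b → ∀ j, z i ≠ x j ∧ z i ≠ m.1 (x j) := by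
    intro i hi j
    rcases Nat.eq_zero_or_pos i with h | h
    · subst h
      constructor
      · intro h
        apply h0
        rw [Nat.cast_zero] at h
        rw [h]
        exact hx.of_bin (by rw [← hb0, h])
      · intro h
        rw [Nat.cast_zero] at h
        have e : (x (j + 1)).1 = (x 0).1 := by rw [← hx.bin, ← h, hb0]
        have e' : x j = x (-1) := hx.of_dvd (by simpa using hx.inj _ _ e)
        rw [e', h1] at h
        have := hz.nb (-1)
        norm_num at this
        exact this h.symm
    · constructor
      · intro he
        exact hbmin i h hi j (by rw [he])
      · intro he
        exact hbmin i h hi (j + 1) (by rw [he, hx.bin])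
  refine ⟨b, p, hb1, hbc, hbk, hp1, hpk, hq, fun i => if i < k then x i else z ((i - k : ℕ)),
    ?_, ?_, ?_, ?_, ?_⟩
  · intro i j hi hj h
    have aux : ∀ i j : ℕ, i < k → j < k → x i = x j → i ≤ j := by
      intro i j hi hj h
      by_contra hlt
      have := Int.le_of_dvd (by omega) (hx.inj i j (by rw [h]))
      omega
    have aux' : ∀ i j : ℕ, i < b → j < b → z i = z j → i ≤ j := by
      intro i j hi hj h
      by_contra hlt
      have := Int.le_of_dvd (by omega) (hz.inj i j (by rw [h]))
      omega
    simp only at h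
    split_ifs at h with ha hb hb
    · exact le_antisymm (aux i j ha hb h) (aux j i hb ha h.symm)
    · exact absurd h.symm (hzx _ (by omega) _).1
    · exact absurd h (hzx _ (by omega) _).1
    · have := aux' _ _ (by omega) (by omega) h
      have := aux' _ _ (by omega) (by omega) h.symm
      omega
  · intro i j hi hj h
    simp only at h
    split_ifs at h with ha hb hb
    · exact hx.ne _ _ h
    · exact (hzx _ (by omega) _).2 h.symm
    · refine (hzx (i - k) (by omega) j).2 ?_
      rw [← h, m.2.1]
    · exact hz.ne _ _ h
  · intro i hi
    simp only
    split_ifs with ha hb hb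
    · exact ⟨by simpa using hx.bin i, by simpa using hx.nb i⟩
    · have hik : i + 1 - k = 0 := by omega
      have hxi : x i = z (-1) := by
        rw [← h1]
        exact hx.of_dvd ⟨1, by push_cast [show k = i + 1 by omega]; ring⟩
      rw [hik, hxi]
      exact ⟨by simpa using hz.bin (-1), by simpa using hz.nb (-1)⟩
    · omega
    · rw [show i + 1 - k = (i - k) + 1 by omega]
      exact ⟨by simpa using hz.bin _, by simpa using hz.nb _⟩
  · simp only [lt_irrefl, if_false, Nat.sub_self, if_pos (show 0 < k by omega)]
    simpa using hb0
  · simp only [if_pos hpk, if_neg (show ¬ (k + b - 1 < k) by omega)]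
    rw [← hq, hz.bin]
    congr 2
    omega

/-- Two cycles of length at most `r` that separate at time `0` produce a theta graph two of whose
cycles have length at most `r`: if the arc cut out by one of them is longer than `r / 2`, then
either it is closed up by the common path alone, or following both cycles in the opposite direction
gives an arc shorter than `r / 2`. -/
lemma exists_theta {m : Pairing n d} {k k' r : ℕ} {x z : ℤ → Fin n × Fin d}
    (hk : 1 ≤ k) (hk' : 1 ≤ k') (hkr : k ≤ r) (hkr' : k' ≤ r)
    (hx : IsCyc m k x) (hz : IsCyc m k' z) (h1 : x (-1) = z (-1)) (h0 : x 0 ≠ z 0) :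
    ∃ k p b, 1 ≤ p ∧ p < k ∧ k ≤ r ∧ 1 ≤ b ∧ min p (k - p) + b ≤ r ∧ Theta m k p b := by
  have hb0 : (z 0).1 = (x 0).1 := by
    have e1 := hx.bin (-1)
    have e2 := hz.bin (-1)
    norm_num at e1 e2
    rw [← e1, ← e2, h1]
  obtain ⟨b, p, hb1, -, hbk, hp1, hpk, hbp, hth⟩ := arc hk hk' hx hz h1 h0 k' hk' ⟨0, by
    rw [← hb0]
    congr 1
    exact hz.of_dvd (by simp)⟩
  by_cases hbr : 2 * b ≤ r
  · exact ⟨k, p, b, hp1, hpk, hkr, hb1, by omega, hth⟩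
  -- backwards in time, the cycles agree at `-1` and first differ at `-t - 1`
  have hex : ∃ t : ℕ, x (-t - 1) ≠ z (-t - 1) := by
    refine ⟨k * k' - 1, ?_⟩
    have hkk : 1 ≤ k * k' := Nat.mul_pos hk hk'
    have e : (-((k * k' - 1 : ℕ) : ℤ) - 1) = - (k * k') := by
      push_cast [Nat.cast_sub hkk]; ring
    rw [e, hx.of_dvd (j := 0) ⟨-k', by ring⟩, hz.of_dvd (j := 0) ⟨-k, by ring⟩]
    exact h0
  set t := Nat.find hex with htdef
  have ht := Nat.find_spec hex
  rw [← htdef] at ht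
  have htmin : ∀ s : ℕ, s < t → x (-s - 1) = z (-s - 1) := by
    intro s hs
    by_contra h
    exact Nat.find_min hex hs h
  have ht1 : 1 ≤ t := by
    by_contra h
    have : t = 0 := by omega
    rw [this] at ht
    exact ht (by simpa using h1)
  -- in the first case the rest of `z` is the common path, so `x` has a path of length at most
  -- `k' - b` between the ends of the arc
  by_cases htb : k' - b ≤ t
  · refine ⟨k, p, b, hp1, hpk, hkr, hb1, ?_, hth⟩
    have e1 := htmin (k' - b - 1) (by omega)
    rw [show (-((k' - b - 1 : ℕ) : ℤ) - 1) = b - k' by omega] at e1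
    have e2 : z (b - k') = z b := hz.of_dvd (by simp)
    have e3 := hx.inj (b - k') p (by rw [e1, e2, hbp])
    have hdv : (k : ℤ) ∣ ((k' : ℤ) - b) - (k - p) := by
      have := dvd_add (dvd_neg.2 e3) (dvd_neg.2 (dvd_refl (k : ℤ)))
      have e : ((k' : ℤ) - b) - (k - p) = -((b : ℤ) - k' - p) + -(k : ℤ) := by ring
      rw [e]
      exact this
    have : (k : ℤ) - p ≤ k' - b := by
      by_contra hlt
      push Not at hlt
      obtain ⟨q, hq⟩ := hdv
      have hq0 : q < 0 := by
        by_contra h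
        have : 0 ≤ (k : ℤ) * q := by
          apply mul_nonneg <;> omega
        omega
      have : (k : ℤ) * q ≤ k * (-1) := by
        apply mul_le_mul_of_nonneg_left <;> omega
      omega
    omega
  -- in the second case the reversed cycles separate at time `t + 1`, and the reversed `z` returns
  -- to `x` at the end of the first arc at the latest
  · have hx' := (hx.rev).shift (t + 1)
    have hz' := (hz.rev).shift (t + 1)
    obtain ⟨b', p', hb1', hbc', -, hp1', hpk', -, hth'⟩ := arc hk hk' hx' hz'
      (by
        have := htmin (t - 1) (by omega)
        rw [show (-((t - 1 : ℕ) : ℤ) - 1) = -(-1 + (t + 1)) by omega] at this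
        simp only [this])
      (by
        intro h
        apply ht
        have := minj m h
        rw [show (-(t : ℤ) - 1) = -(0 + (t + 1)) by omega]
        exact this) (k' - b - t) (by omega)
      ⟨- p - t, by
        simp only [hx.bin, hz.bin]
        rw [show -(-(p : ℤ) - t + (t + 1)) + 1 = p by ring, ← hbp]
        congr 1
        apply hz.of_dvd
        refine ⟨-1, ?_⟩
        rw [Nat.cast_sub (by omega), Nat.cast_sub (by omega)]
        ring⟩
    exact ⟨k, p', b', hp1', hpk', hkr, hb1', by omega, hth'⟩

/-- Two different cycles with a common outgoing prevertex are shifted in time so that they separate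
for the first time at time `0`. -/
lemma exists_theta_of_common {m : Pairing n d} {k k' r : ℕ} {x z : ℤ → Fin n × Fin d}
    (hk : 1 ≤ k) (hk' : 1 ≤ k') (hkr : k ≤ r) (hkr' : k' ≤ r)
    (hx : IsCyc m k x) (hz : IsCyc m k' z) {i j : ℤ} (hij : x i = z j)
    (hne : Set.range (fun i : ℤ => s(x i, m.1 (x i))) ≠
      Set.range (fun i : ℤ => s(z i, m.1 (z i)))) :
    ∃ k p b, 1 ≤ p ∧ p < k ∧ k ≤ r ∧ 1 ≤ b ∧ min p (k - p) + b ≤ r ∧ Theta m k p b := by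
  have hex : ∃ t : ℕ, x (t + i) ≠ z (t + j) := by
    by_contra hcon
    push Not at hcon
    apply hne
    have hall : ∀ s : ℤ, x (s + i) = z (s + j) := by
      intro s
      have hkk : (0 : ℤ) < k * k' := by
        apply mul_pos <;> omega
      obtain ⟨t, ht⟩ := Int.eq_ofNat_of_zero_le (Int.emod_nonneg s hkk.ne')
      have hd : (k : ℤ) * k' ∣ s - t := by rw [← ht]; exact Int.dvd_self_sub_emod
      have e1 : x (s + i) = x (t + i) :=
        hx.of_dvd (by simpa using (dvd_mul_right (k : ℤ) k').trans hd)
      have e2 : z (s + j) = z (t + j) :=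
        hz.of_dvd (by simpa using (dvd_mul_left (k' : ℤ) k).trans hd)
      rw [e1, e2, hcon]
    ext e
    constructor
    · rintro ⟨s, rfl⟩
      have := hall (s - i)
      rw [sub_add_cancel] at this
      exact ⟨s - i + j, by simp only [this]⟩
    · rintro ⟨s, rfl⟩
      have := hall (s - j)
      rw [sub_add_cancel] at this
      exact ⟨s - j + i, by simp only [this]⟩
  set t := Nat.find hex with htdef
  have ht := Nat.find_spec hex
  rw [← htdef] at ht
  have ht1 : 1 ≤ t := by
    by_contra h
    have : t = 0 := by omega
    rw [this] at ht
    exact ht (by simpa using hij)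
  have hprev : x ((t - 1 : ℕ) + i) = z ((t - 1 : ℕ) + j) := by
    by_contra h
    exact Nat.find_min hex (show t - 1 < t by omega) h
  rw [Nat.cast_sub ht1] at hprev
  refine exists_theta hk hk' hkr hkr' (hx.shift (t + i)) (hz.shift (t + j)) ?_ ?_
  · rw [show -1 + ((t : ℤ) + i) = t - 1 + i by ring, show -1 + ((t : ℤ) + j) = t - 1 + j by ring]
    exact hprev
  · simpa using ht

/-- Up to a reversal, two cycles with a common prevertex have a common outgoing prevertex. -/
lemma exists_theta_of_share {m : Pairing n d} {r : ℕ} (α β : CycIdx n d r) (hne : α ≠ β)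
    (hα : Contains n d m α.1) (hβ : Contains n d m β.1) {a : Fin n × Fin d}
    {e e' : Sym2 (Fin n × Fin d)} (he : e ∈ α.1) (he' : e' ∈ β.1) (ha : a ∈ e) (ha' : a ∈ e') :
    ∃ k p b, 1 ≤ p ∧ p < k ∧ k ≤ r ∧ 1 ≤ b ∧ min p (k - p) + b ≤ r ∧ Theta m k p b := by
  obtain ⟨k, hk, hkr, hS⟩ := α.2
  obtain ⟨k', hk', hkr', hS'⟩ := β.2
  obtain ⟨x, hx, hxr⟩ := exists_isCyc hS hα
  obtain ⟨z, hz, hzr⟩ := exists_isCyc hS' hβ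
  have hr : Set.range (fun i : ℤ => s(x i, m.1 (x i))) ≠
      Set.range (fun i : ℤ => s(z i, m.1 (z i))) := by
    rw [← hxr, ← hzr]
    intro h
    exact hne (Subtype.ext (Finset.coe_injective h))
  have hrev : Set.range (fun i : ℤ => s(m.1 (z (-i)), m.1 (m.1 (z (-i))))) =
      Set.range (fun i : ℤ => s(z i, m.1 (z i))) := by
    ext f
    constructor
    · rintro ⟨i, rfl⟩
      exact ⟨-i, by simp only [m.2.1]; exact Sym2.eq_swap⟩
    · rintro ⟨i, rfl⟩
      exact ⟨-i, by simp only [m.2.1, neg_neg]; exact Sym2.eq_swap⟩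
  rw [← Finset.mem_coe, hxr] at he
  rw [← Finset.mem_coe, hzr] at he'
  obtain ⟨i, rfl⟩ := he
  obtain ⟨j, rfl⟩ := he'
  have hcase : x i = z j ∨ x i = m.1 (z j) := by
    rw [Sym2.mem_iff] at ha ha'
    rcases ha with rfl | rfl
    · exact ha'
    · rcases ha' with h | h
      · exact Or.inr (by rw [← h, m.2.1])
      · exact Or.inl (minj m h)
  rcases hcase with h | h
  · exact exists_theta_of_common hk hk' hkr hkr' hx hz h hr
  · refine exists_theta_of_common hk hk' hkr hkr' hx hz.rev (i := i) (j := -j) ?_ ?_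
    · simpa using h
    · rw [hrev]; exact hr


/-! ### The probability of a theta graph -/

/-- The possible theta graphs `(x, y)`, listed along a non-backtracking trail of `L + 1` pairs
`{x i, y i}`. -/
noncomputable def thetaPat (n d L : ℕ) (k p : Fin (L + 1)) :
    Finset ((Fin (L + 1) → Fin n × Fin d) × (Fin (L + 1) → Fin n × Fin d)) :=
  Finset.univ.filter fun t => Function.Injective (Sum.elim t.1 t.2) ∧
    (∀ i : Fin L, (t.2 i.castSucc).1 = (t.1 i.succ).1 ∧ t.2 i.castSucc ≠ t.1 i.succ) ∧
    (t.1 k).1 = (t.1 0).1 ∧ (t.2 (Fin.last L)).1 = (t.1 p).1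

/-- A theta graph with `L + 1` pairs has only `L` vertices, since one of the vertices of the trail
repeats its origin and its endpoint repeats another one. -/
lemma card_thetaPat (n d L : ℕ) (k p : Fin (L + 1)) (hk : k ≠ 0) :
    (thetaPat n d L k p).card ≤ n ^ L * (d * d) * (d * d - d) ^ L := by
  let U : Finset ((Fin L → Fin n) × (Fin d × Fin d) × (Fin L → Fin d × Fin d)) :=
    Finset.univ ×ˢ Finset.univ ×ˢ
      Fintype.piFinset (fun _ : Fin L => (Finset.univ : Finset (Fin d)).offDiag)
  have hU : U.card = n ^ L * (d * d) * (d * d - d) ^ L := by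
    simp [U, Finset.offDiag_card, mul_assoc]
  rw [← hU]
  refine Finset.card_le_card_of_injOn (fun t => (fun i => (t.1 (k.succAbove i)).1,
    ((t.1 0).2, (t.2 (Fin.last L)).2), fun i => ((t.2 i.castSucc).2, (t.1 i.succ).2))) ?_ ?_
  · rintro ⟨x, y⟩ ht
    simp only [thetaPat, Finset.coe_filter, Finset.mem_univ, true_and, Set.mem_ofPred_eq] at ht
    simp only [U, Finset.mem_coe, Finset.mem_product, Finset.mem_univ, true_and,
      Fintype.mem_piFinset, Finset.mem_offDiag]
    intro i h
    exact (ht.2.1 i).2 (Prod.ext (ht.2.1 i).1 h)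
  · rintro ⟨x, y⟩ ht ⟨x', y'⟩ ht' h
    simp only [thetaPat, Finset.coe_filter, Finset.mem_univ, true_and, Set.mem_ofPred_eq]
      at ht ht'
    simp only [Prod.mk.injEq, funext_iff] at h
    obtain ⟨h1, ⟨h2, h3⟩, h4⟩ := h
    have hb : ∀ j, j ≠ k → (x j).1 = (x' j).1 := by
      intro j hj
      obtain ⟨i, rfl⟩ := Fin.exists_succAbove_eq hj
      exact h1 i
    have hb' : ∀ j, (x j).1 = (x' j).1 := by
      intro j
      by_cases hj : j = k
      · rw [hj, ht.2.2.1, ht'.2.2.1, hb 0 hk.symm]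
      · exact hb j hj
    have hx : x = x' := by
      funext j
      refine Prod.ext (hb' j) ?_
      induction j using Fin.cases with
      | zero => exact h2
      | succ i => exact (h4 i).2
    have hy : y = y' := by
      funext j
      induction j using Fin.lastCases with
      | last =>
        refine Prod.ext ?_ h3
        rw [ht.2.2.2, ht'.2.2.2, hb']
      | cast i =>
        refine Prod.ext ?_ (h4 i).1
        rw [(ht.2.1 i).1, (ht'.2.1 i).1, hb']
    rw [hx, hy]

/-- With `L + 1 = k + b` pairs, there are `n ^ L d ^ 2 (d (d - 1)) ^ L` patterns, each of probability
at most `2 (nd) ^ (-L - 1)`. -/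
lemma prob_theta {k p b : ℕ} (hd : 1 ≤ d) (hn : 1 ≤ n) (hp : p < k) (hb : 1 ≤ b)
    (hN : 4 * (k + b) ^ 2 ≤ n * d) :
    pmdProb n d {m | Theta m k p b} ≤ 2 * d * ((d : ℝ) - 1) ^ (k + b - 1) / n := by
  obtain ⟨L, hL⟩ : ∃ L, k + b = L + 1 := ⟨k + b - 1, by omega⟩
  have hLk : k + b - 1 = L := by omega
  rw [hLk]
  have hm := prob_markov (thetaPat n d L ⟨k, by omega⟩ ⟨p, by omega⟩)
    (by
      intro t ht
      simp only [thetaPat, Finset.mem_filter] at ht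
      exact ht.2.1)
    {m : Pairing n d | Theta m k p b} 1 (by
      rintro m ⟨w, h1, h2, h3, h4, h5⟩
      rw [Nat.one_le_iff_ne_zero, ← Nat.pos_iff_ne_zero, Finset.card_pos]
      refine ⟨fun i => w i, ?_⟩
      simp only [thetaPat, Finset.mem_filter, Finset.mem_univ, true_and, Function.comp_apply]
      refine ⟨?_, ?_, ?_, ?_⟩
      · rintro (i | i) (j | j) h
        · exact congrArg _ (Fin.ext (h1 _ _ (by omega) (by omega) h))
        · exact absurd h.symm (h2 _ _ (by omega) (by omega))
        · exact absurd h (h2 _ _ (by omega) (by omega))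
        · exact congrArg _ (Fin.ext (h1 _ _ (by omega) (by omega) (minj m h)))
      · intro i
        exact h3 i (by omega)
      · exact h4
      · rw [hLk] at h5
        exact h5) (by rw [Fintype.card_fin, ← hL]; exact hN) (Nat.mul_pos hn hd)
  have hc := card_thetaPat n d L ⟨k, by omega⟩ ⟨p, by omega⟩
    (by intro h; have := congrArg Fin.val h; simp at this; omega)
  have hc' : ((thetaPat n d L ⟨k, by omega⟩ ⟨p, by omega⟩).card : ℝ) ≤
      (n : ℝ) ^ L * (d * d) * (d * (d - 1)) ^ L := by
    have : ((d * d - d : ℕ) : ℝ) = (d : ℝ) * (d - 1) := by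
      rw [Nat.cast_sub (Nat.le_mul_self d)]; push_cast; ring
    rw [← this]
    exact_mod_cast hc
  rw [Fintype.card_fin] at hm
  have hn' : (0 : ℝ) < n := by exact_mod_cast hn
  have hd' : (0 : ℝ) < d := by exact_mod_cast hd
  rw [le_div_iff₀ hn']
  have hpos : (0 : ℝ) < (n : ℝ) ^ L * d ^ L * d := by positivity
  rw [← mul_le_mul_iff_left₀ hpos]
  calc pmdProb n d {m | Theta m k p b} * n * ((n : ℝ) ^ L * d ^ L * d)
      = pmdProb n d {m | Theta m k p b} * (1 : ℕ) * ((n : ℝ) * d) ^ (L + 1) := by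
        push_cast; ring
    _ ≤ 2 * ((n : ℝ) ^ L * (d * d) * (d * (d - 1)) ^ L) := hm.trans (by gcongr)
    _ = _ := by rw [mul_pow]; ring

/-- The event that two cycles of length at most `r` overlap. The number of pairs in a theta graph
with parameters `(k, p, b)`, `δ = min p (k - p)`, is `k + b = 2r - 1 - u - v - w` for
`u = r - k`, `v = r - δ - b` and `w = δ - 1`, so the bounds form a geometric series. -/
lemma prob_overlap {r : ℕ} (hd : 3 ≤ d) (hn : 1 ≤ n) (hN : 16 * r ^ 2 ≤ n * d) :
    pmdProb n d {m | ∃ k p b, 1 ≤ p ∧ p < k ∧ k ≤ r ∧ 1 ≤ b ∧ min p (k - p) + b ≤ r ∧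
      Theta m k p b} ≤ 64 * ((d : ℝ) - 1) ^ (2 * r - 1) / n := by
  have hd' : (3 : ℝ) ≤ d := by exact_mod_cast hd
  have hn' : (0 : ℝ) < n := by exact_mod_cast hn
  set q : ℝ := (d : ℝ) - 1 with hq
  have hq2 : 2 ≤ q := by linarith
  let E : ℕ → ℕ → ℕ → Bool → Set (Pairing n d) := fun u v w s =>
    {m | ∃ k p b, 1 ≤ p ∧ p < k ∧ k ≤ r ∧ 1 ≤ b ∧ u + k = r ∧ w + v + b + 1 = r ∧
      w + 1 ≤ k - (w + 1) ∧ p = (if s then w + 1 else k - (w + 1)) ∧ Theta m k p b}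
  let I : Finset (((ℕ × ℕ) × ℕ) × Bool) :=
    ((Finset.range r ×ˢ Finset.range r) ×ˢ Finset.range r) ×ˢ Finset.univ
  have hsub : {m : Pairing n d | ∃ k p b, 1 ≤ p ∧ p < k ∧ k ≤ r ∧ 1 ≤ b ∧
      min p (k - p) + b ≤ r ∧ Theta m k p b} ⊆ ⋃ i ∈ I, E i.1.1.1 i.1.1.2 i.1.2 i.2 := by
    rintro m ⟨k, p, b, hp, hpk, hkr, hb, hmin, hth⟩
    simp only [Set.mem_iUnion]
    rcases le_total p (k - p) with h | h
    · rw [min_eq_left h] at hmin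
      refine ⟨(((r - k, r - p - b), p - 1), true), ?_, k, p, b, hp, hpk, hkr, hb, ?_, ?_, ?_,
        ?_, hth⟩
      · simp [I]; omega
      all_goals (simp; omega)
    · rw [min_eq_right h] at hmin
      refine ⟨(((r - k, r - (k - p) - b), k - p - 1), false), ?_, k, p, b, hp, hpk, hkr, hb,
        ?_, ?_, ?_, ?_, hth⟩
      · simp [I]; omega
      all_goals (simp; omega)
  have hE : ∀ u v w s, pmdProb n d (E u v w s) ≤
      4 * q ^ (2 * r - 1) / n * ((1 / 2) ^ u * (1 / 2) ^ v * (1 / 2) ^ w) := by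
    intro u v w s
    by_cases hne : ∃ k p b, 1 ≤ p ∧ p < k ∧ k ≤ r ∧ 1 ≤ b ∧ u + k = r ∧ w + v + b + 1 = r ∧
      w + 1 ≤ k - (w + 1) ∧ p = (if s then w + 1 else k - (w + 1))
    · obtain ⟨k, p, b, hp, hpk, hkr, hb, hu, hv, hw, hps⟩ := hne
      have hsub' : E u v w s ⊆ {m | Theta m k p b} := by
        rintro m ⟨k', p', b', hp', hpk', hkr', hb', hu', hv', hw', hps', hth⟩
        have e1 : k' = k := by omega
        have e2 : b' = b := by omega
        subst e1 e2
        rw [← hps] at hps'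
        subst hps'
        exact hth
      refine (prob_mono hsub').trans ((prob_theta (by omega) hn hpk hb ?_).trans ?_)
      · have : (k + b) ^ 2 ≤ (2 * r) ^ 2 := Nat.pow_le_pow_left (by omega) 2
        nlinarith
      · rw [← hq]
        have he : 2 * r - 1 = (k + b) + (u + v + w) := by omega
        have h1 : 2 * (d : ℝ) * q ^ (k + b - 1) ≤ 4 * q ^ (k + b) := by
          have : q ^ (k + b) = q * q ^ (k + b - 1) := by
            rw [← pow_succ']; congr 1; omega
          rw [this]
          have h2 : (d : ℝ) ≤ 2 * q := by linarith
          have h3 : 0 ≤ q ^ (k + b - 1) := by positivity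
          nlinarith
        have h2 : (1 : ℝ) ≤ q ^ (u + v + w) * ((1 / 2) ^ u * (1 / 2) ^ v * (1 / 2) ^ w) := by
          rw [← pow_add, ← pow_add, ← mul_pow]
          exact one_le_pow₀ (by linarith)
        have h3 : 0 ≤ 4 * q ^ (k + b) := by positivity
        rw [he, pow_add q, div_mul_eq_mul_div]
        refine div_le_div_of_nonneg_right (h1.trans ?_) hn'.le
        nlinarith
    · have : E u v w s = ∅ := by
        ext m
        simp only [Set.mem_empty_iff_false, iff_false]
        rintro ⟨k, p, b, h1, h2, h3, h4, h5, h6, h7, h8, -⟩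
        exact hne ⟨k, p, b, h1, h2, h3, h4, h5, h6, h7, h8⟩
      rw [this]
      have : pmdProb n d ∅ = 0 := by simp [pmdProb]
      rw [this]
      positivity
  have hg : ∑ u ∈ Finset.range r, ((1 : ℝ) / 2) ^ u ≤ 2 := by
    have := geom_sum_eq (x := (1 / 2 : ℝ)) (by norm_num) r
    rw [this]
    have : (0 : ℝ) ≤ (1 / 2) ^ r := by positivity
    rw [div_le_iff_of_neg (by norm_num)]
    linarith
  have hg0 : 0 ≤ ∑ u ∈ Finset.range r, ((1 : ℝ) / 2) ^ u :=
    Finset.sum_nonneg fun _ _ => by positivity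
  refine (prob_mono hsub).trans ((prob_biUnion _ _).trans
    ((Finset.sum_le_sum fun i _ => hE _ _ _ _).trans ?_))
  rw [← Finset.mul_sum]
  have hs : ∑ i ∈ I, ((1 : ℝ) / 2) ^ i.1.1.1 * (1 / 2) ^ i.1.1.2 * (1 / 2) ^ i.1.2 ≤ 16 := by
    simp only [I]
    rw [Finset.sum_product]
    simp only [Finset.sum_const, Finset.card_univ, Fintype.card_bool]
    rw [← Finset.smul_sum, Finset.sum_product]
    simp only [← Finset.mul_sum]
    rw [← Finset.sum_mul, Finset.sum_product]
    simp only [← Finset.mul_sum]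
    rw [← Finset.sum_mul]
    set g := ∑ u ∈ Finset.range r, ((1 : ℝ) / 2) ^ u
    have : g * g ≤ 4 := by nlinarith
    have : g * g * g ≤ 8 := by nlinarith
    simp only [nsmul_eq_mul]
    push_cast
    linarith
  calc _ ≤ 4 * q ^ (2 * r - 1) / n * 16 := by gcongr
    _ = _ := by ring


/-! ### Moments of the number of `k`-cycles -/

/-- The possible `j`-tuples of prevertex-disjoint rooted oriented `k`-cycles; the pairs of the
`a`-th cycle are `{x (a, c), y (a, c)}` for `c : ZMod k`. -/
noncomputable def cycPat (n d j k : ℕ) [NeZero k] :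
    Finset ((Fin j × ZMod k → Fin n × Fin d) × (Fin j × ZMod k → Fin n × Fin d)) :=
  Finset.univ.filter fun t => Function.Injective (Sum.elim t.1 t.2) ∧
    ∀ i : Fin j × ZMod k, (t.2 i).1 = (t.1 (i.1, i.2 + 1)).1 ∧ t.2 i ≠ t.1 (i.1, i.2 + 1)

lemma card_cycPat (n d j k : ℕ) [NeZero k] :
    (cycPat n d j k).card ≤ (n * (d * d - d)) ^ (j * k) := by
  let U : Finset (Fin j × ZMod k → Fin n × (Fin d × Fin d)) :=
    Fintype.piFinset (fun _ => Finset.univ ×ˢ (Finset.univ : Finset (Fin d)).offDiag)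
  have hU : U.card = (n * (d * d - d)) ^ (j * k) := by
    simp [U, Finset.offDiag_card, ZMod.card]
  rw [← hU]
  refine Finset.card_le_card_of_injOn (fun t => fun i => ((t.2 i).1, ((t.2 i).2,
    (t.1 (i.1, i.2 + 1)).2))) ?_ ?_
  · rintro ⟨x, y⟩ ht
    simp only [cycPat, Finset.coe_filter, Finset.mem_univ, true_and, Set.mem_ofPred_eq] at ht
    simp only [U, Finset.mem_coe, Finset.mem_product, Finset.mem_univ, true_and,
      Fintype.mem_piFinset, Finset.mem_offDiag]
    intro i h
    exact (ht.2 i).2 (Prod.ext (ht.2 i).1 h)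
  · rintro ⟨x, y⟩ ht ⟨x', y'⟩ ht' h
    simp only [cycPat, Finset.coe_filter, Finset.mem_univ, true_and, Set.mem_ofPred_eq]
      at ht ht'
    simp only [Prod.mk.injEq, funext_iff] at h
    have hy : y = y' := by
      funext i
      exact Prod.ext (h i).1 (h i).2.1
    have hx : x = x' := by
      funext i
      have h1 := h (i.1, i.2 - 1)
      have h2 := ht.2 (i.1, i.2 - 1)
      have h3 := ht'.2 (i.1, i.2 - 1)
      simp only [sub_add_cancel] at h1 h2 h3
      exact Prod.ext (by rw [← h2.1, ← h3.1, h1.1]) h1.2.2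
    rw [hx, hy]

/-- No two distinct cycles of length at most `r` present in `m` share a prevertex. -/
def NoShare (r : ℕ) (m : Pairing n d) : Prop :=
  ∀ α β : CycIdx n d r, α ≠ β → Contains n d m α.1 → Contains n d m β.1 →
    ∀ e ∈ α.1, ∀ e' ∈ β.1, ∀ a ∈ e, ∀ b ∈ e', a ≠ b

/-- The cycles of length `k` present in `m`, when `1 ≤ k ≤ r`. The length is encoded as the number
of pairs. -/
abbrev Cyc (r k : ℕ) (m : Pairing n d) : Type :=
  {α : CycIdx n d r // Contains n d m α.1 ∧ α.1.card = k}

/-- The pairs of a cycle of length `k` are distinct. -/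
lemma IsCyc.card_eq {m : Pairing n d} {k : ℕ} {x : ℤ → Fin n × Fin d} (hk : 1 ≤ k)
    (hx : IsCyc m k x) {S : Finset (Sym2 (Fin n × Fin d))}
    (hS : (S : Set (Sym2 (Fin n × Fin d))) = Set.range fun i : ℤ => s(x i, m.1 (x i))) :
    S.card = k := by
  have hSi : S = (Finset.range k).image fun i : ℕ => s(x i, m.1 (x i)) := by
    apply Finset.coe_injective
    rw [hS]
    ext e
    simp only [Set.mem_range, Finset.coe_image, Set.mem_image, Finset.coe_range, Set.mem_Iio]
    constructor
    · rintro ⟨i, rfl⟩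
      have hkk : (0 : ℤ) < k := by omega
      obtain ⟨t, ht⟩ := Int.eq_ofNat_of_zero_le (Int.emod_nonneg i hkk.ne')
      have := Int.emod_lt_of_pos i hkk
      have e1 : x i = x t := hx.of_dvd (by rw [← ht]; exact Int.dvd_self_sub_emod)
      exact ⟨t, by omega, by rw [e1]⟩
    · rintro ⟨i, -, rfl⟩
      exact ⟨i, rfl⟩
  rw [hSi, Finset.card_image_of_injOn, Finset.card_range]
  have aux : ∀ i j : ℕ, i < k → j < k → x i = x j → i ≤ j := by
    intro i j hi hj h
    by_contra hlt
    have := Int.le_of_dvd (by omega) (hx.inj i j (by rw [h]))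
    omega
  intro i hi j hj h
  simp only [Finset.coe_range, Set.mem_Iio] at hi hj
  simp only [Sym2.eq_iff] at h
  rcases h with ⟨h, -⟩ | ⟨h, -⟩
  · exact le_antisymm (aux i j hi hj h) (aux j i hj hi h.symm)
  · exact absurd h.symm (hx.ne _ _)

/-- A cycle of length `k` has `2k` rootings and orientations, with different root prevertices. -/
lemma exists_reps {r k : ℕ} {m : Pairing n d} (α : Cyc r k m) :
    ∃ R : ZMod k × Bool → ℤ → Fin n × Fin d, (∀ u, IsCyc m k (R u)) ∧
      (∀ u i, ∃ e ∈ α.1.1, R u i ∈ e ∧ m.1 (R u i) ∈ e) ∧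
      Function.Injective fun u => R u 0 := by
  obtain ⟨α, hα, hcard⟩ := α
  obtain ⟨k', hk', hkr', hS⟩ := α.2
  obtain ⟨x, hx, hxr⟩ := exists_isCyc hS hα
  have hkk : k' = k := by rw [← hcard, hx.card_eq hk' hxr]
  subst hkk
  have hmem : ∀ i, s(x i, m.1 (x i)) ∈ α.1 := by
    intro i
    rw [← Finset.mem_coe, hxr]
    exact ⟨i, rfl⟩
  refine ⟨fun u i => if u.2 then m.1 (x (-(i + (u.1.cast : ℤ)))) else x (i + (u.1.cast : ℤ)),
    ?_, ?_, ?_⟩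
  · rintro ⟨c, s⟩
    cases s
    · simpa using hx.shift (c.cast : ℤ)
    · simpa using hx.rev.shift (c.cast : ℤ)
  · rintro ⟨c, s⟩ i
    cases s
    · exact ⟨_, hmem (i + (c.cast : ℤ)), by simp, by simp⟩
    · exact ⟨_, hmem (-(i + (c.cast : ℤ))), by simp, by simp [m.2.1]⟩
  · have key : ∀ c c' : ZMod k', (k' : ℤ) ∣ (c.cast : ℤ) - c'.cast → c = c' := by
      intro c c' h
      have := (ZMod.intCast_eq_intCast_iff_dvd_sub _ _ k').2 h
      simpa using this.symm
    rintro ⟨c, s⟩ ⟨c', s'⟩ h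
    cases s <;> cases s' <;> simp only [Bool.false_eq_true, if_false, if_true] at h
    · rw [key c c' (by simpa using hx.inj _ _ (congrArg Prod.fst h))]
    · exact absurd h.symm (hx.ne _ _)
    · exact absurd h (hx.ne _ _)
    · rw [key c' c (by
        have := hx.inj _ _ (congrArg Prod.fst (minj m h))
        convert this using 1
        omega)]

lemma IsCyc.cast_succ {m : Pairing n d} {k : ℕ} {x : ℤ → Fin n × Fin d} (hx : IsCyc m k x)
    (c : ZMod k) : x ((c + 1).cast : ℤ) = x ((c.cast : ℤ) + 1) := by
  apply hx.of_dvd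
  rw [← ZMod.intCast_eq_intCast_iff_dvd_sub]
  simp

/-- If the cycles of `m` are disjoint, each sequence of `j` distinct `k`-cycles is realized by
`(2k)^j` elements of the pattern. -/
lemma count_cycPat {r k : ℕ} [NeZero k] (j : ℕ) {m : Pairing n d} (hm : NoShare r m) :
    (2 * k) ^ j * (Nat.card (Cyc r k m)).descFactorial j ≤
      (Finset.univ.filter fun x : Fin j × ZMod k → Fin n × Fin d =>
        (x, m.1 ∘ x) ∈ cycPat n d j k).card := by
  have hdisj : ∀ α β : Cyc r k m, ∀ e ∈ α.1.1, ∀ e' ∈ β.1.1, ∀ a ∈ e, a ∈ e' → α = β := by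
    intro α β e he e' he' a ha ha'
    by_contra hne
    exact hm α.1 β.1 (fun h => hne (Subtype.ext h)) α.2.1 β.2.1 e he e' he' a ha a ha' rfl
  choose R hR1 hR2 hR3 using fun α : Cyc r k m => exists_reps α
  have hfin : Finite (Cyc r k m) := Subtype.finite
  let _ : Fintype (Cyc r k m) := Fintype.ofFinite _
  have hdom : Fintype.card ((Fin j → ZMod k × Bool) × (Fin j ↪ Cyc r k m)) =
      (2 * k) ^ j * (Nat.card (Cyc r k m)).descFactorial j := by
    rw [Fintype.card_prod, Fintype.card_embedding_eq, Fintype.card_fun, Fintype.card_prod,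
      ZMod.card, Fintype.card_bool, Fintype.card_fin, Nat.card_eq_fintype_card, mul_comm k 2]
  rw [← hdom, ← Finset.card_univ]
  refine Finset.card_le_card_of_injOn
    (fun p => fun i => R (p.2 i.1) (p.1 i.1) (i.2.cast : ℤ)) ?_ ?_
  · rintro ⟨u, f⟩ -
    simp only [Finset.coe_filter, Finset.mem_univ, true_and, Set.mem_ofPred_eq, cycPat,
      Finset.mem_filter, Function.comp_apply]
    have hsame : ∀ i i' : Fin j × ZMod k, ∀ a, (a = R (f i.1) (u i.1) (i.2.cast : ℤ) ∨
        a = m.1 (R (f i.1) (u i.1) (i.2.cast : ℤ))) →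
        (a = R (f i'.1) (u i'.1) (i'.2.cast : ℤ) ∨
        a = m.1 (R (f i'.1) (u i'.1) (i'.2.cast : ℤ))) → i.1 = i'.1 := by
      intro i i' a ha ha'
      obtain ⟨e, he, he1, he2⟩ := hR2 (f i.1) (u i.1) (i.2.cast : ℤ)
      obtain ⟨e', he', he1', he2'⟩ := hR2 (f i'.1) (u i'.1) (i'.2.cast : ℤ)
      apply f.injective
      refine hdisj _ _ e he e' he' a ?_ ?_
      · rcases ha with rfl | rfl <;> assumption
      · rcases ha' with rfl | rfl <;> assumption
    have hinj : ∀ i i' : Fin j × ZMod k, R (f i.1) (u i.1) (i.2.cast : ℤ) =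
        R (f i'.1) (u i'.1) (i'.2.cast : ℤ) → i = i' := by
      intro i i' h
      have h1 := hsame i i' _ (Or.inl rfl) (Or.inl h)
      rw [← h1] at h
      have h2 := (hR1 (f i.1) (u i.1)).inj _ _ (congrArg Prod.fst h)
      have h3 := (ZMod.intCast_eq_intCast_iff_dvd_sub _ _ k).2 h2
      exact Prod.ext h1 (by simpa using h3.symm)
    have hne : ∀ i i' : Fin j × ZMod k, m.1 (R (f i.1) (u i.1) (i.2.cast : ℤ)) ≠
        R (f i'.1) (u i'.1) (i'.2.cast : ℤ) := by
      intro i i' h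
      have h1 := hsame i i' _ (Or.inr rfl) (Or.inl h)
      rw [← h1] at h
      exact (hR1 (f i.1) (u i.1)).ne _ _ h
    refine ⟨?_, ?_⟩
    · rintro (i | i) (i' | i') h
      · exact congrArg _ (hinj _ _ h)
      · exact absurd h.symm (hne _ _)
      · exact absurd h (hne _ _)
      · exact congrArg _ (hinj _ _ (minj m h))
    · intro i
      have := hR1 (f i.1) (u i.1)
      rw [this.cast_succ]
      exact ⟨this.bin _, this.nb _⟩
  · rintro ⟨u, f⟩ - ⟨u', f'⟩ - h
    have h0 : ∀ a, R (f a) (u a) 0 = R (f' a) (u' a) 0 := by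
      intro a
      have := congrFun h (a, 0)
      simpa using this
    have hf : f = f' := by
      ext1 a
      obtain ⟨e, he, he1, -⟩ := hR2 (f a) (u a) 0
      obtain ⟨e', he', he1', -⟩ := hR2 (f' a) (u' a) 0
      exact hdisj _ _ e he e' he' _ he1 (by rw [h0]; exact he1')
    subst hf
    have hu : u = u' := by
      funext a
      exact hR3 (f a) (h0 a)
    rw [hu]

/-- Markov's inequality for the `j`-th factorial moment of the number of `k`-cycles, counted with
their `2k` rootings and orientations. -/
lemma prob_many {r k j Q : ℕ} [NeZero k] (hd : 1 ≤ d) (hn : 1 ≤ n)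
    (hN : 4 * (j * k) ^ 2 ≤ n * d) :
    pmdProb n d {m | NoShare r m ∧ Q ≤ Nat.card (Cyc r k m)} *
      ((2 * k * (Q - j : ℕ) : ℕ) : ℝ) ^ j ≤ 2 * (((d : ℝ) - 1) ^ k) ^ j := by
  have hA : ∀ m : Pairing n d, m ∈ {m | NoShare r m ∧ Q ≤ Nat.card (Cyc r k m)} →
      (2 * k * (Q - j)) ^ j ≤ (Finset.univ.filter fun x : Fin j × ZMod k → Fin n × Fin d =>
        (x, m.1 ∘ x) ∈ cycPat n d j k).card := by
    intro m hm
    obtain ⟨h1, h2⟩ : NoShare r m ∧ Q ≤ Nat.card (Cyc r k m) := hm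
    generalize hc : Nat.card (Cyc r k m) = c at h2
    have h3 := count_cycPat (k := k) j h1
    rw [hc] at h3
    refine le_trans ?_ h3
    rw [mul_pow]
    exact Nat.mul_le_mul_left _ (le_trans (Nat.pow_le_pow_left (by omega) j)
      (Nat.pow_sub_le_descFactorial c j))
  have hT : ∀ t ∈ cycPat n d j k, Function.Injective (Sum.elim t.1 t.2) := by
    intro t ht
    simp only [cycPat, Finset.mem_filter] at ht
    exact ht.2.1
  have hι : Fintype.card (Fin j × ZMod k) = j * k := by
    rw [Fintype.card_prod, Fintype.card_fin, ZMod.card]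
  have hm := prob_markov (cycPat n d j k) hT
    {m | NoShare r m ∧ Q ≤ Nat.card (Cyc r k m)} ((2 * k * (Q - j)) ^ j)
    (fun m hm => (hA m hm).trans_eq (by congr!)) (by rw [hι]; exact hN) (Nat.mul_pos hn hd)
  have hc := card_cycPat n d j k
  have hc' : ((cycPat n d j k).card : ℝ) ≤ (n * (d * ((d : ℝ) - 1))) ^ (j * k) := by
    have : ((d * d - d : ℕ) : ℝ) = (d : ℝ) * (d - 1) := by
      rw [Nat.cast_sub (Nat.le_mul_self d)]; push_cast; ring
    rw [← this]
    exact_mod_cast hc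
  have hn' : (0 : ℝ) < n := by exact_mod_cast hn
  have hd' : (0 : ℝ) < d := by exact_mod_cast hd
  have hpos : (0 : ℝ) < ((n : ℝ) * d) ^ (j * k) := by positivity
  rw [← mul_le_mul_iff_left₀ hpos]
  rw [hι, Nat.cast_pow] at hm
  refine hm.trans ?_
  calc 2 * ((cycPat n d j k).card : ℝ) ≤ 2 * (n * (d * ((d : ℝ) - 1))) ^ (j * k) := by gcongr
    _ = _ := by rw [← mul_assoc, mul_pow, mul_comm j k, pow_mul ((d : ℝ) - 1)]; ring


/-! ### Non-neat pairings -/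

/-- A pairing with disjoint short cycles that is not neat has, for some `k`, too many `k`-cycles:
the terms of the count of prevertices are compared with the geometric series
`∑ (d - 1) ^ k ≤ 2 (d - 1) ^ r`. -/
lemma exists_many {r : ℕ} (hd : 3 ≤ d) {ℓ : ℝ} (hℓ : 0 ≤ ℓ) {m : Pairing n d}
    (hm : NoShare r m) (hneat : ¬ LNeat n d r ℓ (cycProc n d r m)) :
    ∃ k, 1 ≤ k ∧ k ≤ r ∧
      ℓ * ((d : ℝ) - 1) ^ k / 2 < 2 * k * (Nat.card (Cyc r k m) : ℝ) := by
  by_contra! hcon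
  apply hneat
  have hone : ∀ α : CycIdx n d r, cycProc n d r m α = 1 → Contains n d m α.1 := by
    intro α h
    by_contra h'
    simp [cycProc, h'] at h
  refine ⟨fun α β hne h1 h2 => hm α β hne (hone α h1) (hone β h2), ?_⟩
  have hsum : (∑ α : CycIdx n d r, 2 * α.1.card * cycProc n d r m α) =
      ∑ k ∈ Finset.Icc 1 r, 2 * k * Nat.card (Cyc r k m) := by
    have h1 : (∑ α : CycIdx n d r, 2 * α.1.card * cycProc n d r m α) =
        ∑ α ∈ Finset.univ.filter (fun α : CycIdx n d r => Contains n d m α.1),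
          2 * α.1.card := by
      rw [Finset.sum_filter]
      refine Finset.sum_congr rfl fun α _ => ?_
      unfold cycProc
      split_ifs <;> simp
    rw [h1, ← Finset.sum_fiberwise_of_maps_to (t := Finset.Icc 1 r)
      (g := fun α : CycIdx n d r => α.1.card)]
    · refine Finset.sum_congr rfl fun k _ => ?_
      rw [Finset.filter_filter, Finset.sum_congr rfl (g := fun _ => 2 * k), Finset.sum_const,
        smul_eq_mul, mul_comm, Nat.card_eq_fintype_card, Fintype.card_subtype]
      · intro α hα
        rw [Finset.mem_filter] at hα
        rw [hα.2.2]
    · intro α hα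
      rw [Finset.mem_filter] at hα
      obtain ⟨k, hk, hkr, hS⟩ := α.2
      obtain ⟨x, hx, hxr⟩ := exists_isCyc hS hα.2
      rw [hx.card_eq hk hxr]
      exact Finset.mem_Icc.2 ⟨hk, hkr⟩
  have hd' : (3 : ℝ) ≤ d := by exact_mod_cast hd
  have hq : (2 : ℝ) ≤ (d : ℝ) - 1 := by linarith
  generalize (d : ℝ) - 1 = q at hcon hq ⊢
  have hgeom : ∀ s : ℕ, ∑ k ∈ Finset.Icc 1 s, q ^ k ≤ 2 * q ^ s := by
    intro s
    induction s with
    | zero => simp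
    | succ s ih =>
      rw [Finset.sum_Icc_succ_top (by omega), pow_succ]
      have : 0 ≤ q ^ s := by positivity
      nlinarith
  rw [hsum]
  push_cast
  calc ∑ k ∈ Finset.Icc 1 r, 2 * (k : ℝ) * (Nat.card (Cyc r k m) : ℝ)
      ≤ ∑ k ∈ Finset.Icc 1 r, ℓ / 2 * q ^ k := by
        refine Finset.sum_le_sum fun k hk => ?_
        rw [Finset.mem_Icc] at hk
        have := hcon k hk.1 hk.2
        linarith
    _ = ℓ / 2 * ∑ k ∈ Finset.Icc 1 r, q ^ k := by rw [Finset.mul_sum]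
    _ ≤ ℓ / 2 * (2 * q ^ r) := by gcongr; exact hgeom r
    _ = ℓ * q ^ r := by ring

/-- The moment bound for `k`-cycles, with the number `j ≈ log n / 8` of cycles chosen so that
`(log n / 4) ^ j` exceeds a constant times `n`. -/
lemma prob_many_log {r k : ℕ} (hd : 3 ≤ d) (hn : 1 ≤ n) (hk : 1 ≤ k) (hkr : k ≤ r)
    (hr : (r : ℝ) ≤ Real.log n) (hbig : 4 * Real.exp 8 ≤ Real.log n)
    (h4 : Real.log n ^ 4 ≤ 16 * n) :
    pmdProb n d {m | NoShare r m ∧ Real.log n * ((d : ℝ) - 1) ^ k / 2 <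
      2 * k * (Nat.card (Cyc r k m) : ℝ)} ≤ 2 * Real.exp 8 / n := by
  have : NeZero k := ⟨by omega⟩
  have hn' : (1 : ℝ) ≤ n := by exact_mod_cast hn
  have hd' : (3 : ℝ) ≤ d := by exact_mod_cast hd
  have hk' : (1 : ℝ) ≤ k := by exact_mod_cast hk
  have hkr' : (k : ℝ) ≤ r := by exact_mod_cast hkr
  have hexp : Real.exp (Real.log n) = n := Real.exp_log (by linarith)
  have he0 := Real.exp_pos 8
  generalize Real.log n = ℓ at hr hbig h4 hexp ⊢
  have hℓ : 0 < ℓ := by linarith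
  set Q : ℕ := ⌈ℓ * ((d : ℝ) - 1) ^ k / (4 * k)⌉₊ with hQ
  set j : ℕ := ⌊ℓ / 8⌋₊ with hj
  have hj1 : (j : ℝ) ≤ ℓ / 8 := Nat.floor_le (by linarith)
  have hj2 : ℓ / 8 < j + 1 := Nat.lt_floor_add_one _
  have hN : 4 * (j * k) ^ 2 ≤ n * d := by
    have h1 : (j : ℝ) * k ≤ ℓ / 8 * ℓ := by
      apply mul_le_mul hj1 (hkr'.trans hr) (by positivity) (by positivity)
    have h2 : ((j : ℝ) * k) ^ 2 ≤ (ℓ / 8 * ℓ) ^ 2 := by gcongr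
    have h3 : 4 * ((j : ℝ) * k) ^ 2 ≤ n * d := by nlinarith
    exact_mod_cast h3
  refine (prob_mono (B := {m | NoShare r m ∧ Q ≤ Nat.card (Cyc r k m)}) ?_).trans ?_
  · rintro m ⟨h1, h2⟩
    refine ⟨h1, Nat.ceil_le.2 ?_⟩
    rw [div_le_iff₀ (by positivity)]
    linarith
  have hP := prob_many (r := r) (Q := Q) (by omega) hn hN
  set P := pmdProb n d {m | NoShare r m ∧ Q ≤ Nat.card (Cyc r k m)} with hPdef
  have hP0 : 0 ≤ P := prob_nonneg _
  have hQ1 : ℓ * ((d : ℝ) - 1) ^ k / (4 * k) ≤ Q := Nat.le_ceil _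
  have hq : (2 : ℝ) ≤ (d : ℝ) - 1 := by linarith
  generalize (d : ℝ) - 1 = q at hP hQ1 hq
  rw [div_le_iff₀ (by positivity)] at hQ1
  have hkq : 2 * (k : ℝ) ≤ q ^ k := by
    have h1 : 2 * k ≤ 2 ^ k := by
      obtain ⟨i, rfl⟩ : ∃ i, k = i + 1 := ⟨k - 1, by omega⟩
      have := Nat.lt_two_pow_self (n := i)
      rw [pow_succ]
      omega
    have h2 : 2 * (k : ℝ) ≤ 2 ^ k := by exact_mod_cast h1
    exact h2.trans (by gcongr)
  have hsub : (Q : ℝ) ≤ ((Q - j : ℕ) : ℝ) + j := by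
    exact_mod_cast (by omega : Q ≤ (Q - j) + j)
  have hlow : ℓ / 4 * q ^ k ≤ ((2 * k * (Q - j) : ℕ) : ℝ) := by
    push_cast only [Nat.cast_mul, Nat.cast_ofNat]
    have h1 : 2 * (k : ℝ) * Q ≤ 2 * k * (((Q - j : ℕ) : ℝ) + j) := by gcongr
    have h2 : 2 * (k : ℝ) * j ≤ q ^ k * (ℓ / 8) := by gcongr
    have h3 : 0 < q ^ k * ℓ := by positivity
    nlinarith
  have hqk : 0 < (q ^ k) ^ j := by positivity
  have hP2 : P * (ℓ / 4) ^ j ≤ 2 := by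
    have h1 : P * (ℓ / 4 * q ^ k) ^ j ≤ 2 * (q ^ k) ^ j := le_trans (by gcongr) hP
    rw [mul_pow, ← mul_assoc] at h1
    exact le_of_mul_le_mul_right h1 hqk
  have hpow : (n : ℝ) / Real.exp 8 ≤ (ℓ / 4) ^ j := by
    calc (n : ℝ) / Real.exp 8 = Real.exp (ℓ - 8) := by rw [Real.exp_sub, hexp]
      _ ≤ Real.exp (j * 8) := by apply Real.exp_le_exp.2; linarith
      _ = Real.exp 8 ^ j := by rw [Real.exp_nat_mul]
      _ ≤ (ℓ / 4) ^ j := by gcongr; linarith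
  rw [le_div_iff₀ (by linarith)]
  have h1 : P * (n / Real.exp 8) ≤ 2 := le_trans (by gcongr) hP2
  rw [mul_div_assoc', div_le_iff₀ he0] at h1
  exact h1

end Neat

/-- **Proposition 3.4.**  There is an absolute constant `C` such that for all `d ≥ 3`
and all `r, n ≥ 1` with `n·d` even, for `P ~ P_{n,d}`,
`P[I_r(P) is not (log n)-neat] ≤ C (d−1)^{2r−1}/n`. -/
theorem pmd_neat_probability :
    ∃ C : ℝ, ∀ n d r : ℕ, 3 ≤ d → 1 ≤ r → 1 ≤ n → Even (n * d) →
      pmdProb n d {m | ¬ LNeat n d r (Real.log n) (cycProc n d r m)} ≤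
        C * ((d : ℝ) - 1) ^ (2 * r - 1) / n := by
  refine ⟨Real.exp (4 * Real.exp 8), fun n d r hd hr hn _ => ?_⟩
  have hn' : (1 : ℝ) ≤ n := by exact_mod_cast hn
  have hd' : (3 : ℝ) ≤ d := by exact_mod_cast hd
  have hr' : (1 : ℝ) ≤ r := by exact_mod_cast hr
  have hq : (2 : ℝ) ≤ (d : ℝ) - 1 := by linarith
  have he9 : 9 ≤ Real.exp 8 := by linarith [Real.add_one_le_exp (8 : ℝ)]
  have hC := Real.add_one_le_exp (4 * Real.exp 8)
  have hC2 : 64 + 2 * Real.exp 8 ≤ Real.exp (4 * Real.exp 8) := by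
    have h1 := Real.quadratic_le_exp_of_nonneg (x := 4 * Real.exp 8) (by positivity)
    nlinarith
  -- for small `n` the bound exceeds `1`
  rcases le_total (n : ℝ) (Real.exp (4 * Real.exp 8) * ((d : ℝ) - 1) ^ (2 * r - 1)) with h | h
  · refine (Neat.prob_le_one _).trans ?_
    rw [le_div_iff₀ (by linarith)]
    linarith
  have h2r : (2 : ℝ) ^ (2 * r - 1) ≤ ((d : ℝ) - 1) ^ (2 * r - 1) := by gcongr
  have hq1 : (1 : ℝ) ≤ ((d : ℝ) - 1) ^ (2 * r - 1) := one_le_pow₀ (by linarith)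
  have h4r : (4 : ℝ) ^ r = 2 * 2 ^ (2 * r - 1) := by
    rw [← pow_succ', show 2 * r - 1 + 1 = 2 * r by omega, pow_mul]
    norm_num
  have hrn : (r : ℝ) ≤ Real.log n := by
    rw [Real.le_log_iff_exp_le (by linarith)]
    calc Real.exp r = Real.exp 1 ^ r := by rw [← Real.exp_nat_mul, mul_one]
      _ ≤ 4 ^ r := by gcongr; linarith [Real.exp_one_lt_d9]
      _ = 2 * 2 ^ (2 * r - 1) := h4r
      _ ≤ Real.exp (4 * Real.exp 8) * ((d : ℝ) - 1) ^ (2 * r - 1) := by gcongr; linarith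
      _ ≤ n := h
  have hbig : 4 * Real.exp 8 ≤ Real.log n := by
    rw [Real.le_log_iff_exp_le (by linarith)]
    exact le_trans (le_mul_of_one_le_right (Real.exp_pos _).le hq1) h
  have h4 : Real.log n ^ 4 ≤ 16 * n := by
    have h5 := Real.pow_div_factorial_le_exp (Real.log n) (by linarith) 5
    rw [Real.exp_log (by linarith), show Nat.factorial 5 = 120 from rfl,
      div_le_iff₀ (by norm_num)] at h5
    have h6 : 0 ≤ Real.log n ^ 4 := by positivity
    push_cast at h5
    nlinarith
  have hN : 16 * r ^ 2 ≤ n * d := by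
    have h1 : (r : ℝ) ^ 2 ≤ Real.log n ^ 2 := by gcongr
    have h2 : (36 : ℝ) ^ 2 ≤ Real.log n ^ 2 := by gcongr; linarith
    have h3 : 16 * (r : ℝ) ^ 2 ≤ n * d := by nlinarith
    exact_mod_cast h3
  have hsub : {m : Pairing n d | ¬ LNeat n d r (Real.log n) (cycProc n d r m)} ⊆
      {m | ∃ k p b, 1 ≤ p ∧ p < k ∧ k ≤ r ∧ 1 ≤ b ∧ min p (k - p) + b ≤ r ∧
        Neat.Theta m k p b} ∪
      ⋃ k ∈ Finset.Icc 1 r, {m | Neat.NoShare r m ∧ Real.log n * ((d : ℝ) - 1) ^ k / 2 <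
        2 * k * (Nat.card (Neat.Cyc r k m) : ℝ)} := by
    intro m hm
    by_cases hs : Neat.NoShare r m
    · right
      obtain ⟨k, hk, hkr, hc⟩ := Neat.exists_many hd (by linarith) hs hm
      simp only [Set.mem_iUnion]
      exact ⟨k, Finset.mem_Icc.2 ⟨hk, hkr⟩, hs, hc⟩
    · left
      unfold Neat.NoShare at hs
      push Not at hs
      obtain ⟨α, β, hne, hα, hβ, e, he, e', he', a, ha, b, hb, rfl⟩ := hs
      exact Neat.exists_theta_of_share α β hne hα hβ he he' ha hb
  have hrq : (r : ℝ) ≤ ((d : ℝ) - 1) ^ (2 * r - 1) := by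
    have h1 : r ≤ 2 ^ (2 * r - 1) :=
      (Nat.lt_two_pow_self (n := r)).le.trans (Nat.pow_le_pow_right (by norm_num) (by omega))
    have h2 : (r : ℝ) ≤ 2 ^ (2 * r - 1) := by exact_mod_cast h1
    exact h2.trans h2r
  calc _ ≤ _ := (Neat.prob_mono hsub).trans (Neat.prob_union _ _)
    _ ≤ 64 * ((d : ℝ) - 1) ^ (2 * r - 1) / n + ∑ k ∈ Finset.Icc 1 r, 2 * Real.exp 8 / n := by
        refine add_le_add (Neat.prob_overlap hd hn hN) ((Neat.prob_biUnion _ _).trans ?_)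
        refine Finset.sum_le_sum fun k hk => ?_
        rw [Finset.mem_Icc] at hk
        exact Neat.prob_many_log hd hn hk.1 hk.2 hrn hbig h4
    _ = (64 * ((d : ℝ) - 1) ^ (2 * r - 1) + 2 * Real.exp 8 * r) / n := by
        rw [Finset.sum_const, Nat.card_Icc, nsmul_eq_mul, Nat.add_sub_cancel]
        ring
    _ ≤ _ := by
        refine div_le_div_of_nonneg_right ?_ (by linarith)
        nlinarith
end

section
/- For all integers d ≥ 3 and n ≥ 2 and all t ≥ 0, φ[ |V_n − (d−2)n/d| ≥ t ] ≤ 8·exp(−t²/(2n·c_d)), where c_d = √3/18 if d = 3, c_d = 2√3/27 if d = 4, and c_d = √(2(d−3))/(8√(d−2)) if d ≥ 5. -/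
/-!
The weight of a coloring, times `x` to the number of red edges, is a product over the vertices
of entries of a `2 × 2` transfer matrix, so its sum over all colorings is the trace of the `n`-th
power of that matrix, i.e. the sum of the `n`-th powers of its eigenvalues (`sum_phiWt_mul_pow`).
At `x = 1` the eigenvalues are `d - 1` and `-1`; at `x = exp l` they have sum
`1 + (d - 3) exp l` and product `-(d - 1) exp l`, and the larger one, which dominates in modulus,
is `exp (LFn d l)` with `LFn d l = l / 2 + log √(d - 1) + arsinh w` and
`w = (exp (-l / 2) + (d - 3) exp (l / 2)) / (2 √(d - 1))`.

With `k = (d - 3) / (d - 1)`, the quantity `w ^ 2 - 4 w' ^ 2` is constantly `k`, which yields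
`LFn'' = (1 + k) w / (4 (1 + w ^ 2) ^ (3 / 2))`. Maximizing over `w ^ 2 ≥ k` gives exactly
`cConst d`: the maximum is at `w ^ 2 = 1 / 2` when `k ≤ 1 / 2`, and at `w ^ 2 = k` otherwise
(`cConst_key`). As `LFn d` has value `log (d - 1)` and slope `(d - 2) / d` at `0`, Taylor's
formula bounds the centered moment generating function by `4 exp (n c l ^ 2 / 2)`, and Chernoff's
inequality with `l = t / (n c)`, applied to both tails, finishes the proof.
-/

/-!
Edge 2-colorings of a cycle with `n` vertices: vertices and edges are both indexed by
`ZMod n`, edge `i` joining vertex `i` to vertex `i + 1`, so that vertex `i` is incident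
to edges `i - 1` and `i`.  A coloring is `f : ZMod n → Bool`, with `true = R` and
`false = B`; the paper's coordinates `f(1), …, f(n)` correspond to `f 1, …, f n = f 0`.
-/

/-- `r₂(f)`: the number of vertices both of whose incident edges are colored `R`. -/
def r2Count (n : ℕ) [NeZero n] (f : ZMod n → Bool) : ℕ :=
  (Finset.univ.filter fun i : ZMod n => f (i - 1) = true ∧ f i = true).card

/-- `b₂(f)`: the number of vertices both of whose incident edges are colored `B`. -/
def b2Count (n : ℕ) [NeZero n] (f : ZMod n → Bool) : ℕ :=
  (Finset.univ.filter fun i : ZMod n => f (i - 1) = false ∧ f i = false).card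

/-- The (unnormalized) weight of a coloring under the measure `φ`:
`(√(2(d−2)))^{n−b₂−r₂} (d−3)^{r₂}`. -/
noncomputable def phiWt (d n : ℕ) [NeZero n] (f : ZMod n → Bool) : ℝ :=
  Real.sqrt (2 * ((d : ℝ) - 2)) ^ (n - b2Count n f - r2Count n f) *
    ((d : ℝ) - 3) ^ r2Count n f

/-- The probability of an event under the measure `φ` on `{R,B}^n`. -/
noncomputable def phiProb (d n : ℕ) [NeZero n] (A : Set (ZMod n → Bool)) : ℝ :=
  (∑ f : ZMod n → Bool, A.indicator (phiWt d n) f) / ∑ f : ZMod n → Bool, phiWt d n f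

/-- The expectation of `g` under the measure `φ` on `{R,B}^n`. -/
noncomputable def phiExp (d n : ℕ) [NeZero n] (g : (ZMod n → Bool) → ℝ) : ℝ :=
  (∑ f : ZMod n → Bool, phiWt d n f * g f) / ∑ f : ZMod n → Bool, phiWt d n f

/-- `V_n(f)`: the number of edges colored `R`. -/
def vCount (n : ℕ) [NeZero n] (f : ZMod n → Bool) : ℕ :=
  (Finset.univ.filter fun i : ZMod n => f i = true).card

/-- `Z_n = √(d³/(2n(d−2)²)) (V_n − n(d−2)/d)`. -/
noncomputable def zStat (d n : ℕ) [NeZero n] (f : ZMod n → Bool) : ℝ :=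
  Real.sqrt ((d : ℝ) ^ 3 / (2 * n * ((d : ℝ) - 2) ^ 2)) *
    ((vCount n f : ℝ) - n * ((d : ℝ) - 2) / d)

/-- The constant `c_d` of Lemma 4.2. -/
noncomputable def cConst (d : ℕ) : ℝ :=
  if d = 3 then Real.sqrt 3 / 18
  else if d = 4 then 2 * Real.sqrt 3 / 27
  else Real.sqrt (2 * ((d : ℝ) - 3)) / (8 * Real.sqrt ((d : ℝ) - 2))

/-! ### The transfer matrix -/

open Finset in
/-- Summing path weights over all paths with `m` steps, against a test function `F` of
(last state, first state), produces the entries of `M ^ m`. -/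
lemma sum_paths (M : Matrix Bool Bool ℝ) (m : ℕ) : ∀ F : Bool → Bool → ℝ,
    ∑ f : Fin (m + 1) → Bool, (∏ i : Fin m, M (f i.castSucc) (f i.succ)) *
      F (f (Fin.last m)) (f 0) = ∑ a, ∑ b, (M ^ m) a b * F b a := by
  induction m with
  | zero =>
    intro F
    rw [← (Equiv.funUnique (Fin 1) Bool).symm.sum_comp]
    simp [Matrix.one_apply]
  | succ m ih =>
    intro F
    rw [← (Fin.consEquiv fun _ : Fin (m + 2) => Bool).sum_comp, Fintype.sum_prod_type]
    refine Finset.sum_congr rfl fun a _ => ?_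
    have h := ih (fun y x => M a x * F y a)
    calc _ = ∑ f : Fin (m + 1) → Bool, (∏ i : Fin m, M (f i.castSucc) (f i.succ)) *
            (M a (f 0) * F (f (Fin.last m)) a) := by
          refine Finset.sum_congr rfl fun g _ => ?_
          simp only [Fin.consEquiv_apply]
          rw [Fin.prod_univ_succ]
          simp only [Fin.castSucc_zero, Fin.cons_zero, Fin.cons_succ, ← Fin.succ_castSucc,
            ← Fin.succ_last]
          ring
      _ = _ := by
          rw [h]
          simp only [pow_succ' M m, Matrix.mul_apply, Finset.sum_mul]
          rw [Finset.sum_comm]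
          exact Finset.sum_congr rfl fun _ _ => Finset.sum_congr rfl fun _ _ => by ring

/-- The partition function of a nearest-neighbour model on a cycle is a trace. -/
lemma sum_cycle (M : Matrix Bool Bool ℝ) (n : ℕ) [NeZero n] :
    ∑ f : ZMod n → Bool, ∏ i : ZMod n, M (f (i - 1)) (f i) = (M ^ n).trace := by
  obtain ⟨m, rfl⟩ := Nat.exists_eq_succ_of_ne_zero (NeZero.ne n)
  have key : ∀ f : Fin (m + 1) → Bool, ∏ i : Fin (m + 1), M (f (i - 1)) (f i) =
      (∏ i : Fin m, M (f i.castSucc) (f i.succ)) * M (f (Fin.last m)) (f 0) := by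
    intro f
    rw [Fin.prod_univ_succ, mul_comm]
    congr 1
    · refine Finset.prod_congr rfl fun i _ => ?_
      rw [show i.succ - 1 = i.castSucc by rw [← Fin.coeSucc_eq_succ, add_sub_cancel_right]]
    · rw [show (0 : Fin (m + 1)) - 1 = Fin.last m by
        rw [sub_eq_iff_eq_add]; simp]
  have h := sum_paths M m (fun b a => M b a)
  calc _ = ∑ f : Fin (m + 1) → Bool, (∏ i : Fin m, M (f i.castSucc) (f i.succ)) *
            M (f (Fin.last m)) (f 0) := Finset.sum_congr rfl fun f _ => key f
    _ = _ := by
      rw [h, Nat.succ_eq_add_one, pow_succ, Matrix.trace]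
      simp [Matrix.mul_apply]

lemma trace_pow_two (M : Matrix Bool Bool ℝ) (p q : ℝ)
    (hs : M true true + M false false = p + q)
    (hp : M true true * M false false - M true false * M false true = p * q) (n : ℕ) :
    (M ^ n).trace = p ^ n + q ^ n := by
  -- Cayley–Hamilton makes the traces satisfy the recurrence of the power sums of `p`, `q`.
  have hM : M ^ 2 = (p + q) • M - (p * q) • (1 : Matrix Bool Bool ℝ) := by
    rw [← hs, ← hp]
    ext a b
    cases a <;> cases b <;> simp [pow_two, Matrix.mul_apply] <;> ring
  induction n using Nat.twoStepInduction with
  | zero => norm_num [Matrix.trace]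
  | one => simpa [Matrix.trace] using hs
  | more n h0 h1 =>
    rw [pow_add, hM, mul_sub, Matrix.mul_smul, Matrix.mul_smul, mul_one, ← pow_succ,
      Matrix.trace_sub, Matrix.trace_smul, Matrix.trace_smul, h0, h1]
    simp only [smul_eq_mul]
    ring

/-- The transfer matrix of `φ`, tilted by a factor `x` for each red edge. -/
noncomputable def tMat (d : ℕ) (x : ℝ) : Matrix Bool Bool ℝ := fun a b =>
  (if a = true ∧ b = true then (d : ℝ) - 3 else 1) *
    (if a ≠ b then Real.sqrt (2 * ((d : ℝ) - 2)) else 1) * (if b = true then x else 1)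

lemma phiWt_mul_pow (d n : ℕ) [NeZero n] (x : ℝ) (f : ZMod n → Bool) :
    phiWt d n f * x ^ vCount n f = ∏ i : ZMod n, tMat d x (f (i - 1)) (f i) := by
  have hcount : (Finset.univ.filter fun i : ZMod n => f (i - 1) ≠ f i).card =
      n - b2Count n f - r2Count n f := by
    have h1 := Finset.card_filter_add_card_filter_not (s := (Finset.univ : Finset (ZMod n)))
      (fun i => f (i - 1) ≠ f i)
    have h2 := Finset.card_filter_add_card_filter_not
      (s := (Finset.univ.filter fun i : ZMod n => ¬ f (i - 1) ≠ f i)) (fun i => f i = true)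
    rw [Finset.filter_filter, Finset.filter_filter] at h2
    have e1 : (Finset.univ.filter fun i : ZMod n => ¬ f (i - 1) ≠ f i ∧ f i = true) =
        Finset.univ.filter fun i : ZMod n => f (i - 1) = true ∧ f i = true := by
      ext i; cases h : f (i - 1) <;> cases h' : f i <;> simp [h, h']
    have e2 : (Finset.univ.filter fun i : ZMod n => ¬ f (i - 1) ≠ f i ∧ ¬ f i = true) =
        Finset.univ.filter fun i : ZMod n => f (i - 1) = false ∧ f i = false := by
      ext i; cases h : f (i - 1) <;> cases h' : f i <;> simp [h, h']
    rw [e1, e2] at h2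
    rw [Finset.card_univ, ZMod.card] at h1
    unfold b2Count r2Count
    omega
  simp only [tMat, Finset.prod_mul_distrib, Finset.prod_ite, Finset.prod_const, one_pow, mul_one]
  rw [hcount]
  unfold phiWt r2Count vCount
  ring

/-! ### The logarithm of the top eigenvalue -/

/-- Half the trace of the tilted transfer matrix at `x = exp l`, divided by the square root of
minus its determinant; `D` stands for `d`. -/
noncomputable def wFn (D l : ℝ) : ℝ :=
  (Real.exp (-l / 2) + (D - 3) * Real.exp (l / 2)) / (2 * Real.sqrt (D - 1))

/-- The derivative of `wFn D`. -/
noncomputable def wFn' (D l : ℝ) : ℝ :=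
  (-Real.exp (-l / 2) + (D - 3) * Real.exp (l / 2)) / (4 * Real.sqrt (D - 1))

/-- The logarithm of the top eigenvalue of the tilted transfer matrix. -/
noncomputable def LFn (D l : ℝ) : ℝ :=
  l / 2 + Real.log (Real.sqrt (D - 1)) + Real.arsinh (wFn D l)

lemma wFn_pos {D : ℝ} (hD : 3 ≤ D) (l : ℝ) : 0 < wFn D l := by
  have : 0 < Real.sqrt (D - 1) := Real.sqrt_pos.2 (by linarith)
  have h2 : 0 ≤ (D - 3) * Real.exp (l / 2) := mul_nonneg (by linarith) (Real.exp_pos _).le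
  unfold wFn
  positivity

lemma hasDerivAt_expHalf (l : ℝ) :
    HasDerivAt (fun l : ℝ => Real.exp (l / 2)) (Real.exp (l / 2) / 2) l := by
  have := ((hasDerivAt_id l).div_const 2).exp
  simpa [div_eq_mul_inv] using this

lemma hasDerivAt_expNegHalf (l : ℝ) :
    HasDerivAt (fun l : ℝ => Real.exp (-l / 2)) (-Real.exp (-l / 2) / 2) l := by
  have := ((hasDerivAt_id l).neg.div_const 2).exp
  refine this.congr_deriv ?_
  simp only [Pi.neg_apply, id]
  ring

lemma hasDerivAt_wFn (D l : ℝ) : HasDerivAt (wFn D) (wFn' D l) l := by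
  have := ((hasDerivAt_expNegHalf l).add ((hasDerivAt_expHalf l).const_mul (D - 3))).div_const
    (2 * Real.sqrt (D - 1))
  refine this.congr_deriv ?_
  unfold wFn'
  ring

lemma hasDerivAt_wFn' (D l : ℝ) : HasDerivAt (wFn' D) (wFn D l / 4) l := by
  have := ((hasDerivAt_expNegHalf l).neg.add
    ((hasDerivAt_expHalf l).const_mul (D - 3))).div_const (4 * Real.sqrt (D - 1))
  refine this.congr_deriv ?_
  unfold wFn
  ring

lemma wFn_sq_sub {D : ℝ} (hD : 3 ≤ D) (l : ℝ) :
    wFn D l ^ 2 - 4 * wFn' D l ^ 2 = (D - 3) / (D - 1) := by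
  have h1 : Real.exp (-l / 2) * Real.exp (l / 2) = 1 := by
    rw [← Real.exp_add, show -l / 2 + l / 2 = 0 by ring, Real.exp_zero]
  unfold wFn wFn'
  generalize Real.exp (-l / 2) = u at *
  generalize Real.exp (l / 2) = v at *
  have h2 : Real.sqrt (D - 1) ^ 2 = D - 1 := Real.sq_sqrt (by linarith)
  have h3 : D - 1 ≠ 0 := by linarith
  rw [div_pow, div_pow, mul_pow, mul_pow, h2]
  field_simp
  linear_combination (16 * (D - 3)) * h1

lemma hasDerivAt_LFn (D l : ℝ) :
    HasDerivAt (LFn D) (1 / 2 + wFn' D l / Real.sqrt (1 + wFn D l ^ 2)) l := by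
  have := (((hasDerivAt_id l).div_const 2).add_const (Real.log (Real.sqrt (D - 1)))).add
    (hasDerivAt_wFn D l).arsinh
  refine this.congr_deriv ?_
  simp [div_eq_inv_mul]

lemma hasDerivAt_LFn' {D : ℝ} (hD : 3 ≤ D) (l : ℝ) :
    HasDerivAt (fun l => 1 / 2 + wFn' D l / Real.sqrt (1 + wFn D l ^ 2))
      ((1 + (D - 3) / (D - 1)) * wFn D l / (4 * Real.sqrt (1 + wFn D l ^ 2) ^ 3)) l := by
  have hpos : 0 < 1 + wFn D l ^ 2 := by positivity
  have hS : 0 < Real.sqrt (1 + wFn D l ^ 2) := Real.sqrt_pos.2 hpos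
  have hS2 : Real.sqrt (1 + wFn D l ^ 2) ^ 2 = 1 + wFn D l ^ 2 := Real.sq_sqrt hpos.le
  have h := ((hasDerivAt_wFn' D l).div ((((hasDerivAt_wFn D l).pow 2).const_add 1).sqrt hpos.ne')
    hS.ne').const_add (1 / 2)
  refine h.congr_deriv ?_
  rw [← wFn_sq_sub hD l]
  simp only [Pi.pow_apply]
  set S := Real.sqrt (1 + wFn D l ^ 2)
  field_simp
  rw [hS2]
  push_cast
  ring

/-! ### The variance proxy -/

lemma cConst_pos {d : ℕ} (hd : 3 ≤ d) : 0 < cConst d := by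
  unfold cConst
  split_ifs with h3 h4
  · positivity
  · positivity
  · have h5 : (5 : ℝ) ≤ d := by exact_mod_cast (show 5 ≤ d by omega)
    have := Real.sqrt_pos.2 (show 0 < 2 * ((d : ℝ) - 3) by linarith)
    have := Real.sqrt_pos.2 (show 0 < (d : ℝ) - 2 by linarith)
    positivity

/-- `G / (1 + G) ^ 3` is maximal at `G = 1/2` and decreasing from there on. The constraint
`(d - 3) / (d - 1) ≤ G` excludes `1/2` exactly when `d > 5`. -/
lemma cConst_key {d : ℕ} (hd : 3 ≤ d) (G : ℝ) (hG : 0 ≤ G)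
    (hG' : ((d : ℝ) - 3) / (d - 1) ≤ G) :
    (1 + ((d : ℝ) - 3) / (d - 1)) ^ 2 * G ≤ 16 * cConst d ^ 2 * (1 + G) ^ 3 := by
  have s3 : Real.sqrt 3 ^ 2 = 3 := Real.sq_sqrt (by norm_num)
  have hmax : 0 ≤ (G - 1 / 2) ^ 2 * (4 * G + 16) := by positivity
  unfold cConst
  split_ifs with h3 h4
  · subst h3
    rw [div_pow, s3]
    norm_num
    nlinarith
  · subst h4
    rw [div_pow, mul_pow, s3]
    norm_num
    nlinarith
  · have h5 : (5 : ℝ) ≤ d := by exact_mod_cast (show 5 ≤ d by omega)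
    have e1 : Real.sqrt (2 * ((d : ℝ) - 3)) ^ 2 = 2 * (d - 3) := Real.sq_sqrt (by linarith)
    have e2 : Real.sqrt ((d : ℝ) - 2) ^ 2 = d - 2 := Real.sq_sqrt (by linarith)
    rw [div_pow, mul_pow, e1, e2]
    set k : ℝ := ((d : ℝ) - 3) / (d - 1) with hk
    have hd1 : (0 : ℝ) < d - 1 := by linarith
    have hd2 : (0 : ℝ) < d - 2 := by linarith
    have hk2 : 1 / 2 ≤ k := by rw [hk, le_div_iff₀ hd1]; linarith
    have hc : 16 * (2 * ((d : ℝ) - 3) / (8 ^ 2 * (d - 2))) = k / (1 + k) := by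
      have : 1 + k = 2 * (d - 2) / (d - 1) := by rw [hk]; field_simp; ring
      rw [this, hk]
      field_simp
      ring
    rw [hc, div_mul_eq_mul_div, le_div_iff₀ (by linarith)]
    have hkG : 1 / 4 ≤ k * G := by nlinarith
    have h6 : 0 ≤ -1 + 3 * (k * G) + (k * G) * (G + k) := by nlinarith
    nlinarith [mul_nonneg (sub_nonneg.2 hG') h6]

lemma LFn''_le {d : ℕ} (hd : 3 ≤ d) (l : ℝ) :
    (1 + ((d : ℝ) - 3) / (d - 1)) * wFn d l / (4 * Real.sqrt (1 + wFn d l ^ 2) ^ 3)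
      ≤ cConst d := by
  have hD : (3 : ℝ) ≤ d := by exact_mod_cast hd
  have hpos : 0 < 1 + wFn d l ^ 2 := by positivity
  have hS : 0 < Real.sqrt (1 + wFn d l ^ 2) := Real.sqrt_pos.2 hpos
  have hS2 : Real.sqrt (1 + wFn d l ^ 2) ^ 2 = 1 + wFn d l ^ 2 := Real.sq_sqrt hpos.le
  have hc := cConst_pos hd
  have hk := cConst_key hd (wFn d l ^ 2) (sq_nonneg _)
    (by rw [← wFn_sq_sub hD l]; nlinarith [sq_nonneg (wFn' d l)])
  rw [div_le_iff₀ (by positivity)]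
  refine abs_le_of_sq_le_sq' ?_ (by positivity) |>.2
  calc _ = (1 + ((d : ℝ) - 3) / (d - 1)) ^ 2 * wFn d l ^ 2 := by ring
    _ ≤ _ := hk
    _ = 16 * cConst d ^ 2 * (Real.sqrt (1 + wFn d l ^ 2) ^ 2) ^ 3 := by rw [hS2]
    _ = _ := by ring

lemma sqrt_one_add_wFn_zero {D : ℝ} (hD : 3 ≤ D) :
    Real.sqrt (1 + wFn D 0 ^ 2) = D / (2 * Real.sqrt (D - 1)) := by
  have h0 : 0 < Real.sqrt (D - 1) := Real.sqrt_pos.2 (by linarith)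
  have h2 : Real.sqrt (D - 1) ^ 2 = D - 1 := Real.sq_sqrt (by linarith)
  have h3 : D - 1 ≠ 0 := by linarith
  rw [Real.sqrt_eq_iff_mul_self_eq (by positivity) (by positivity)]
  rw [← pow_two]
  simp only [wFn, neg_zero, zero_div, Real.exp_zero, mul_one, div_pow, mul_pow, h2]
  field_simp
  ring

lemma LFn_zero {D : ℝ} (hD : 3 ≤ D) : LFn D 0 = Real.log (D - 1) := by
  have h0 : 0 < Real.sqrt (D - 1) := Real.sqrt_pos.2 (by linarith)
  have h2 : Real.sqrt (D - 1) ^ 2 = D - 1 := Real.sq_sqrt (by linarith)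
  have h : wFn D 0 + D / (2 * Real.sqrt (D - 1)) = Real.sqrt (D - 1) := by
    simp only [wFn, neg_zero, zero_div, Real.exp_zero, mul_one]
    field_simp
    rw [h2]; ring
  rw [LFn, Real.arsinh, sqrt_one_add_wFn_zero hD, h, zero_div, zero_add,
    ← Real.log_mul h0.ne' h0.ne', ← pow_two, h2]

lemma LFn'_zero {D : ℝ} (hD : 3 ≤ D) :
    1 / 2 + wFn' D 0 / Real.sqrt (1 + wFn D 0 ^ 2) = (D - 2) / D := by
  have h0 : 0 < Real.sqrt (D - 1) := Real.sqrt_pos.2 (by linarith)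
  rw [sqrt_one_add_wFn_zero hD]
  have h3 : D ≠ 0 := by linarith
  simp only [wFn', neg_zero, zero_div, Real.exp_zero, mul_one]
  field_simp
  ring

/-- A function lies below the parabola with the same 1-jet at `0` and larger curvature. -/
lemma le_quadratic {F F' F'' : ℝ → ℝ} {c : ℝ} (h1 : ∀ x, HasDerivAt F (F' x) x)
    (h2 : ∀ x, HasDerivAt F' (F'' x) x) (hc : ∀ x, F'' x ≤ c) (x : ℝ) :
    F x ≤ F 0 + F' 0 * x + c * x ^ 2 / 2 := by
  have hg : ∀ x, HasDerivAt (fun x => c * x - F' x) (c - F'' x) x := fun x => by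
    refine (((hasDerivAt_id x).const_mul c).sub (h2 x)).congr_deriv ?_
    simp
  have hmono : Monotone (fun x => c * x - F' x) :=
    monotone_of_deriv_nonneg (fun x => (hg x).differentiableAt) fun x => by
      rw [(hg x).deriv]; linarith [hc x]
  have hh : ∀ x, HasDerivAt (fun x => F 0 + F' 0 * x + c * x ^ 2 / 2 - F x)
      (F' 0 + c * x - F' x) x := fun x => by
    have := ((((hasDerivAt_id x).const_mul (F' 0)).const_add (F 0)).add
      ((((hasDerivAt_id x).pow 2).const_mul c).div_const 2)).sub (h1 x)
    refine this.congr_deriv ?_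
    simp; ring
  have hcont : Continuous (fun x => F 0 + F' 0 * x + c * x ^ 2 / 2 - F x) :=
    continuous_iff_continuousAt.2 fun x => (hh x).continuousAt
  rcases le_total 0 x with hx | hx
  · have := monotoneOn_of_deriv_nonneg (convex_Ici 0) hcont.continuousOn
      (fun y _ => (hh y).differentiableAt.differentiableWithinAt) (fun y hy => by
        rw [interior_Ici] at hy
        rw [(hh y).deriv]
        have := hmono (le_of_lt hy)
        simp only [mul_zero] at this
        linarith)
    have := this Set.self_mem_Ici (Set.mem_Ici.2 hx) hx
    simp only at this
    linarith
  · have := antitoneOn_of_deriv_nonpos (convex_Iic 0) hcont.continuousOn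
      (fun y _ => (hh y).differentiableAt.differentiableWithinAt) (fun y hy => by
        rw [interior_Iic] at hy
        rw [(hh y).deriv]
        have := hmono (le_of_lt hy)
        simp only [mul_zero] at this
        linarith)
    have := this (Set.mem_Iic.2 hx) Set.self_mem_Iic hx
    simp only at this
    linarith

lemma LFn_le {d : ℕ} (hd : 3 ≤ d) (l : ℝ) :
    LFn d l ≤ Real.log ((d : ℝ) - 1) + ((d : ℝ) - 2) / d * l + cConst d * l ^ 2 / 2 := by
  have hD : (3 : ℝ) ≤ d := by exact_mod_cast hd
  have := le_quadratic (hasDerivAt_LFn d) (hasDerivAt_LFn' hD) (LFn''_le hd) l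
  rwa [LFn_zero hD, LFn'_zero hD] at this

/-! ### Partition functions -/

/-- The tilted partition function, in terms of any `p`, `q` having the sum and product of the
eigenvalues of `tMat d x`. -/
lemma sum_phiWt_mul_pow {d n : ℕ} [NeZero n] (hd : 3 ≤ d) (x p q : ℝ)
    (hs : 1 + ((d : ℝ) - 3) * x = p + q) (hp : -(((d : ℝ) - 1) * x) = p * q) :
    ∑ f : ZMod n → Bool, phiWt d n f * x ^ vCount n f = p ^ n + q ^ n := by
  have hD : (3 : ℝ) ≤ d := by exact_mod_cast hd
  have e : Real.sqrt (2 * ((d : ℝ) - 2)) ^ 2 = 2 * (d - 2) := Real.sq_sqrt (by linarith)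
  rw [Finset.sum_congr rfl fun f _ => phiWt_mul_pow d n x f, sum_cycle]
  apply trace_pow_two
  · simp [tMat]; linarith
  · simp only [tMat, and_self, if_true, Bool.false_eq_true, and_false, false_and, if_false,
      ne_eq, not_true_eq_false, not_false_eq_true, reduceCtorEq]
    linear_combination hp - x * e

lemma half_le_partition {d n : ℕ} [NeZero n] (hd : 3 ≤ d) (hn : 2 ≤ n) :
    ((d : ℝ) - 1) ^ n / 2 ≤ ∑ f : ZMod n → Bool, phiWt d n f := by
  have hD : (3 : ℝ) ≤ d := by exact_mod_cast hd
  have h := sum_phiWt_mul_pow (n := n) hd 1 (d - 1) (-1) (by ring) (by ring)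
  simp only [one_pow, mul_one] at h
  rw [h]
  have h1 : (4 : ℝ) ≤ ((d : ℝ) - 1) ^ n := by
    calc (4 : ℝ) = 2 ^ 2 := by norm_num
      _ ≤ 2 ^ n := pow_le_pow_right₀ (by norm_num) hn
      _ ≤ _ := pow_le_pow_left₀ (by norm_num) (by linarith) n
  have h2 : (-1 : ℝ) ≤ (-1) ^ n := by
    rcases neg_one_pow_eq_or ℝ n with h | h <;> norm_num [h]
  linarith

lemma mgf_le {d n : ℕ} [NeZero n] (hd : 3 ≤ d) (l : ℝ) :
    ∑ f : ZMod n → Bool, phiWt d n f * Real.exp (l * ((vCount n f : ℝ) - (d - 2) * n / d)) ≤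
      2 * (((d : ℝ) - 1) ^ n * Real.exp (n * (cConst d * l ^ 2 / 2))) := by
  have hD : (3 : ℝ) ≤ d := by exact_mod_cast hd
  have h0 : 0 < Real.sqrt ((d : ℝ) - 1) := Real.sqrt_pos.2 (by linarith)
  have h2 : Real.sqrt ((d : ℝ) - 1) ^ 2 = d - 1 := Real.sq_sqrt (by linarith)
  have hx : Real.exp (l / 2) * Real.exp (l / 2) = Real.exp l := by
    rw [← Real.exp_add]; congr 1; ring
  have hx' : Real.exp (l / 2) * Real.exp (-l / 2) = 1 := by
    rw [← Real.exp_add, show l / 2 + -l / 2 = 0 by ring, Real.exp_zero]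
  have ha : Real.exp (Real.arsinh (wFn d l)) * Real.exp (-Real.arsinh (wFn d l)) = 1 := by
    rw [← Real.exp_add, add_neg_cancel, Real.exp_zero]
  have hL : Real.exp (LFn d l) = Real.exp (l / 2) * Real.sqrt ((d : ℝ) - 1) *
      Real.exp (Real.arsinh (wFn d l)) := by
    rw [LFn, Real.exp_add, Real.exp_add, Real.exp_log h0]
  set q : ℝ := -(Real.exp (l / 2) * Real.sqrt ((d : ℝ) - 1) *
      Real.exp (-Real.arsinh (wFn d l))) with hq
  have hZ : ∑ f : ZMod n → Bool, phiWt d n f * Real.exp l ^ vCount n f =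
      Real.exp (LFn d l) ^ n + q ^ n := by
    apply sum_phiWt_mul_pow hd
    · have hsinh : Real.exp (Real.arsinh (wFn d l)) - Real.exp (-Real.arsinh (wFn d l)) =
          2 * wFn d l := by
        have := Real.sinh_arsinh (wFn d l)
        rw [Real.sinh_eq] at this
        linarith
      have hw : 2 * wFn d l * Real.sqrt ((d : ℝ) - 1) =
          Real.exp (-l / 2) + (d - 3) * Real.exp (l / 2) := by
        rw [wFn]; field_simp
      rw [hL, hq]
      linear_combination -Real.exp (l / 2) * Real.sqrt ((d : ℝ) - 1) * hsinh -
        Real.exp (l / 2) * hw - hx' - ((d : ℝ) - 3) * hx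
    · rw [hL, hq]
      linear_combination (Real.exp l) * h2 + Real.sqrt ((d : ℝ) - 1) ^ 2 * hx +
        Real.exp (l / 2) ^ 2 * Real.sqrt ((d : ℝ) - 1) ^ 2 * ha
  have hqle : q ^ n ≤ Real.exp (LFn d l) ^ n := by
    refine (le_abs_self _).trans ?_
    rw [abs_pow]
    refine pow_le_pow_left₀ (abs_nonneg _) ?_ n
    rw [hq, abs_neg, abs_of_pos (by positivity), hL]
    gcongr
    have : 0 < Real.arsinh (wFn d l) := Real.arsinh_pos_iff.2 (wFn_pos hD l)
    linarith
  have hfac : ∀ f : ZMod n → Bool,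
      phiWt d n f * Real.exp (l * ((vCount n f : ℝ) - (d - 2) * n / d)) =
      Real.exp (-(n * (((d : ℝ) - 2) / d * l))) * (phiWt d n f * Real.exp l ^ vCount n f) := by
    intro f
    rw [mul_left_comm, ← Real.exp_nat_mul, ← Real.exp_add]
    congr 2
    ring
  rw [Finset.sum_congr rfl fun f _ => hfac f, ← Finset.mul_sum, hZ]
  have hpow : Real.exp (LFn d l) ^ n ≤ ((d : ℝ) - 1) ^ n *
      Real.exp (n * (((d : ℝ) - 2) / d * l)) * Real.exp (n * (cConst d * l ^ 2 / 2)) := by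
    calc Real.exp (LFn d l) ^ n = Real.exp (n * LFn d l) := (Real.exp_nat_mul _ _).symm
      _ ≤ Real.exp (n * (Real.log ((d : ℝ) - 1) + ((d : ℝ) - 2) / d * l +
            cConst d * l ^ 2 / 2)) := by gcongr; exact LFn_le hd l
      _ = _ := by
        rw [mul_add, mul_add, Real.exp_add, Real.exp_add, Real.exp_nat_mul,
          Real.exp_log (by linarith)]
  have he : Real.exp (-(n * (((d : ℝ) - 2) / d * l))) *
      Real.exp (n * (((d : ℝ) - 2) / d * l)) = 1 := by
    rw [← Real.exp_add, neg_add_cancel, Real.exp_zero]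
  calc _ ≤ Real.exp (-(n * (((d : ℝ) - 2) / d * l))) * (2 * (((d : ℝ) - 1) ^ n *
      Real.exp (n * (((d : ℝ) - 2) / d * l)) * Real.exp (n * (cConst d * l ^ 2 / 2)))) := by
        gcongr; linarith
    _ = _ := by
      linear_combination 2 * ((d : ℝ) - 1) ^ n * Real.exp (n * (cConst d * l ^ 2 / 2)) * he

/-! ### The Chernoff bound -/

/-- **Lemma 4.2 (sharp tail bound).**  For all `d ≥ 3`, `n ≥ 2` and `t ≥ 0`,
`φ[|V_n − (d−2)n/d| ≥ t] ≤ 8 exp(−t²/(2 n c_d))`. -/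
theorem phi_tail_bound (d n : ℕ) [NeZero n] (hd : 3 ≤ d) (hn : 2 ≤ n)
    (t : ℝ) (ht : 0 ≤ t) :
    phiProb d n {f | t ≤ |(vCount n f : ℝ) - ((d : ℝ) - 2) * n / d|} ≤
      8 * Real.exp (-t ^ 2 / (2 * n * cConst d)) := by
  have hD : (3 : ℝ) ≤ d := by exact_mod_cast hd
  have hc := cConst_pos hd
  have hn0 : (0 : ℝ) < n := by exact_mod_cast (show 0 < n by omega)
  have hwt : ∀ f, 0 ≤ phiWt d n f := fun f =>
    mul_nonneg (pow_nonneg (Real.sqrt_nonneg _) _) (pow_nonneg (by linarith) _)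
  have hZ := half_le_partition (n := n) hd hn
  have hdn : 0 < ((d : ℝ) - 1) ^ n := pow_pos (by linarith) n
  -- The minimizer of `n * c * l ^ 2 / 2 - l * t`.
  set l : ℝ := t / (n * cConst d) with hl
  have hl0 : 0 ≤ l := by positivity
  have hpt : ∀ f : ZMod n → Bool,
      Set.indicator {f | t ≤ |(vCount n f : ℝ) - ((d : ℝ) - 2) * n / d|} (phiWt d n) f ≤
      Real.exp (-(l * t)) *
        (phiWt d n f * Real.exp (l * ((vCount n f : ℝ) - (d - 2) * n / d)) +
        phiWt d n f * Real.exp (-l * ((vCount n f : ℝ) - (d - 2) * n / d))) := by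
    intro f
    have hw := hwt f
    refine Set.indicator_apply_le' (fun hf => ?_) (fun _ => by positivity)
    set X : ℝ := (vCount n f : ℝ) - (d - 2) * n / d with hX
    have hf' : t ≤ |X| := hf
    have hone : 1 ≤ Real.exp (-(l * t)) * (Real.exp (l * X) + Real.exp (-l * X)) := by
      rw [mul_add, ← Real.exp_add, ← Real.exp_add]
      rcases le_abs.1 hf' with h | h
      · have : 1 ≤ Real.exp (-(l * t) + l * X) := Real.one_le_exp (by nlinarith)
        linarith [Real.exp_pos (-(l * t) + -l * X)]
      · have : 1 ≤ Real.exp (-(l * t) + -l * X) := Real.one_le_exp (by nlinarith)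
        linarith [Real.exp_pos (-(l * t) + l * X)]
    calc phiWt d n f = phiWt d n f * 1 := (mul_one _).symm
      _ ≤ phiWt d n f * (Real.exp (-(l * t)) * (Real.exp (l * X) + Real.exp (-l * X))) := by
        gcongr
      _ = _ := by ring
  have h1 := mgf_le (n := n) hd l
  have h2 := mgf_le (n := n) hd (-l)
  rw [neg_sq] at h2
  have hexp : Real.exp (-(l * t)) * Real.exp (n * (cConst d * l ^ 2 / 2)) =
      Real.exp (-t ^ 2 / (2 * n * cConst d)) := by
    rw [← Real.exp_add, hl]
    congr 1
    field_simp
    ring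
  unfold phiProb
  rw [div_le_iff₀ (by linarith)]
  calc _ ≤ _ := Finset.sum_le_sum fun f _ => hpt f
    _ ≤ Real.exp (-(l * t)) *
        (4 * (((d : ℝ) - 1) ^ n * Real.exp (n * (cConst d * l ^ 2 / 2)))) := by
      rw [← Finset.mul_sum, Finset.sum_add_distrib]
      gcongr
      linarith
    _ = 8 * Real.exp (-t ^ 2 / (2 * n * cConst d)) * (((d : ℝ) - 1) ^ n / 2) := by
      rw [← hexp]; ring
    _ ≤ _ := by gcongr
end

section
/- There is an absolute constant C (independent of d) such that for every integer d ≥ 3 and all w ∈ ℝ: |f_h(w)| ≤ C·Φ(h)·(1+|w|)^{-1}·h(w), |f_h′(w)| ≤ C·Φ(h)·h(w), and |f_h″(w)| ≤ C·Φ(h)·(1+|w|)·h(w). -/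
/-!
The Stein integrand is a difference of two centred Gaussians,
`e^{-t²/2}(Φ(h) − h(t)) = Φ(h) e^{-t²/2} − e^{-ct²/2}` with `c = 1 − 2/d ∈ [1/3, 1)`. For `w ≥ 0`
and `b ∈ [1/6, 1/2]`, the tangent-line inequality `t² ≥ 2(w+1)t − (w+1)²` gives the tail bound
`∫_w^∞ e^{-bt²} dt ≤ 6 e^{-bw²}/(1+w)` (`gauss_tail_le`), with a constant that does not depend on
`b`. Applied with `b = 1/2` and `b = c/2`, and since `e^{w²/2} e^{-cw²/2} = h(w)`, it bounds `f_h` on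
`[0, ∞)`. The integrand is even and has total integral zero (`integral_steinInt`), so `f_h` is odd
(`steinSol_neg`) and the bound extends to all `w`. The Stein equation `f_h' = w f_h + h − Φ(h)`
(`hasDerivAt_steinSol`) and its derivative then bound `f_h'` and `f_h''`, using `Φ(h), h ≥ 1`.
-/

open MeasureTheory

/-- `h(w) = exp(w²/d)`. -/
noncomputable def hTest (d : ℕ) (w : ℝ) : ℝ := Real.exp (w ^ 2 / d)

/-- `Φ(h) = √(d/(d−2))`, the expectation of `h` applied to a standard normal. -/
noncomputable def PhiH (d : ℕ) : ℝ := Real.sqrt ((d : ℝ) / ((d : ℝ) - 2))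

/-- The solution `f_h(w) = e^{w²/2} ∫_w^∞ e^{-t²/2}(Φ(h) − h(t)) dt` of the Stein
equation `f_h'(w) − w f_h(w) = h(w) − Φ(h)`. -/
noncomputable def steinSol (d : ℕ) (w : ℝ) : ℝ :=
  Real.exp (w ^ 2 / 2) * ∫ t in Set.Ioi w, Real.exp (-t ^ 2 / 2) * (PhiH d - hTest d t)

/-- The integrand `e^{-t²/2}(Φ(h) − h(t))` of `steinSol`. -/
noncomputable def steinInt (d : ℕ) (t : ℝ) : ℝ :=
  Real.exp (-t ^ 2 / 2) * (PhiH d - hTest d t)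

/-- Half of `c = 1 − 2/d`: the exponent for which `e^{-t²/2} h(t) = e^{-bt²}`. -/
noncomputable def expo (d : ℕ) : ℝ := 1 / 2 - 1 / d

lemma expo_ge {d : ℕ} (hd : 3 ≤ d) : 1 / 6 ≤ expo d := by
  have h3 : (3 : ℝ) ≤ d := by exact_mod_cast hd
  have : (1 : ℝ) / d ≤ 1 / 3 := by gcongr
  unfold expo
  linarith

lemma expo_le (d : ℕ) : expo d ≤ 1 / 2 := by
  have : (0 : ℝ) ≤ 1 / d := by positivity
  unfold expo
  linarith

lemma steinInt_eq (d : ℕ) (t : ℝ) :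
    steinInt d t = PhiH d * Real.exp (-(1 / 2) * t ^ 2) - Real.exp (-expo d * t ^ 2) := by
  unfold steinInt hTest expo
  rw [mul_sub, ← Real.exp_add, mul_comm]
  congr 3 <;> ring

lemma integrable_steinInt {d : ℕ} (hd : 3 ≤ d) : Integrable (steinInt d) := by
  have hb : 0 < expo d := by linarith [expo_ge hd]
  rw [funext (steinInt_eq d)]
  exact ((integrable_exp_neg_mul_sq (by norm_num)).const_mul _).sub (integrable_exp_neg_mul_sq hb)

lemma continuous_steinInt (d : ℕ) : Continuous (steinInt d) := by
  unfold steinInt hTest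
  fun_prop

lemma integral_steinInt {d : ℕ} (hd : 3 ≤ d) : ∫ t, steinInt d t = 0 := by
  have h3 : (3 : ℝ) ≤ d := by exact_mod_cast hd
  have hb : 0 < expo d := by linarith [expo_ge hd]
  rw [funext (steinInt_eq d), integral_sub
    ((integrable_exp_neg_mul_sq (by norm_num)).const_mul _) (integrable_exp_neg_mul_sq hb),
    integral_const_mul, integral_gaussian, integral_gaussian, PhiH,
    ← Real.sqrt_mul (div_nonneg (by linarith) (by linarith)), sub_eq_zero]
  congr 1
  unfold expo
  have : (d : ℝ) - 2 ≠ 0 := by linarith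
  have : (1 : ℝ) / 2 - 1 / d = (d - 2) / (2 * d) := by field_simp
  rw [this]
  field_simp

lemma steinInt_neg (d : ℕ) (t : ℝ) : steinInt d (-t) = steinInt d t := by
  simp [steinInt, hTest]

/-- A Gaussian tail bound with a constant uniform in the exponent `b`. -/
lemma gauss_tail_le {b w : ℝ} (hb : 1 / 6 ≤ b) (hb' : b ≤ 1 / 2) (hw : 0 ≤ w) :
    ∫ t in Set.Ioi w, Real.exp (-b * t ^ 2) ≤ 6 * (1 + w)⁻¹ * Real.exp (-b * w ^ 2) := by
  have hneg : -(2 * b * (w + 1)) < 0 := by nlinarith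
  have h1 : ∫ t in Set.Ioi w, Real.exp (-b * t ^ 2) ≤
      ∫ t in Set.Ioi w, Real.exp (b * (w + 1) ^ 2) * Real.exp (-(2 * b * (w + 1)) * t) := by
    apply integral_mono (integrable_exp_neg_mul_sq (by linarith)).integrableOn
      ((integrableOn_exp_mul_Ioi hneg w).const_mul _)
    intro t
    simp only [← Real.exp_add]
    apply Real.exp_le_exp.2
    nlinarith [mul_nonneg (by linarith : 0 ≤ b) (sq_nonneg (t - (w + 1)))]
  refine h1.trans ?_
  rw [integral_const_mul, integral_exp_mul_Ioi hneg]
  have hexp : Real.exp b ≤ 2 := by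
    have h := Real.exp_bound_div_one_sub_of_interval (by linarith : 0 ≤ b) (by linarith)
    refine h.trans ?_
    rw [div_le_iff₀ (by linarith)]
    linarith
  have he : Real.exp (b * (w + 1) ^ 2) * Real.exp (-(2 * b * (w + 1)) * w)
      = Real.exp b * Real.exp (-b * w ^ 2) := by
    rw [← Real.exp_add, ← Real.exp_add]
    congr 1
    ring
  have hcoef : Real.exp b / (2 * b * (w + 1)) ≤ 6 * (1 + w)⁻¹ := by
    rw [div_le_iff₀ (by linarith)]
    have : 6 * (1 + w)⁻¹ * (2 * b * (w + 1)) = 12 * b := by field_simp; ring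
    rw [this]
    linarith
  calc _ = (Real.exp (b * (w + 1) ^ 2) * Real.exp (-(2 * b * (w + 1)) * w))
          / (2 * b * (w + 1)) := by rw [neg_div_neg_eq, mul_div_assoc]
    _ = Real.exp b / (2 * b * (w + 1)) * Real.exp (-b * w ^ 2) := by rw [he]; ring
    _ ≤ _ := by gcongr

lemma one_le_PhiH {d : ℕ} (hd : 3 ≤ d) : 1 ≤ PhiH d := by
  have h3 : (3 : ℝ) ≤ d := by exact_mod_cast hd
  apply Real.one_le_sqrt.2
  rw [le_div_iff₀ (by linarith)]
  linarith

lemma one_le_hTest (d : ℕ) (w : ℝ) : 1 ≤ hTest d w := Real.one_le_exp (by positivity)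

lemma steinSol_eq (d : ℕ) (w : ℝ) :
    steinSol d w = Real.exp (w ^ 2 / 2) * ∫ t in Set.Ioi w, steinInt d t := rfl

lemma steinSol_neg {d : ℕ} (hd : 3 ≤ d) (w : ℝ) : steinSol d (-w) = -steinSol d w := by
  have h1 : ∫ t in Set.Ioi (-w), steinInt d t = ∫ t in Set.Iic w, steinInt d t := by
    rw [← integral_comp_neg_Iic]
    simp only [steinInt_neg]
  have h2 := intervalIntegral.integral_Iic_add_Ioi (μ := volume) (b := w)
    (integrable_steinInt hd).integrableOn (integrable_steinInt hd).integrableOn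
  rw [integral_steinInt hd] at h2
  rw [steinSol_eq, steinSol_eq, h1, eq_neg_of_add_eq_zero_left h2, neg_sq, mul_neg]

lemma abs_steinSol_le_of_nonneg {d : ℕ} (hd : 3 ≤ d) {w : ℝ} (hw : 0 ≤ w) :
    |steinSol d w| ≤ 12 * PhiH d * (1 + w)⁻¹ * hTest d w := by
  have hb := expo_ge hd
  have hP := one_le_PhiH hd
  have hh := one_le_hTest d w
  set I := ∫ t in Set.Ioi w, Real.exp (-(1 / 2) * t ^ 2) with hI
  set J := ∫ t in Set.Ioi w, Real.exp (-expo d * t ^ 2) with hJ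
  have hI0 : 0 ≤ I := integral_nonneg fun t => (Real.exp_pos _).le
  have hJ0 : 0 ≤ J := integral_nonneg fun t => (Real.exp_pos _).le
  have hI1 : I ≤ 6 * (1 + w)⁻¹ * Real.exp (-(1 / 2) * w ^ 2) :=
    gauss_tail_le (by norm_num) le_rfl hw
  have hJ1 : J ≤ 6 * (1 + w)⁻¹ * Real.exp (-expo d * w ^ 2) := gauss_tail_le hb (expo_le d) hw
  have heq : steinSol d w = PhiH d * (Real.exp (w ^ 2 / 2) * I) - Real.exp (w ^ 2 / 2) * J := by
    rw [steinSol_eq, funext (steinInt_eq d), integral_sub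
      ((integrable_exp_neg_mul_sq (by norm_num)).integrableOn.const_mul _)
      (integrable_exp_neg_mul_sq (by linarith)).integrableOn, integral_const_mul]
    ring
  have hE1 : Real.exp (w ^ 2 / 2) * Real.exp (-(1 / 2) * w ^ 2) = 1 := by
    rw [← Real.exp_add, Real.exp_eq_one_iff]
    ring
  have hE2 : Real.exp (w ^ 2 / 2) * Real.exp (-expo d * w ^ 2) = hTest d w := by
    rw [← Real.exp_add, hTest, expo]
    congr 1
    ring
  have hA : Real.exp (w ^ 2 / 2) * I ≤ 6 * (1 + w)⁻¹ := by
    calc _ ≤ Real.exp (w ^ 2 / 2) * (6 * (1 + w)⁻¹ * Real.exp (-(1 / 2) * w ^ 2)) := by gcongr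
      _ = 6 * (1 + w)⁻¹ * (Real.exp (w ^ 2 / 2) * Real.exp (-(1 / 2) * w ^ 2)) := by ring
      _ = _ := by rw [hE1, mul_one]
  have hB : Real.exp (w ^ 2 / 2) * J ≤ 6 * (1 + w)⁻¹ * hTest d w := by
    calc _ ≤ Real.exp (w ^ 2 / 2) * (6 * (1 + w)⁻¹ * Real.exp (-expo d * w ^ 2)) := by gcongr
      _ = 6 * (1 + w)⁻¹ * (Real.exp (w ^ 2 / 2) * Real.exp (-expo d * w ^ 2)) := by ring
      _ = _ := by rw [hE2]
  have hinv : 0 ≤ (1 + w)⁻¹ := by positivity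
  have hA0 : 0 ≤ Real.exp (w ^ 2 / 2) * I := by positivity
  have hB0 : 0 ≤ Real.exp (w ^ 2 / 2) * J := by positivity
  have hA2 : PhiH d * (Real.exp (w ^ 2 / 2) * I) ≤ 6 * PhiH d * (1 + w)⁻¹ * hTest d w := by
    calc _ ≤ PhiH d * (6 * (1 + w)⁻¹) := by gcongr
      _ = 6 * PhiH d * (1 + w)⁻¹ * 1 := by ring
      _ ≤ _ := by gcongr
  have hB2 : Real.exp (w ^ 2 / 2) * J ≤ 6 * PhiH d * (1 + w)⁻¹ * hTest d w := by
    calc _ ≤ 6 * 1 * (1 + w)⁻¹ * hTest d w := by linarith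
      _ ≤ _ := by gcongr
  have hA3 : 0 ≤ PhiH d * (Real.exp (w ^ 2 / 2) * I) := by positivity
  rw [heq, abs_le]
  constructor <;> linarith

lemma abs_steinSol_le {d : ℕ} (hd : 3 ≤ d) (w : ℝ) :
    |steinSol d w| ≤ 12 * PhiH d * (1 + |w|)⁻¹ * hTest d w := by
  rcases le_total 0 w with hw | hw
  · rw [abs_of_nonneg hw]
    exact abs_steinSol_le_of_nonneg hd hw
  · have h := abs_steinSol_le_of_nonneg hd (neg_nonneg.2 hw)
    rw [steinSol_neg hd, abs_neg] at h
    rw [abs_of_nonpos hw]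
    simpa [hTest] using h

/-- The Stein equation. -/
lemma hasDerivAt_steinSol {d : ℕ} (hd : 3 ≤ d) (w : ℝ) :
    HasDerivAt (steinSol d) (w * steinSol d w + hTest d w - PhiH d) w := by
  have hG : ∀ x, ∫ t in Set.Ioi x, steinInt d t
      = (∫ t in Set.Ioi 0, steinInt d t) - ∫ t in (0 : ℝ)..x, steinInt d t := by
    intro x
    rw [eq_sub_iff_add_eq, add_comm]
    exact intervalIntegral.integral_interval_add_Ioi (integrable_steinInt hd).integrableOn
      (integrable_steinInt hd).integrableOn
  have h1 : HasDerivAt (fun x => ∫ t in Set.Ioi x, steinInt d t) (-steinInt d w) w := by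
    rw [funext hG]
    exact ((continuous_steinInt d).integral_hasStrictDerivAt 0 w).hasDerivAt.const_sub _
  have h2 : HasDerivAt (fun x : ℝ => Real.exp (x ^ 2 / 2)) (Real.exp (w ^ 2 / 2) * w) w := by
    have := ((hasDerivAt_pow 2 w).div_const 2).exp
    convert this using 1
    norm_num
  have h := h2.mul h1
  have hE : Real.exp (w ^ 2 / 2) * Real.exp (-w ^ 2 / 2) = 1 := by
    rw [← Real.exp_add, Real.exp_eq_one_iff]
    ring
  have hval : w * steinSol d w + hTest d w - PhiH d
      = Real.exp (w ^ 2 / 2) * w * (∫ t in Set.Ioi w, steinInt d t)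
        + Real.exp (w ^ 2 / 2) * -steinInt d w := by
    rw [steinSol_eq, steinInt]
    linear_combination (PhiH d - hTest d w) * hE
  rw [hval]
  exact h

lemma hasDerivAt_hTest (d : ℕ) (w : ℝ) :
    HasDerivAt (hTest d) (hTest d w * (2 * w / d)) w := by
  have := ((hasDerivAt_pow 2 w).div_const (d : ℝ)).exp
  unfold hTest
  convert this using 1
  norm_num

/-- **Lemma 4.8 (growth of the Stein solution).**  There is an absolute constant `C`
(independent of `d`) such that for every `d ≥ 3` and all `w ∈ ℝ`:
`|f_h(w)| ≤ C Φ(h) (1+|w|)⁻¹ h(w)`, `|f_h'(w)| ≤ C Φ(h) h(w)` and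
`|f_h''(w)| ≤ C Φ(h) (1+|w|) h(w)`. -/
theorem stein_solution_growth :
    ∃ C : ℝ, ∀ d : ℕ, 3 ≤ d → ∀ w : ℝ,
      |steinSol d w| ≤ C * PhiH d * (1 + |w|)⁻¹ * hTest d w ∧
      |deriv (steinSol d) w| ≤ C * PhiH d * hTest d w ∧
      |deriv (deriv (steinSol d)) w| ≤ C * PhiH d * (1 + |w|) * hTest d w := by
  refine ⟨27, fun d hd w => ?_⟩
  have h3 : (3 : ℝ) ≤ d := by exact_mod_cast hd
  have hP := one_le_PhiH hd
  have hh := one_le_hTest d w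
  have hf := abs_steinSol_le hd w
  have hw := abs_nonneg w
  have hderiv : deriv (steinSol d) = fun x => x * steinSol d x + hTest d x - PhiH d :=
    funext fun x => (hasDerivAt_steinSol hd x).deriv
  have hderiv2 : deriv (deriv (steinSol d)) w
      = steinSol d w + w * deriv (steinSol d) w + hTest d w * (2 * w / d) := by
    have h := (((hasDerivAt_id w).mul (hasDerivAt_steinSol hd w)).add
      (hasDerivAt_hTest d w)).sub_const (PhiH d)
    rw [hderiv]
    refine (HasDerivAt.deriv h).trans ?_
    simp
  -- `M` dominates both `Φ(h)` and `h(w)`, since each of them is at least `1`.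
  set M := PhiH d * hTest d w with hM
  have hPM : PhiH d ≤ M := le_mul_of_one_le_right (by linarith) hh
  have hhM : hTest d w ≤ M := le_mul_of_one_le_left (by linarith) hP
  have hM0 : 0 ≤ M := by linarith
  have hinv : (1 + |w|)⁻¹ ≤ 1 := inv_le_one_of_one_le₀ (by linarith)
  have hinv0 : 0 ≤ (1 + |w|)⁻¹ := by positivity
  have hinv1 : |w| * (1 + |w|)⁻¹ ≤ 1 := by
    rw [← div_eq_mul_inv, div_le_one (by linarith)]
    linarith
  have hf' : |steinSol d w| ≤ 12 * (M * (1 + |w|)⁻¹) := by rw [hM]; linarith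
  have hf1 : |steinSol d w| ≤ 12 * M := by nlinarith
  have hwf : |w * steinSol d w| ≤ 12 * M := by
    rw [abs_mul]
    calc |w| * |steinSol d w| ≤ |w| * (12 * (M * (1 + |w|)⁻¹)) := by gcongr
      _ = 12 * M * (|w| * (1 + |w|)⁻¹) := by ring
      _ ≤ 12 * M * 1 := by gcongr
      _ = 12 * M := mul_one _
  have hd1 : |deriv (steinSol d) w| ≤ 14 * M := by
    rw [hderiv]
    rw [abs_le] at hwf ⊢
    constructor <;> linarith
  have hd2 : |deriv (deriv (steinSol d)) w| ≤ 27 * M * (1 + |w|) := by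
    rw [hderiv2]
    have ha : |w * deriv (steinSol d) w| ≤ |w| * (14 * M) := by
      rw [abs_mul]
      gcongr
    have hb : |hTest d w * (2 * w / d)| ≤ M * |w| := by
      rw [abs_mul, abs_of_nonneg (by linarith : 0 ≤ hTest d w), abs_div, abs_mul,
        abs_of_nonneg (by linarith : (0 : ℝ) ≤ d), abs_two]
      have : 2 * |w| / d ≤ |w| := by
        rw [div_le_iff₀ (by linarith)]
        nlinarith
      gcongr
    have := abs_add_three (steinSol d w) (w * deriv (steinSol d) w) (hTest d w * (2 * w / d))
    nlinarith [mul_nonneg hM0 hw]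
  refine ⟨?_, ?_, ?_⟩
  · have : 0 ≤ M * (1 + |w|)⁻¹ := by positivity
    calc |steinSol d w| ≤ 27 * (M * (1 + |w|)⁻¹) := by linarith
      _ = _ := by rw [hM]; ring
  · rw [hM] at hd1 hM0
    linarith
  · calc _ ≤ _ := hd2
      _ = _ := by rw [hM]; ring
end

section
/- For every real α with 1 < α < 8/√2 there is a constant M_α such that for all integers n ≥ 2 and d with 3 ≤ d ≤ √n, |E_π[exp(Z_n²/d)] − √(d/(d−2))| ≤ M_α · d^{(3/2)(1+1/α)}/√n. -/
/-- The transition probabilities of the two-state Markov chain on `{R, B}`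
(`true = R`, `false = B`). -/
noncomputable def mcTrans (d : ℕ) : Bool → Bool → ℝ
  | true, true => ((d : ℝ) - 3) / ((d : ℝ) - 1)
  | true, false => 2 / ((d : ℝ) - 1)
  | false, true => ((d : ℝ) - 2) / ((d : ℝ) - 1)
  | false, false => 1 / ((d : ℝ) - 1)

/-- The stationary distribution of the chain: mass `(d−2)/d` on `R`, `2/d` on `B`. -/
noncomputable def mcStat (d : ℕ) : Bool → ℝ
  | true => ((d : ℝ) - 2) / d
  | false => 2 / (d : ℝ)

/-- `π({f})`: the probability of the coloring `f` under the law of the stationary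
chain `(X_1, …, X_n)`, via `f(k) = X_k` (coordinates `f 1, …, f n = f 0`). -/
noncomputable def piProb (d n : ℕ) [NeZero n] (f : ZMod n → Bool) : ℝ :=
  mcStat d (f 1) * ∏ k ∈ Finset.Ico 1 n, mcTrans d (f (k : ZMod n)) (f ((k : ZMod n) + 1))

open Real

/-! ### The tilted eigenvalue and its derivatives -/

/-- The Perron eigenvalue of the tilted transition matrix `T(b, c) e^{s·1[c = R]}`, i.e. the larger
root `λ` of `(D - 1) λ² - ((D - 3) e^s + 1) λ - e^s = 0`. The degree `D` is a real parameter. The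
derivatives of `log λ(s)` play the role of the cumulants of `V_n` per step. -/
noncomputable def lam (D s : ℝ) : ℝ :=
  ((D - 3) * exp s + 1 + √(((D - 3) * exp s + 1) ^ 2 + 4 * (D - 1) * exp s)) / (2 * (D - 1))

/-- `x = 1/((D-1)λ - 1)`, a coordinate in which the derivatives of `log λ` are rational. -/
noncomputable def xfun (D s : ℝ) : ℝ := 1 / ((D - 1) * lam D s - 1)
/-- `y = 1/((D-3)λ + 1)`, the companion of `xfun`; it lies in `(0, 1]`. -/
noncomputable def yfun (D s : ℝ) : ℝ := 1 / ((D - 3) * lam D s + 1)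
/-- `w = 1 + x + y`, the reciprocal of `(log λ)'`. -/
noncomputable def wfun (D s : ℝ) : ℝ := 1 + xfun D s + yfun D s
/-- `v = (x + y)(1 + x - y)/w³`, the second derivative of `log λ`. -/
noncomputable def vfun (D s : ℝ) : ℝ :=
  (xfun D s + yfun D s) * (1 + xfun D s - yfun D s) / wfun D s ^ 3

section
variable {D : ℝ} (hD : 3 ≤ D) (s : ℝ)
include hD

lemma lam_pos : 0 < lam D s := by
  have h1 : 0 < (D - 3) * exp s + 1 := by
    have := mul_nonneg (sub_nonneg.2 hD) (exp_pos s).le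
    linarith
  unfold lam
  have : 0 < D - 1 := by linarith
  positivity

lemma lam_eq : lam D s * ((D - 1) * lam D s - 1) = exp s * ((D - 3) * lam D s + 1) := by
  have h1 : 0 < D - 1 := by linarith
  have h2 : 0 ≤ ((D - 3) * exp s + 1) ^ 2 + 4 * (D - 1) * exp s := by positivity
  have h3 := sq_sqrt h2
  unfold lam
  set q := √(((D - 3) * exp s + 1) ^ 2 + 4 * (D - 1) * exp s)
  field_simp
  linear_combination h3

lemma B_ge : 1 ≤ (D - 3) * lam D s + 1 := by
  have := mul_nonneg (sub_nonneg.2 hD) (lam_pos hD s).le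
  linarith

lemma A_pos : 0 < (D - 1) * lam D s - 1 := by
  have h1 := lam_eq hD s
  have h2 : 0 < exp s * ((D - 3) * lam D s + 1) :=
    mul_pos (exp_pos s) (by linarith [B_ge hD s])
  rw [← h1] at h2
  exact (pos_iff_pos_of_mul_pos h2).1 (lam_pos hD s)

lemma lam_zero : lam D 0 = 1 := by
  have h1 : 0 < D - 1 := by linarith
  unfold lam
  rw [exp_zero, show ((D - 3) * 1 + 1) ^ 2 + 4 * (D - 1) * 1 = D ^ 2 by ring,
    sqrt_sq (by linarith)]
  field_simp
  ring

lemma x_pos : 0 < xfun D s := one_div_pos.2 (A_pos hD s)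
lemma y_pos : 0 < yfun D s := one_div_pos.2 (by linarith [B_ge hD s])
lemma y_le : yfun D s ≤ 1 := by
  unfold yfun
  rw [div_le_one (by linarith [B_ge hD s])]
  exact B_ge hD s
lemma w_gt : 1 < wfun D s := by
  unfold wfun
  linarith [x_pos hD s, y_pos hD s]

/-- Implicit differentiation of the characteristic equation `lam_eq`, after the differentiability of
`λ` is read off from the quadratic formula. -/
lemma hasDerivAt_lam : HasDerivAt (lam D) (lam D s / wfun D s) s := by
  have h1 : 0 < D - 1 := by linarith
  have hΔ : 0 < ((D - 3) * exp s + 1) ^ 2 + 4 * (D - 1) * exp s := by positivity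
  have hdiff : DifferentiableAt ℝ (lam D) s := by
    have : DifferentiableAt ℝ
        (fun s => √(((D - 3) * exp s + 1) ^ 2 + 4 * (D - 1) * exp s)) s :=
      DifferentiableAt.sqrt (by fun_prop) hΔ.ne'
    unfold lam
    fun_prop
  have hd := hdiff.hasDerivAt
  set l' := deriv (lam D) s
  have e1 := hd.mul ((hd.const_mul (D - 1)).sub_const 1)
  have e2 := (Real.hasDerivAt_exp s).mul ((hd.const_mul (D - 3)).add_const 1)
  have e3 : (lam D * fun s => (D - 1) * lam D s - 1) =
      (rexp * fun s => (D - 3) * lam D s + 1) := funext fun s => lam_eq hD s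
  rw [e3] at e1
  have e4 := e1.unique e2
  have hA := A_pos hD s
  have hB := B_ge hD s
  have hl := lam_pos hD s
  have h0 := lam_eq hD s
  have hE : exp s = lam D s * ((D - 1) * lam D s - 1) / ((D - 3) * lam D s + 1) := by
    rw [h0]; field_simp
  suffices l' = lam D s / wfun D s by rwa [this] at hd
  have hw := w_gt hD s
  rw [eq_div_iff (by linarith)]
  unfold wfun xfun yfun
  rw [hE] at e4
  obtain ⟨A, hAe⟩ : ∃ A, A = (D - 1) * lam D s - 1 := ⟨_, rfl⟩
  obtain ⟨B, hBe⟩ : ∃ B, B = (D - 3) * lam D s + 1 := ⟨_, rfl⟩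
  have e5 : l' * A + (A + 1) * l' = lam D s * A / B * B + A / B * ((B - 1) * l') := by
    rw [hAe, hBe]
    linear_combination e4
  rw [← hAe, ← hBe]
  rw [← hAe] at hA
  rw [← hBe] at hB
  have hB0 : B ≠ 0 := by linarith
  field_simp at e5 ⊢
  linear_combination e5

lemma hasDerivAt_loglam : HasDerivAt (fun s => log (lam D s)) (1 / wfun D s) s := by
  have hl := lam_pos hD s
  have := (hasDerivAt_lam hD s).log hl.ne'
  convert this using 1
  field_simp

lemma hasDerivAt_x : HasDerivAt (xfun D) ((-xfun D s - xfun D s ^ 2) / wfun D s) s := by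
  have hA := A_pos hD s
  have hw := w_gt hD s
  have := (((hasDerivAt_lam hD s).const_mul (D - 1)).sub_const 1).inv hA.ne'
  have e : xfun D = (fun s => (D - 1) * lam D s - 1)⁻¹ := by
    funext s; simp [xfun]
  rw [← e] at this
  refine this.congr_deriv ?_
  unfold xfun
  have : wfun D s ≠ 0 := by linarith
  field_simp
  ring

lemma hasDerivAt_y : HasDerivAt (yfun D) ((-yfun D s + yfun D s ^ 2) / wfun D s) s := by
  have hA := B_ge hD s
  have hA' : (D - 3) * lam D s + 1 ≠ 0 := by linarith
  have hw := w_gt hD s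
  have := (((hasDerivAt_lam hD s).const_mul (D - 3)).add_const 1).inv hA'
  have e : yfun D = (fun s => (D - 3) * lam D s + 1)⁻¹ := by
    funext s; simp [yfun]
  rw [← e] at this
  refine this.congr_deriv ?_
  unfold yfun
  have : wfun D s ≠ 0 := by linarith
  field_simp
  ring

lemma hasDerivAt_w : HasDerivAt (wfun D) ((-xfun D s - xfun D s ^ 2) / wfun D s +
    (-yfun D s + yfun D s ^ 2) / wfun D s) s := by
  have := ((hasDerivAt_x hD s).const_add 1).add (hasDerivAt_y hD s)
  exact this

lemma hasDerivAt_one_div_w : HasDerivAt (fun s => 1 / wfun D s) (vfun D s) s := by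
  have hw : wfun D s ≠ 0 := by linarith [w_gt hD s]
  have := (hasDerivAt_w hD s).inv hw
  simp only [one_div]
  refine this.congr_deriv ?_
  unfold vfun
  field_simp
  ring

/-- The third derivative of `log λ` is bounded uniformly in `s` and in `D`: it is a polynomial in
quantities such as `x'/w`, `y'/w`, `(x + y)/w` that lie in `[-1, 1]`. -/
lemma hasDerivAt_v : ∃ v', HasDerivAt (vfun D) v' s ∧ |v'| ≤ 10 := by
  have hw1 := w_gt hD s
  have hw : wfun D s ≠ 0 := by linarith
  have hx := x_pos hD s
  have hy := y_pos hD s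
  have hy1 := y_le hD s
  have dx := hasDerivAt_x hD s
  have dy := hasDerivAt_y hD s
  have key := ((dx.add dy).mul ((dx.const_add 1).sub dy)).div ((hasDerivAt_w hD s).pow 3)
    (pow_ne_zero 3 hw)
  refine ⟨_, key, ?_⟩
  have hwd : wfun D s = 1 + xfun D s + yfun D s := rfl
  set x := xfun D s
  set y := yfun D s
  set w := wfun D s
  have w0 : 0 < w := by linarith
  obtain ⟨a, ha⟩ : ∃ a, a = (-x - x ^ 2) / w ^ 2 := ⟨_, rfl⟩
  obtain ⟨b, hb⟩ : ∃ b, b = (-y + y ^ 2) / w ^ 2 := ⟨_, rfl⟩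
  obtain ⟨r, hr⟩ : ∃ r, r = (1 + x - y) / w := ⟨_, rfl⟩
  obtain ⟨t, ht⟩ : ∃ t, t = (x + y) / w := ⟨_, rfl⟩
  obtain ⟨i, hi⟩ : ∃ i, i = 1 / w := ⟨_, rfl⟩
  have a1 : |a| ≤ 1 := by
    rw [ha, abs_div, abs_of_pos (pow_pos w0 2), div_le_one (pow_pos w0 2), abs_le, hwd]
    constructor <;> nlinarith [mul_pos hx hy]
  have b1 : |b| ≤ 1 := by
    rw [hb, abs_div, abs_of_pos (pow_pos w0 2), div_le_one (pow_pos w0 2), abs_le, hwd]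
    constructor <;> nlinarith [mul_pos hx hy]
  have r1 : |r| ≤ 1 := by
    rw [hr, abs_div, abs_of_pos w0, div_le_one w0, abs_le, hwd]
    constructor <;> linarith
  have t1 : |t| ≤ 1 := by
    rw [ht, abs_div, abs_of_pos w0, div_le_one w0, abs_le, hwd]
    constructor <;> linarith
  have i1 : |i| ≤ 1 := by
    rw [hi, abs_div, abs_of_pos w0, div_le_one w0, abs_one]
    linarith
  have ab : |a + b| ≤ 2 := (abs_add_le a b).trans (by linarith)
  have ab' : |a - b| ≤ 2 := (abs_sub a b).trans (by linarith)
  have p1 : |(a + b) * r| ≤ 2 * 1 := by rw [abs_mul]; gcongr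
  have p2 : |t * (a - b)| ≤ 1 * 2 := by rw [abs_mul]; gcongr
  have p3 : |3 * (t * r) * (a + b)| ≤ 3 * (1 * 1) * 2 := by
    rw [abs_mul, abs_mul, abs_mul, abs_of_pos (by norm_num : (0 : ℝ) < 3)]; gcongr
  have p4 : |((a + b) * r + t * (a - b) - 3 * (t * r) * (a + b)) * i| ≤ 10 * 1 := by
    rw [abs_mul]
    gcongr
    refine (abs_sub _ _).trans ?_
    have := abs_add_le ((a + b) * r) (t * (a - b))
    linarith
  refine le_of_eq_of_le ?_ (p4.trans (by norm_num))
  congr 1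
  rw [ha, hb, hr, ht, hi]
  simp only [Pi.add_apply, Pi.sub_apply, Pi.mul_apply, Pi.pow_apply]
  change _ / (w ^ 3) ^ 2 = _
  field_simp
  push_cast
  ring

lemma x_zero : xfun D 0 = 1 / (D - 2) := by
  unfold xfun; rw [lam_zero hD]; congr 1; ring
lemma y_zero : yfun D 0 = 1 / (D - 2) := by
  unfold yfun; rw [lam_zero hD]; congr 1; ring
lemma w_zero : 1 / wfun D 0 = (D - 2) / D := by
  unfold wfun; rw [x_zero hD, y_zero hD]
  have h1 : D - 2 ≠ 0 := by linarith
  have h2 : D ≠ 0 := by linarith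
  rw [show 1 + 1 / (D - 2) + 1 / (D - 2) = D / (D - 2) by field_simp; ring, one_div_div]
lemma v_zero : vfun D 0 = 2 * (D - 2) ^ 2 / D ^ 3 := by
  have h1 : D - 2 ≠ 0 := by linarith
  have h2 : D ≠ 0 := by linarith
  have : wfun D 0 = D / (D - 2) := by
    have := w_zero hD
    rw [← one_div_one_div (wfun D 0), this, one_div_div]
  unfold vfun
  rw [this, x_zero hD, y_zero hD]
  field_simp
  ring
end

/-- Strict sub-Gaussianity of the tilted variance. With `s = t d/((d-2)√n)`, this makes
`n (log λ(s) - ps)` at most `(9/10) t²/2`, so that the mgf stays integrable against the standard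
Gaussian, uniformly in `d`. For `d ≥ 5` the trivial bound `v ≤ 1/4` suffices; for `d = 3` and
`d = 4`, `x` and `y` are tied together and the claim is a one-variable polynomial inequality. -/
lemma v_le (d : ℕ) (hd : 3 ≤ d) (s : ℝ) :
    vfun d s ≤ 9 / 10 * (((d : ℝ) - 2) / d) ^ 2 := by
  have hD : (3 : ℝ) ≤ d := by exact_mod_cast hd
  have hx := x_pos hD s
  have hy := y_pos hD s
  have hw := w_gt hD s
  have hy1 := y_le hD s
  have hwd : wfun (d : ℝ) s = 1 + xfun d s + yfun d s := rfl
  unfold vfun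
  rw [div_le_iff₀ (by positivity)]
  rcases (show d = 3 ∨ d = 4 ∨ 5 ≤ d by omega) with rfl | rfl | h5
  · have hy : yfun ((3 : ℕ) : ℝ) s = 1 := by unfold yfun; norm_num
    rw [hwd, hy]
    -- with `w = x + 2` the claim reads `10 (w - 1) (w - 2) ≤ w ^ 3`
    set x := xfun ((3 : ℕ) : ℝ) s
    norm_num
    nlinarith [mul_nonneg hx.le (sq_nonneg (x - 2)), sq_nonneg (x - 2)]
  · have hA := A_pos hD s
    -- everything is expressed through `A = 3λ - 1 > 0`, with `x = 1/A` and `y = 3/(A + 4)`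
    have hyx : yfun ((4 : ℕ) : ℝ) s = 3 / ((((4 : ℕ) : ℝ) - 1) * lam (4 : ℕ) s - 1 + 4) := by
      have := B_ge hD s
      unfold yfun
      rw [div_eq_div_iff (by linarith) (by linarith)]
      push_cast
      ring
    rw [hwd, hyx]
    unfold xfun
    set A := (((4 : ℕ) : ℝ) - 1) * lam (4 : ℕ) s - 1
    have e1 : 1 / A + 3 / (A + 4) = 4 * (A + 1) / (A * (A + 4)) := by field_simp; ring
    have e2 : 1 + 1 / A - 3 / (A + 4) = (A ^ 2 + 2 * A + 4) / (A * (A + 4)) := by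
      field_simp; ring
    have e3 : 1 + 1 / A + 3 / (A + 4) = (A ^ 2 + 8 * A + 4) / (A * (A + 4)) := by
      field_simp; ring
    rw [e1, e2, e3, ← sub_nonneg]
    have : 9 / 10 * ((((4 : ℕ) : ℝ) - 2) / ((4 : ℕ) : ℝ)) ^ 2 *
        ((A ^ 2 + 8 * A + 4) / (A * (A + 4))) ^ 3 -
        4 * (A + 1) / (A * (A + 4)) * ((A ^ 2 + 2 * A + 4) / (A * (A + 4))) =
        (9 * A ^ 6 + 56 * A ^ 5 + 716 * A ^ 4 + 3456 * A ^ 3 + 2864 * A ^ 2 + 896 * A + 576) /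
          (40 * (A * (A + 4)) ^ 3) := by
      field_simp; push_cast; ring
    rw [this]
    positivity
  · have h5' : (5 : ℝ) ≤ d := by exact_mod_cast h5
    have hq : (3 / 5 : ℝ) ≤ ((d : ℝ) - 2) / d := by
      rw [div_le_div_iff₀ (by norm_num) (by linarith)]; linarith
    have hq2 : (1 / 4 : ℝ) ≤ 9 / 10 * (((d : ℝ) - 2) / d) ^ 2 := by nlinarith
    have : 0 < wfun (d : ℝ) s ^ 3 := by positivity
    refine le_trans ?_ (mul_le_mul_of_nonneg_right hq2 this.le)
    rw [hwd]
    set x := xfun (d : ℝ) s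
    set y := yfun (d : ℝ) s
    -- discarding `-2y` leaves `(w - 1)/w² ≤ 1/4`
    have h1 : (x + y) * (1 + x - y) ≤ (x + y) * (1 + x + y) := by gcongr; linarith
    nlinarith [mul_nonneg (by linarith : 0 ≤ 1 + x + y) (sq_nonneg (x + y - 1))]

lemma abs_le_of_deriv {F F' : ℝ → ℝ} {K : ℝ} (k : ℕ) (hK : 0 ≤ K) (h0 : F 0 = 0)
    (hF : ∀ s, HasDerivAt F (F' s) s) (hb : ∀ s, |F' s| ≤ K * |s| ^ k) (s : ℝ) :
    |F s| ≤ K * |s| ^ (k + 1) := by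
  have := Convex.norm_image_sub_le_of_norm_hasDerivWithin_le (f := F) (f' := F')
    (s := Set.Icc (-|s|) |s|) (x := 0) (y := s) (C := K * |s| ^ k)
    (fun u _ => (hF u).hasDerivWithinAt)
    (fun u hu => (hb u).trans (by
      have : |u| ≤ |s| := abs_le.2 hu
      gcongr))
    (convex_Icc _ _) (by simp) (abs_le.1 le_rfl)
  rw [h0, sub_zero, sub_zero] at this
  simpa [pow_succ, mul_assoc] using this

section
variable {D : ℝ} (hD : 3 ≤ D) (s : ℝ)
include hD

lemma abs_loglam_le : |log (lam D s)| ≤ |s| := by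
  have := abs_le_of_deriv (F := fun s => log (lam D s)) (F' := fun s => 1 / wfun D s)
    (K := 1) 0 zero_le_one (by simp [lam_zero hD]) (hasDerivAt_loglam hD) (fun s => by
      have := w_gt hD s
      rw [abs_of_pos (by positivity), div_le_iff₀ (by linarith)]
      simpa using this.le) s
  simpa using this

/-- Second-order Taylor estimate of `log λ` at `0`, with a cubic error uniform in `D`, by integrating
the bound on the third derivative three times. -/
lemma loglam_taylor :
    |log (lam D s) - (D - 2) / D * s - (D - 2) ^ 2 / D ^ 3 * s ^ 2| ≤ 10 * |s| ^ 3 := by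
  choose v' hv hv' using fun s => hasDerivAt_v hD s
  have b2 := abs_le_of_deriv (F := fun s => vfun D s - 2 * (D - 2) ^ 2 / D ^ 3) (F' := v')
    (K := 10) 0 (by norm_num) (by simp [v_zero hD]) (fun s => (hv s).sub_const _)
    (fun s => by simpa using hv' s)
  have b1 := abs_le_of_deriv
    (F := fun s => 1 / wfun D s - (D - 2) / D - 2 * (D - 2) ^ 2 / D ^ 3 * s)
    (K := 10) 1 (by norm_num) (by simp only [w_zero hD]; ring)
    (fun s => by
      have := ((hasDerivAt_one_div_w hD s).sub_const ((D - 2) / D)).sub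
        ((hasDerivAt_id s).const_mul (2 * (D - 2) ^ 2 / D ^ 3))
      rw [mul_one] at this
      exact this) b2
  refine abs_le_of_deriv
    (F := fun s => log (lam D s) - (D - 2) / D * s - (D - 2) ^ 2 / D ^ 3 * s ^ 2)
    (K := 10) 2 (by norm_num) (by simp [lam_zero hD])
    (fun s => ?_) b1 s
  have := ((hasDerivAt_loglam hD s).sub ((hasDerivAt_id s).const_mul ((D - 2) / D))).sub
    ((hasDerivAt_pow 2 s).const_mul ((D - 2) ^ 2 / D ^ 3))
  refine this.congr_deriv ?_
  push_cast
  ring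
end

/-- Global quadratic upper bound on the centered log-eigenvalue: the difference of the two sides is
convex by `v_le`, with a critical point of value `0` at the origin. -/
lemma loglam_le (d : ℕ) (hd : 3 ≤ d) (s : ℝ) :
    log (lam d s) - ((d : ℝ) - 2) / d * s ≤ 9 / 20 * (((d : ℝ) - 2) / d) ^ 2 * s ^ 2 := by
  have hD : (3 : ℝ) ≤ d := by exact_mod_cast hd
  set c := ((d : ℝ) - 2) / d with hc
  let h : ℝ → ℝ := fun s => 9 / 20 * c ^ 2 * s ^ 2 - (log (lam d s) - c * s)
  let h' : ℝ → ℝ := fun s => 9 / 10 * c ^ 2 * s - (1 / wfun d s - c)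
  have dh : ∀ s, HasDerivAt h (h' s) s := fun s => by
    have := ((hasDerivAt_pow 2 s).const_mul (9 / 20 * c ^ 2)).sub
      ((hasDerivAt_loglam hD s).sub ((hasDerivAt_id s).const_mul c))
    refine this.congr_deriv ?_
    simp only [h']
    push_cast
    ring
  have dh' : ∀ s, HasDerivAt h' (9 / 10 * c ^ 2 - vfun d s) s := fun s => by
    have := ((hasDerivAt_id s).const_mul (9 / 10 * c ^ 2)).sub
      ((hasDerivAt_one_div_w hD s).sub_const c)
    rw [mul_one] at this
    exact this
  have mono : Monotone h' := monotone_of_deriv_nonneg (fun s => (dh' s).differentiableAt)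
    (fun s => by rw [(dh' s).deriv]; linarith [v_le d hd s])
  have z' : h' 0 = 0 := by simp only [h', w_zero hD]; ring
  have z : h 0 = 0 := by simp [h, lam_zero hD]
  have cont : Continuous h := continuous_iff_continuousAt.2 fun s => (dh s).continuousAt
  have : 0 ≤ h s := by
    rw [← z]
    rcases le_total 0 s with hs | hs
    · exact monotoneOn_of_deriv_nonneg (convex_Ici 0) cont.continuousOn
        (fun u _ => (dh u).differentiableAt.differentiableWithinAt)
        (fun u hu => by
          rw [(dh u).deriv, ← z']
          exact mono (by simpa using interior_subset hu)) (by simp) hs hs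
    · exact antitoneOn_of_deriv_nonpos (convex_Iic 0) cont.continuousOn
        (fun u _ => (dh u).differentiableAt.differentiableWithinAt)
        (fun u hu => by
          rw [(dh u).deriv, ← z']
          exact mono (by simpa using interior_subset hu)) hs (by simp) hs
  simp only [h] at this
  linarith

/-! ### Transfer matrix and moment generating function -/

/-- `U_m = M^m 1` for the tilted matrix `M(b, c) = T(b, c) q(c)`: the total weight of the
continuations by `m` steps of a path currently at `b`. -/
def pathU (T : Bool → Bool → ℝ) (q : Bool → ℝ) : ℕ → Bool → ℝ
  | 0, _ => 1
  | m + 1, b => ∑ c, T b c * q c * pathU T q m c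

lemma sum_paths_s17 (T : Bool → Bool → ℝ) (q : Bool → ℝ) (m : ℕ) (μ : Bool → ℝ) :
    ∑ h : Fin (m + 1) → Bool,
      μ (h 0) * (∏ j : Fin m, T (h j.castSucc) (h j.succ)) * ∏ i, q (h i) =
    ∑ b, μ b * q b * pathU T q m b := by
  induction m generalizing μ with
  | zero =>
    rw [← (Equiv.funUnique (Fin 1) Bool).symm.sum_comp]
    simp [pathU]
  | succ m ih =>
    rw [← (Fin.consEquiv fun _ : Fin (m + 2) => Bool).sum_comp, Fintype.sum_prod_type]
    refine Finset.sum_congr rfl fun b _ => ?_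
    have := ih (T b)
    simp only [pathU]
    rw [← this, Finset.mul_sum]
    refine Finset.sum_congr rfl fun h _ => ?_
    simp only [Fin.consEquiv_apply]
    rw [Fin.prod_univ_succ (n := m), Fin.prod_univ_succ (n := m + 1)]
    simp only [Fin.cons_zero, Fin.cons_succ, Fin.castSucc_zero, ← Fin.succ_castSucc]
    ring

/-- The moment generating function of `V_n` as a transfer-matrix product. The colorings are
read along the path `f 1, f 2, …, f n = f 0`, which is the origin of the shift by `1` in the
reindexing. -/
lemma sum_colorings (d n : ℕ) [NeZero n] (s : ℝ) :
    ∑ f : ZMod n → Bool, piProb d n f * exp (s * vCount n f) =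
      ∑ b, mcStat d b * exp (s * if b then 1 else 0) *
        pathU (mcTrans d) (fun b => exp (s * if b then 1 else 0)) (n - 1) b := by
  obtain ⟨m, rfl⟩ : ∃ m, n = m + 1 := ⟨n - 1, by have := NeZero.pos n; omega⟩
  rw [Nat.add_sub_cancel, ← sum_paths_s17]
  let e : Fin (m + 1) ≃ ZMod (m + 1) := (ZMod.finEquiv (m + 1)).toEquiv.trans (Equiv.addRight 1)
  have he : ∀ i : Fin (m + 1), e i = ((i : ℕ) : ZMod (m + 1)) + 1 := fun i => by
    exact congrArg (fun a : ZMod (m + 1) => a + 1)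
      (ZMod.natCast_zmod_val (n := m + 1) i).symm
  refine Fintype.sum_equiv (e.symm.arrowCongr (Equiv.refl Bool)) _ _ fun f => ?_
  have hf : ∀ i, (e.symm.arrowCongr (Equiv.refl Bool)) f i = f (e i) := fun i => by
    simp [Equiv.arrowCongr]
  simp only [hf]
  rw [Fintype.prod_equiv e _ (fun i => exp (s * if f i then 1 else 0)) (fun _ => rfl),
    ← exp_sum, ← Finset.mul_sum]
  congr 1
  · unfold piProb
    congr 1
    · rw [he]; simp
    · rw [Finset.prod_Ico_eq_prod_range, Nat.add_sub_cancel, Finset.prod_range]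
      refine Finset.prod_congr rfl fun j _ => ?_
      rw [he, he]
      congr 2 <;> (simp; try ring_nf)
  · simp [vCount, Finset.sum_boole]

/-- Sandwiching the constant vector `1` between multiples of a positive eigenvector `h` sandwiches
`M^m 1` between multiples of `l^m h`. -/
lemma pathU_bounds {T : Bool → Bool → ℝ} {q h : Bool → ℝ} {l a b : ℝ}
    (hT : ∀ x y, 0 ≤ T x y) (hq : ∀ x, 0 ≤ q x) (ha : ∀ x, a * h x ≤ 1) (hb : ∀ x, 1 ≤ b * h x)
    (hl : ∀ x, ∑ y, T x y * q y * h y = l * h x) (m : ℕ) (x : Bool) :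
    a * l ^ m * h x ≤ pathU T q m x ∧ pathU T q m x ≤ b * l ^ m * h x := by
  induction m generalizing x with
  | zero => simpa [pathU] using ⟨ha x, hb x⟩
  | succ m ih =>
    simp only [pathU]
    have e : ∀ c, c * l ^ (m + 1) * h x = ∑ y, T x y * q y * (c * l ^ m * h y) := fun c => by
      have : ∑ y, T x y * q y * (c * l ^ m * h y) = c * l ^ m * ∑ y, T x y * q y * h y := by
        rw [Finset.mul_sum]; exact Finset.sum_congr rfl fun y _ => by ring
      rw [this, hl]; ring
    rw [e, e]
    exact ⟨Finset.sum_le_sum fun y _ =>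
        mul_le_mul_of_nonneg_left (ih y).1 (mul_nonneg (hT _ _) (hq _)),
      Finset.sum_le_sum fun y _ =>
        mul_le_mul_of_nonneg_left (ih y).2 (mul_nonneg (hT _ _) (hq _))⟩

lemma cubic_le_exp (t : ℝ) : 12 * |t| + 270 * |t| ^ 3 ≤ 1500000 * exp (2 / 100 * t ^ 2) := by
  have hq := Real.quadratic_le_exp_of_nonneg (x := 2 / 100 * t ^ 2) (by positivity)
  rw [← sq_abs t] at hq ⊢
  have h1 : 0 ≤ |t| := abs_nonneg t
  generalize |t| = u at *
  have h2 : 2 * u ≤ 1 + u ^ 2 := by linarith [sq_nonneg (u - 1)]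
  have h3 : 2 * u ^ 3 ≤ u ^ 2 + u ^ 4 := by linarith [sq_nonneg (u - u ^ 2)]
  have h4 : 0 ≤ u ^ 4 := by positivity
  linarith [sq_nonneg u]

/-- The moment generating function of `V_n` agrees with `λ(s)^n` up to a factor `e^{±4|s|}`. The
four factors `e^{±|s|}` come from the tilt of the first letter, from the eigenvector entering twice,
and from replacing `λ^{n-1}` by `λ^n`. -/
lemma mgf_bounds (d n : ℕ) [NeZero n] (hd : 3 ≤ d) (s : ℝ) :
    exp (-(4 * |s|)) * lam d s ^ n ≤ ∑ f : ZMod n → Bool, piProb d n f * exp (s * vCount n f) ∧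
    ∑ f : ZMod n → Bool, piProb d n f * exp (s * vCount n f) ≤ exp (4 * |s|) * lam d s ^ n := by
  have hD : (3 : ℝ) ≤ d := by exact_mod_cast hd
  rw [sum_colorings]
  obtain ⟨D, hDd⟩ : ∃ D : ℝ, D = d := ⟨_, rfl⟩
  rw [← hDd] at hD ⊢
  have hl := lam_pos hD s
  have hA := A_pos hD s
  have hB := B_ge hD s
  have heq := lam_eq hD s
  have hlog := abs_le.1 (abs_loglam_le hD s)
  have l1 : exp (-|s|) ≤ lam D s := (le_log_iff_exp_le hl).1 hlog.1
  have l2 : lam D s ≤ exp |s| := (log_le_iff_le_exp hl).1 hlog.2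
  have ep : 1 ≤ exp |s| := one_le_exp (abs_nonneg s)
  have em : exp (-|s|) ≤ 1 := exp_le_one_iff.2 (by simp)
  have mul1 : exp (-|s|) * exp |s| = 1 := by rw [← exp_add]; simp
  set l := lam D s
  set q : Bool → ℝ := fun b => exp (s * if b then 1 else 0) with hq
  -- the eigenvector, normalized by `h B = 1`; its entry at `R` is a convex combination of
  -- `1` and `1/λ`, hence lies in `[e^{-|s|}, e^{|s|}]`
  let h : Bool → ℝ := fun b => if b then ((D - 3) * l + 1) / ((D - 2) * l) else 1
  have hD2 : 0 < D - 2 := by linarith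
  have hD1 : 0 < D - 1 := by linarith
  have h1 : ∀ b, exp (-|s|) ≤ h b := by
    rintro (_ | _)
    · simp [h]
    · simp only [h, if_true]
      rw [le_div_iff₀ (by positivity)]
      have : exp (-|s|) * l ≤ 1 := by
        calc exp (-|s|) * l ≤ exp (-|s|) * exp |s| := by gcongr
          _ = 1 := mul1
      nlinarith [mul_nonneg (sub_nonneg.2 hD) (mul_nonneg hl.le (sub_nonneg.2 em))]
  have h2 : ∀ b, h b ≤ exp |s| := by
    rintro (_ | _)
    · simp [h]
    · simp only [h, if_true]
      rw [div_le_iff₀ (by positivity)]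
      have : 1 ≤ exp |s| * l := by
        calc 1 = exp |s| * exp (-|s|) := by rw [mul_comm, mul1]
          _ ≤ exp |s| * l := by gcongr
      nlinarith [mul_nonneg (sub_nonneg.2 hD) (mul_nonneg hl.le (sub_nonneg.2 ep))]
  have hT : ∀ x y, 0 ≤ mcTrans d x y := by
    rintro (_ | _) (_ | _) <;> simp only [mcTrans, ← hDd] <;>
      exact div_nonneg (by linarith) hD1.le
  have hμ : ∀ x, 0 ≤ mcStat d x := by
    rintro (_ | _) <;> simp only [mcStat, ← hDd] <;> exact div_nonneg (by linarith) (by linarith)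
  have hμ1 : ∑ x, mcStat d x = 1 := by
    simp only [Fintype.sum_bool, mcStat, ← hDd]
    field_simp
    ring
  have havg : ∀ c : ℝ, c = ∑ x, mcStat d x * c := fun c => by
    rw [← Finset.sum_mul, hμ1, one_mul]
  have heig : ∀ x, ∑ y, mcTrans d x y * q y * h y = l * h x := by
    rintro (_ | _)
    · simp only [Fintype.sum_bool, mcTrans, ← hDd, q, h]
      simp
      field_simp
      linear_combination -heq
    · simp only [Fintype.sum_bool, mcTrans, ← hDd, q, h]
      simp
      field_simp
      linear_combination (-(D - 3)) * heq
  have hq0 : ∀ x, 0 ≤ q x := fun x => (exp_pos _).le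
  have hU := pathU_bounds (T := mcTrans d) (q := q) (h := h) (l := l) (a := exp (-|s|))
    (b := exp |s|) hT hq0
    (fun x => (mul_le_mul_of_nonneg_left (h2 x) (exp_pos _).le).trans mul1.le)
    (fun x => mul1.symm.le.trans (by
      rw [mul_comm]; exact mul_le_mul_of_nonneg_left (h1 x) (exp_pos _).le)) heig (n - 1)
  have q1 : ∀ x, exp (-|s|) ≤ q x := by
    rintro (_ | _)
    · simp [q]
    · simpa [q] using neg_abs_le s
  have q2 : ∀ x, q x ≤ exp |s| := by
    rintro (_ | _)
    · simp [q]
    · simpa [q] using le_abs_self s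
  obtain ⟨m, rfl⟩ : ∃ m, n = m + 1 := ⟨n - 1, by have := NeZero.pos n; omega⟩
  rw [Nat.add_sub_cancel] at hU ⊢
  have e1 : exp (-(4 * |s|)) = exp (-|s|) * exp (-|s|) * exp (-|s|) * exp (-|s|) := by
    rw [← exp_add, ← exp_add, ← exp_add]; ring_nf
  have e2 : exp (4 * |s|) = exp |s| * exp |s| * exp |s| * exp |s| := by
    rw [← exp_add, ← exp_add, ← exp_add]; ring_nf
  have lower : exp (-(4 * |s|)) * l ^ (m + 1) ≤ exp (-|s|) * (exp (-|s|) * l ^ m * exp (-|s|)) := by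
    have : exp (-|s|) * l ≤ 1 := by
      calc exp (-|s|) * l ≤ exp (-|s|) * exp |s| := by gcongr
        _ = 1 := mul1
    calc _ = exp (-|s|) * (exp (-|s|) * l ^ m * exp (-|s|)) * (exp (-|s|) * l) := by
          rw [e1, pow_succ]; ring
      _ ≤ _ := mul_le_of_le_one_right (by positivity) this
  have upper : exp |s| * (exp |s| * l ^ m * exp |s|) ≤ exp (4 * |s|) * l ^ (m + 1) := by
    have : 1 ≤ exp |s| * l := by
      calc 1 = exp |s| * exp (-|s|) := by rw [mul_comm, mul1]
        _ ≤ exp |s| * l := by gcongr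
    calc _ ≤ exp |s| * (exp |s| * l ^ m * exp |s|) * (exp |s| * l) :=
          le_mul_of_one_le_right (by positivity) this
      _ = _ := by rw [e2, pow_succ]; ring
  constructor
  · refine lower.trans ?_
    rw [havg (exp (-|s|) * _)]
    refine Finset.sum_le_sum fun x _ => ?_
    rw [mul_assoc (mcStat d x)]
    refine mul_le_mul_of_nonneg_left ?_ (hμ x)
    refine mul_le_mul (q1 x) (le_trans ?_ (hU x).1) (by positivity) (hq0 x)
    exact mul_le_mul_of_nonneg_left (h1 x) (by positivity)
  · refine le_trans ?_ upper
    rw [havg (exp |s| * _)]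
    refine Finset.sum_le_sum fun x _ => ?_
    rw [mul_assoc (mcStat d x)]
    refine mul_le_mul_of_nonneg_left ?_ (hμ x)
    have u2 := (hU x).2.trans (mul_le_mul_of_nonneg_left (h2 x) (by positivity))
    have u0 : 0 ≤ pathU (mcTrans d) q m x := by
      refine le_trans ?_ (hU x).1
      have : 0 < h x := (exp_pos _).trans_le (h1 x)
      positivity
    exact mul_le_mul (q2 x) u2 u0 (exp_pos _).le

/-! ### Comparison with the Gaussian -/

lemma abs_exp_sub_exp_le {a b c : ℝ} (ha : a ≤ c) (hb : b ≤ c) :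
    |exp a - exp b| ≤ |a - b| * exp c := by
  wlog hab : b ≤ a generalizing a b
  · rw [abs_sub_comm, abs_sub_comm a]
    exact this hb ha (le_of_not_ge hab)
  rw [abs_of_nonneg (sub_nonneg.2 (exp_le_exp.2 hab)), abs_of_nonneg (sub_nonneg.2 hab)]
  have h1 := add_one_le_exp (b - a)
  have h2 : exp b = exp a * exp (b - a) := by rw [← exp_add]; ring_nf
  calc exp a - exp b = exp a * (1 - exp (b - a)) := by rw [h2]; ring
    _ ≤ exp a * (a - b) := mul_le_mul_of_nonneg_left (by linarith) (exp_pos a).le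
    _ ≤ exp c * (a - b) := by
      have := sub_nonneg.2 hab
      gcongr
    _ = _ := mul_comm _ _

/-- The tilt `s = t d/((d-2)√n)`, for which `s (V_n - np) = √(2/d) Z_n t` with `p = (d-2)/d`. -/
noncomputable def scaleS (d n : ℕ) (t : ℝ) : ℝ := t * ((d : ℝ) / ((d : ℝ) - 2) / √n)

/-- `E_π[exp(s (V_n - np))]`, where `s = scaleS d n t` and `p = (d-2)/d`. -/
noncomputable def centeredMgf (d n : ℕ) [NeZero n] (t : ℝ) : ℝ :=
  ∑ f : ZMod n → Bool,
    piProb d n f * exp (scaleS d n t * (vCount n f - n * ((d : ℝ) - 2) / d))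

/-- Pointwise comparison of the rescaled mgf with that of the Gaussian limit. Both logarithms are at
most `(47/100) t² + 1800` and differ by at most `(12|t| + 270|t|³)/√n`. -/
lemma centeredMgf_sub_le (d n : ℕ) [NeZero n] (hd : 3 ≤ d) (t : ℝ) :
    |centeredMgf d n t - exp (t ^ 2 / d)| ≤
      1500000 * exp 1800 / √n * exp (49 / 100 * t ^ 2) := by
  have hD : (3 : ℝ) ≤ d := by exact_mod_cast hd
  have hD2 : 0 < (d : ℝ) - 2 := by linarith
  have hn1 : (1 : ℝ) ≤ n := by exact_mod_cast NeZero.pos n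
  have hr : 1 ≤ √(n : ℝ) := one_le_sqrt.2 hn1
  have hr2 : √(n : ℝ) ^ 2 = n := sq_sqrt (by linarith)
  obtain ⟨r, hrr⟩ : ∃ r, r = √(n : ℝ) := ⟨_, rfl⟩
  rw [← hrr] at hr hr2 ⊢
  have r0 : 0 < r := by linarith
  set s := scaleS d n t with hs
  have hs' : s = t * ((d : ℝ) / ((d : ℝ) - 2) / r) := by rw [hrr]; rfl
  have hsabs : |s| ≤ 3 * |t| / r := by
    rw [hs', abs_mul, abs_of_pos (by positivity : 0 < (d : ℝ) / ((d : ℝ) - 2) / r)]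
    have : (d : ℝ) / ((d : ℝ) - 2) ≤ 3 := by rw [div_le_iff₀ hD2]; linarith
    calc |t| * ((d : ℝ) / ((d : ℝ) - 2) / r) ≤ |t| * (3 / r) := by gcongr
      _ = _ := by ring
  set p := ((d : ℝ) - 2) / d with hp
  set G := log (lam d s) - p * s with hG
  have hl := lam_pos hD s
  obtain ⟨m1, m2⟩ := mgf_bounds d n hd s
  have hm : centeredMgf d n t =
      (∑ f : ZMod n → Bool, piProb d n f * exp (s * vCount n f)) * exp (-(n * p * s)) := by
    unfold centeredMgf
    rw [Finset.sum_mul]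
    refine Finset.sum_congr rfl fun f _ => ?_
    rw [mul_assoc, ← exp_add, ← hs, hp]
    ring_nf
  have hlam : lam d s ^ n * exp (-(n * p * s)) = exp (n * G) := by
    rw [hG, mul_sub, sub_eq_add_neg, exp_add, ← log_pow, exp_log (pow_pos hl n), mul_assoc]
  have c1 : exp (-(4 * |s|) + n * G) ≤ centeredMgf d n t := by
    rw [hm, exp_add, ← hlam, ← mul_assoc]
    gcongr
  have c2 : centeredMgf d n t ≤ exp (4 * |s| + n * G) := by
    rw [hm, exp_add, ← hlam, ← mul_assoc]
    gcongr
  have cpos : 0 < centeredMgf d n t := (exp_pos _).trans_le c1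
  set L := log (centeredMgf d n t) with hL
  have hexpL : exp L = centeredMgf d n t := exp_log cpos
  rw [← hexpL, exp_le_exp] at c1 c2
  rw [← hexpL]
  have sq1 : n * (p ^ 2 * s ^ 2) = t ^ 2 := by
    rw [← hr2, hs', hp]; field_simp
  have hGle : n * G ≤ 9 / 20 * t ^ 2 := by
    have := mul_le_mul_of_nonneg_left (loglam_le d hd s) (by linarith : (0 : ℝ) ≤ n)
    calc n * G ≤ n * (9 / 20 * p ^ 2 * s ^ 2) := this
      _ = 9 / 20 * (n * (p ^ 2 * s ^ 2)) := by ring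
      _ = _ := by rw [sq1]
  have hGt : |n * G - t ^ 2 / d| ≤ 270 * |t| ^ 3 / r := by
    have e : n * G - t ^ 2 / d =
        n * (log (lam d s) - p * s - ((d : ℝ) - 2) ^ 2 / d ^ 3 * s ^ 2) := by
      rw [← sq1, hp, hG, hp]; field_simp
    rw [e, abs_mul, abs_of_pos (by linarith : (0 : ℝ) < n)]
    calc (n : ℝ) * _ ≤ n * (10 * |s| ^ 3) := by gcongr; exact loglam_taylor hD s
      _ ≤ n * (10 * (3 * |t| / r) ^ 3) := by gcongr
      _ = _ := by rw [← hr2]; field_simp; ring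
  have h4 : 4 * |s| ≤ 12 * |t| / r := by
    calc 4 * |s| ≤ 4 * (3 * |t| / r) := by gcongr
      _ = _ := by ring
  have hdiff : |L - t ^ 2 / d| ≤ (12 * |t| + 270 * |t| ^ 3) / r := by
    have := abs_le.1 hGt
    rw [add_div, abs_le]
    constructor <;> linarith
  have t0 := abs_nonneg t
  have hLle : L ≤ 47 / 100 * t ^ 2 + 1800 := by
    have : 12 * |t| / r ≤ 12 * |t| := div_le_self (by positivity) hr
    -- `12 u ≤ (2/100) u² + 1800`, with equality at `u = 300`
    nlinarith [sq_nonneg (|t| - 300), sq_abs t]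
  have htle : t ^ 2 / d ≤ 47 / 100 * t ^ 2 + 1800 := by
    have : t ^ 2 / d ≤ t ^ 2 / 3 := by gcongr
    nlinarith [sq_nonneg t]
  refine (abs_exp_sub_exp_le hLle htle).trans ?_
  have hpoly := cubic_le_exp t
  calc |L - t ^ 2 / d| * exp (47 / 100 * t ^ 2 + 1800)
      ≤ 1500000 * exp (2 / 100 * t ^ 2) / r * exp (47 / 100 * t ^ 2 + 1800) := by
        gcongr; exact hdiff.trans (by gcongr)
    _ = 1500000 * exp 1800 / r * (exp (2 / 100 * t ^ 2) * exp (47 / 100 * t ^ 2)) := by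
        rw [exp_add]; ring
    _ = _ := by rw [← exp_add]; ring_nf

open MeasureTheory in
/-- The unnormalized Gaussian mgf, by completing the square. -/
lemma gauss_linear (c : ℝ) :
    Integrable (fun t : ℝ => exp (-(1 / 2) * t ^ 2) * exp (c * t)) ∧
    ∫ t : ℝ, exp (-(1 / 2) * t ^ 2) * exp (c * t) = √(2 * π) * exp (c ^ 2 / 2) := by
  have e : (fun t : ℝ => exp (-(1 / 2) * t ^ 2) * exp (c * t)) =
      fun t => exp (c ^ 2 / 2) * exp (-(1 / 2) * (t - c) ^ 2) := by
    funext t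
    rw [← exp_add, ← exp_add]; ring_nf
  rw [e]
  refine ⟨((integrable_exp_neg_mul_sq (by norm_num : (0 : ℝ) < 1 / 2)).comp_sub_right c).const_mul _,
    ?_⟩
  rw [integral_const_mul, integral_sub_right_eq_self (fun t => exp (-(1 / 2) * t ^ 2)) c,
    integral_gaussian, mul_comm]
  congr 2
  ring

/-- **Lemma 4.10 (normal comparison).**  For every `1 < α < 8/√2` there is `M_α` such
that for all `n ≥ 2` and `3 ≤ d ≤ √n`,
`|E_π[exp(Z_n²/d)] − √(d/(d−2))| ≤ M_α d^{(3/2)(1+1/α)}/√n`. -/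
theorem pi_gaussian_comparison (α : ℝ) (hα1 : 1 < α) (hα2 : α < 8 / Real.sqrt 2) :
    ∃ M : ℝ, ∀ n d : ℕ, ∀ _ : NeZero n, 2 ≤ n → 3 ≤ d → (d : ℝ) ≤ Real.sqrt n →
      |(∑ f : ZMod n → Bool, piProb d n f * Real.exp (zStat d n f ^ 2 / d)) -
          Real.sqrt ((d : ℝ) / ((d : ℝ) - 2))| ≤
        M * (d : ℝ) ^ ((3 / 2 : ℝ) * (1 + 1 / α)) / Real.sqrt n := by
  refine ⟨1500000 * exp 1800 * √(π / (1 / 100)), fun n d _ hn hd _ => ?_⟩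
  have hD : (3 : ℝ) ≤ d := by exact_mod_cast hd
  have hD2 : 0 < (d : ℝ) - 2 := by linarith
  have hn0 : (0 : ℝ) < n := by exact_mod_cast NeZero.pos n
  have hr : 0 < √(n : ℝ) := sqrt_pos.2 hn0
  have h2π : 1 ≤ √(2 * π) := one_le_sqrt.2 (by linarith [pi_gt_three])
  have hz : ∀ (f : ZMod n → Bool) (t : ℝ),
      scaleS d n t * (vCount n f - n * ((d : ℝ) - 2) / d) = √(2 / d) * zStat d n f * t := by
    intro f t
    have : √(2 / (d : ℝ)) * √((d : ℝ) ^ 3 / (2 * n * ((d : ℝ) - 2) ^ 2)) =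
        (d : ℝ) / ((d : ℝ) - 2) / √n := by
      rw [← sqrt_mul (by positivity),
        show 2 / (d : ℝ) * ((d : ℝ) ^ 3 / (2 * n * ((d : ℝ) - 2) ^ 2)) =
          ((d : ℝ) / ((d : ℝ) - 2)) ^ 2 / n by field_simp,
        sqrt_div (by positivity), sqrt_sq (by positivity)]
    unfold zStat scaleS
    rw [← this]
    ring
  have hm : ∀ t, exp (-(1 / 2) * t ^ 2) * centeredMgf d n t = ∑ f : ZMod n → Bool,
      piProb d n f * (exp (-(1 / 2) * t ^ 2) * exp (√(2 / d) * zStat d n f * t)) := by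
    intro t
    unfold centeredMgf
    rw [Finset.mul_sum]
    refine Finset.sum_congr rfl fun f _ => ?_
    rw [hz]
    ring
  have hmi : MeasureTheory.Integrable (fun t => exp (-(1 / 2) * t ^ 2) * centeredMgf d n t) := by
    simp only [hm]
    exact MeasureTheory.integrable_finsetSum _ fun f _ => (gauss_linear _).1.const_mul _
  have I1 : ∫ t, exp (-(1 / 2) * t ^ 2) * centeredMgf d n t =
      √(2 * π) * ∑ f : ZMod n → Bool, piProb d n f * exp (zStat d n f ^ 2 / d) := by
    simp only [hm]
    rw [MeasureTheory.integral_finsetSum _ fun f _ => (gauss_linear _).1.const_mul _,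
      Finset.mul_sum]
    refine Finset.sum_congr rfl fun f _ => ?_
    rw [MeasureTheory.integral_const_mul, (gauss_linear _).2, mul_pow, sq_sqrt (by positivity)]
    ring_nf
  have e2 : (fun t : ℝ => exp (-(1 / 2) * t ^ 2) * exp (t ^ 2 / d)) =
      fun t => exp (-(1 / 2 - 1 / d) * t ^ 2) := by
    funext t
    rw [← exp_add]; ring_nf
  have hb : (0 : ℝ) < 1 / 2 - 1 / d := by
    rw [div_sub_div _ _ (by norm_num) (by linarith)]
    apply div_pos <;> linarith
  have hgi : MeasureTheory.Integrable
      (fun t : ℝ => exp (-(1 / 2) * t ^ 2) * exp (t ^ 2 / d)) := by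
    rw [e2]; exact integrable_exp_neg_mul_sq hb
  have I2 : ∫ t : ℝ, exp (-(1 / 2) * t ^ 2) * exp (t ^ 2 / d) =
      √(2 * π) * √((d : ℝ) / ((d : ℝ) - 2)) := by
    rw [e2, integral_gaussian, ← sqrt_mul (by positivity)]
    congr 1
    field_simp
  set S := ∑ f : ZMod n → Bool, piProb d n f * exp (zStat d n f ^ 2 / d)
  have e3 : √(2 * π) * (S - √((d : ℝ) / ((d : ℝ) - 2))) =
      ∫ t : ℝ, exp (-(1 / 2) * t ^ 2) * (centeredMgf d n t - exp (t ^ 2 / d)) := by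
    simp only [mul_sub]
    rw [MeasureTheory.integral_sub hmi hgi, I1, I2]
  have bound : |∫ t : ℝ, exp (-(1 / 2) * t ^ 2) * (centeredMgf d n t - exp (t ^ 2 / d))| ≤
      1500000 * exp 1800 / √n * √(π / (1 / 100)) := by
    rw [← integral_gaussian, ← MeasureTheory.integral_const_mul, ← Real.norm_eq_abs]
    refine MeasureTheory.norm_integral_le_of_norm_le
      ((integrable_exp_neg_mul_sq (by norm_num)).const_mul _)
      (Filter.Eventually.of_forall fun t => ?_)
    rw [Real.norm_eq_abs, abs_mul, abs_of_pos (exp_pos _)]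
    calc _ ≤ exp (-(1 / 2) * t ^ 2) * (1500000 * exp 1800 / √n * exp (49 / 100 * t ^ 2)) := by
          gcongr; exact centeredMgf_sub_le d n hd t
      _ = 1500000 * exp 1800 / √n * (exp (-(1 / 2) * t ^ 2) * exp (49 / 100 * t ^ 2)) := by ring
      _ = _ := by rw [← exp_add]; ring_nf
  rw [← e3, abs_mul, abs_of_pos (by linarith)] at bound
  have hpow : 1 ≤ (d : ℝ) ^ ((3 / 2 : ℝ) * (1 + 1 / α)) :=
    one_le_rpow (by linarith) (by positivity)
  calc |S - √((d : ℝ) / ((d : ℝ) - 2))|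
      ≤ √(2 * π) * |S - √((d : ℝ) / ((d : ℝ) - 2))| :=
        le_mul_of_one_le_left (abs_nonneg _) h2π
    _ ≤ 1500000 * exp 1800 / √n * √(π / (1 / 100)) := bound
    _ = 1500000 * exp 1800 * √(π / (1 / 100)) * 1 / √n := by ring
    _ ≤ _ := by gcongr
end
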